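/- Legendre transform formula for solutions of the degenerate special Lagrangian equation: Let D ⊂ ℝⁿ be a bounded strictly convex domain and c ∈ [nπ/2, (n+1)π/2). Let g be a continuous function on ∂([0,1] × D) that is C² there, with g(0, ·) ∈ F_{c−π/2}(D) and g(1, ·) ∈ F_{c−π/2}(D). Suppose u ∈ C⁰([0,1] × D̄) satisfies: u ∈ ℱ_c((0,1) × D), −u ∈ ℱ_{−c}((0,1) × D), and u = g on ∂([0,1] × D) (i.e. u is a continuous weak solution of the Dirichlet problem for the degenerate special Lagrangian equation with boundary data g). Then for every (t, x) ∈ [0,1] × D: u(t, x) = sup_{τ ∈ ℝ} [ h_τ(x) + τ t ], where for each τ ∈ ℝ, h_τ := P_{c−π/2}( min{ g(0, ·), g(1, ·) − τ } ; y ↦ inf_{r ∈ [0,1]} ( g(r, y) − rτ ) ), the envelope P_{c−π/2}(v; f) being defined as P_{c−π/2}(v; f) := sup{ w ∈ F_{c−π/2}(D) : w ≤ v on D and limsup_{ξ→y} w(ξ) ≤ f(y) for all y ∈ ∂D }. -/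

import Mathlib

open Real Filter Matrix

noncomputable section

/-- The Hessian matrix of a function `v : ℝ^m → ℝ` at `x`. -/
def hessianMatrix {m : ℕ} (v : (Fin m → ℝ) → ℝ) (x : Fin m → ℝ) :
    Matrix (Fin m) (Fin m) ℝ :=
  Matrix.of fun i j => iteratedFDeriv ℝ 2 v x ![Pi.single i 1, Pi.single j 1]

/-- The lifted Lagrangian angle θ̃(A) = ∑ arctan λ_j(A) of a real symmetric matrix. -/
def liftedAngle {m : ℕ} (A : Matrix (Fin m) (Fin m) ℝ) : ℝ :=
  if h : A.IsHermitian then ∑ j, Real.arctan (h.eigenvalues j) else 0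

/-- The Harvey–Lawson branches `F_c` of the special Lagrangian subequation. -/
def Fc (m : ℕ) (c : ℝ) : Set (Matrix (Fin m) (Fin m) ℝ) :=
  {A | A.IsSymm ∧ c ≤ liftedAngle A}

/-- `I_n = diag(0,1,…,1)` as a complex `(n+1)×(n+1)` matrix. -/
def Inmat (n : ℕ) : Matrix (Fin (n+1)) (Fin (n+1)) ℂ :=
  Matrix.diagonal fun i => if i = 0 then 0 else 1

/-- The complex matrix `I_n + i A`. -/
def cmat {n : ℕ} (A : Matrix (Fin (n+1)) (Fin (n+1)) ℝ) :
    Matrix (Fin (n+1)) (Fin (n+1)) ℂ :=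
  Inmat n + Complex.I • A.map (fun a => (a : ℂ))

open Classical in
/-- The lifted space-time Lagrangian angle Θ̃, summing `Complex.arg` (with values in
`(-π, π]`) over the roots (with multiplicity) of the characteristic polynomial of
`I_n + i A`, shifted by `π/2` over the singular set `S = {det (I_n + iA) = 0}` where only
the nonzero roots are counted. -/
def spaceTimeAngle {n : ℕ} (A : Matrix (Fin (n+1)) (Fin (n+1)) ℝ) : ℝ :=
  if (cmat A).det = 0 then
    π / 2 + ((((cmat A).charpoly.roots).filter (fun z => z ≠ 0)).map Complex.arg).sum
  else (((cmat A).charpoly.roots).map Complex.arg).sum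

/-- The degenerate special Lagrangian subequation `ℱ_c ⊂ Sym(ℝ^{n+1})`. -/
def calF (n : ℕ) (c : ℝ) : Set (Matrix (Fin (n+1)) (Fin (n+1)) ℝ) :=
  {A | A.IsSymm ∧ c ≤ spaceTimeAngle A}

/-- Interior of a set of symmetric matrices, relative to the symmetric matrices. -/
def symInterior {m : ℕ} (F : Set (Matrix (Fin m) (Fin m) ℝ)) :
    Set (Matrix (Fin m) (Fin m) ℝ) :=
  {A | A.IsSymm ∧ ∀ᶠ B in nhds A, B.IsSymm → B ∈ F}

/-- The dual subequation `F̃ = (−Int F)ᶜ` (within the symmetric matrices). -/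
def dualSub {m : ℕ} (F : Set (Matrix (Fin m) (Fin m) ℝ)) :
    Set (Matrix (Fin m) (Fin m) ℝ) :=
  {A | A.IsSymm ∧ -A ∉ symInterior F}

/-- An `EReal`-valued (i.e. `[−∞,∞)`-valued) function is subaffine on `U` if, for every
affine function `a` and compact `K ⊆ U`, `u ≤ a` on `∂K` implies `u ≤ a` on `K`. -/
def IsSubaffine {m : ℕ} (U : Set (Fin m → ℝ)) (u : (Fin m → ℝ) → EReal) : Prop :=
  ∀ (a : (Fin m → ℝ) →ᵃ[ℝ] ℝ) (K : Set (Fin m → ℝ)), IsCompact K → K ⊆ U →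
    (∀ x ∈ frontier K, u x ≤ (a x : EReal)) → ∀ x ∈ K, u x ≤ (a x : EReal)

/-- `u` is of type `F` on `U` (i.e. `u ∈ F(U)`): `u` is `[−∞,∞)`-valued, upper
semicontinuous on `U`, and `u + v` is subaffine on `U` for every `C²` function `v`
whose Hessian lies in the dual subequation `F̃` at every point of `U`. -/
def IsTypeF {m : ℕ} (F : Set (Matrix (Fin m) (Fin m) ℝ)) (U : Set (Fin m → ℝ))
    (u : (Fin m → ℝ) → EReal) : Prop :=
  (∀ x ∈ U, u x ≠ ⊤) ∧ UpperSemicontinuousOn u U ∧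
    ∀ v : (Fin m → ℝ) → ℝ, ContDiffOn ℝ 2 v U →
      (∀ x ∈ U, hessianMatrix v x ∈ dualSub F) →
      IsSubaffine U (fun x => u x + ((v x : ℝ) : EReal))

/-- The lower-right `n×n` block `A⁺` of an `(n+1)×(n+1)` matrix. -/
def Aplus {n : ℕ} (A : Matrix (Fin (n+1)) (Fin (n+1)) ℝ) : Matrix (Fin n) (Fin n) ℝ :=
  Matrix.of fun i j => A i.succ j.succ

end

/-!
A solution `u` is convex in `t`, because matrices in `ℱ_c` are nonnegative in the time direction
when `c ≥ nπ/2`; hence `u(·, x)` is the double Legendre transform of itself, and `u` is the supremum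
of `k_τ(x) + τ t` over the partial Legendre transforms `k_τ(x) = min_s (u(s, x) - τ s)`. By a
minimum principle `k_τ` is of type `F_{c - π/2}`: a Schur complement loses at most `π/2` of angle.
So `k_τ` competes in the envelope `h_τ`, which gives `u ≤ sup_τ (h_τ + τ t)`.

Conversely, every competitor `w` for `h_τ` satisfies `w(x) + τ t ≤ u`. It is convex, hence
continuous, and its mollifications are again of type `F_{c - π/2}`, since `F_{c - π/2}` is an
intersection of half-spaces. For smooth `w` the function `w + τ t + κ |(t, x)|²` has space-time
angle greater than `c` and cannot touch the supersolution `u` from below in the interior; on the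
boundary the inequality is part of the definition of a competitor.
-/

/-! ### The Lagrangian angle -/

section ConcaveMinorant

/-- The largest concave minorant of `arctan` that agrees with it on `[0, ∞)`; it turns the
Lagrangian angle into a concave function of the eigenvalues. -/
noncomputable def concaveArctan (x : ℝ) : ℝ := min (arctan x) x

/-- The derivative of `concaveArctan`. -/
noncomputable def concaveArctanDeriv (x : ℝ) : ℝ := 1 / (1 + max x 0 ^ 2)

lemma concaveArctanDeriv_pos (x : ℝ) : 0 < concaveArctanDeriv x := by
  unfold concaveArctanDeriv; positivity

lemma concaveArctan_le_arctan (x : ℝ) : concaveArctan x ≤ arctan x := min_le_left _ _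

lemma concaveArctan_of_nonneg {x : ℝ} (hx : 0 ≤ x) : concaveArctan x = arctan x := by
  refine min_eq_left ?_
  simpa only [tan_arctan] using le_tan (arctan_nonneg.2 hx) (arctan_lt_pi_div_two x)

lemma concaveOn_arctan_Ici : ConcaveOn ℝ (Set.Ici 0) arctan := by
  refine AntitoneOn.concaveOn_of_deriv (convex_Ici 0) continuous_arctan.continuousOn
    differentiable_arctan.differentiableOn fun x hx y _ hxy => ?_
  rw [interior_Ici] at hx
  simp only [Real.deriv_arctan]
  have hx0 : 0 ≤ x := (Set.mem_Ioi.1 hx).le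
  gcongr

lemma arctan_le_tangent {x y : ℝ} (hx : 0 ≤ x) (hy : 0 ≤ y) :
    arctan y ≤ arctan x + 1 / (1 + x ^ 2) * (y - x) := by
  rcases lt_trichotomy x y with hxy | rfl | hxy
  · have h := concaveOn_arctan_Ici.slope_le_of_hasDerivAt hx hy hxy (hasDerivAt_arctan x)
    rw [slope_def_field, div_le_iff₀ (by linarith)] at h
    linarith
  · simp
  · have h := concaveOn_arctan_Ici.le_slope_of_hasDerivAt hy hx hxy (hasDerivAt_arctan x)
    rw [slope_def_field, le_div_iff₀ (by linarith)] at h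
    linarith

lemma concaveArctan_le_tangent (x y : ℝ) :
    concaveArctan y ≤ concaveArctan x + concaveArctanDeriv x * (y - x) := by
  rcases le_total 0 x with hx | hx
  · rw [concaveArctan_of_nonneg hx, concaveArctanDeriv, max_eq_left hx]
    rcases le_total 0 y with hy | hy
    · exact (concaveArctan_le_arctan y).trans (arctan_le_tangent hx hy)
    · have h0 := arctan_le_tangent hx le_rfl
      have hslope : 1 / (1 + x ^ 2) ≤ 1 := (div_le_one (by positivity)).2 (by nlinarith)
      rw [arctan_zero] at h0
      have hcap : concaveArctan y ≤ y := min_le_right _ _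
      nlinarith
  · have h : concaveArctan x = x := by
      have h' := concaveArctan_of_nonneg (neg_nonneg.2 hx)
      rw [concaveArctan, arctan_neg, min_eq_left_iff] at h'
      exact min_eq_right (by linarith)
    rw [h, concaveArctanDeriv, max_eq_right hx]
    have := min_le_right (arctan y) y
    simp only [concaveArctan]
    linarith

end ConcaveMinorant

section SpectralTraceInequality

variable {ι : Type*} [Fintype ι]

lemma sum_le_sum_tangent_of_doublyStochastic {f f' : ℝ → ℝ}
    (hf : ∀ x y, f y ≤ f x + f' x * (y - x)) {w : ι → ι → ℝ} (hw : ∀ k i, 0 ≤ w k i)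
    (hrow : ∀ k, ∑ i, w k i = 1) (hcol : ∀ i, ∑ k, w k i = 1) (a p : ι → ℝ) :
    ∑ k, f (a k) ≤ ∑ i, f (p i) + (∑ i, f' (p i) * ∑ k, w k i * a k - ∑ i, f' (p i) * p i) :=
  calc ∑ k, f (a k) = ∑ k, ∑ i, w k i * f (a k) := by
        simp only [← Finset.sum_mul, hrow, one_mul]
    _ ≤ ∑ k, ∑ i, w k i * (f (p i) + f' (p i) * (a k - p i)) := by
        gcongr with k _ i _
        exacts [hw k i, hf (p i) (a k)]
    _ = ∑ i, ∑ k, ((f (p i) - f' (p i) * p i) * w k i + f' (p i) * (w k i * a k)) := by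
        rw [Finset.sum_comm]
        exact Finset.sum_congr rfl fun i _ => Finset.sum_congr rfl fun k _ => by ring
    _ = ∑ i, f (p i) + (∑ i, f' (p i) * ∑ k, w k i * a k - ∑ i, f' (p i) * p i) := by
        simp only [Finset.sum_add_distrib, ← Finset.mul_sum, hcol, mul_one,
          Finset.sum_sub_distrib]
        ring

variable [DecidableEq ι]

lemma eigenvectorUnitary_mul_transpose {A : Matrix ι ι ℝ} (hA : A.IsHermitian) :
    (hA.eigenvectorUnitary : Matrix ι ι ℝ) * (hA.eigenvectorUnitary : Matrix ι ι ℝ)ᵀ = 1 := by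
  rw [← conjTranspose_eq_transpose_of_trivial]
  exact mem_unitaryGroup_iff.1 hA.eigenvectorUnitary.2

lemma transpose_mul_eigenvectorUnitary {A : Matrix ι ι ℝ} (hA : A.IsHermitian) :
    (hA.eigenvectorUnitary : Matrix ι ι ℝ)ᵀ * (hA.eigenvectorUnitary : Matrix ι ι ℝ) = 1 := by
  rw [← conjTranspose_eq_transpose_of_trivial]
  exact mem_unitaryGroup_iff'.1 hA.eigenvectorUnitary.2

lemma hermitian_cfc_eq_mul {A : Matrix ι ι ℝ} (hA : A.IsHermitian) (f : ℝ → ℝ) :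
    hA.cfc f = (hA.eigenvectorUnitary : Matrix ι ι ℝ) *
      diagonal (fun i => f (hA.eigenvalues i)) * (hA.eigenvectorUnitary : Matrix ι ι ℝ)ᵀ := by
  rw [IsHermitian.cfc, Unitary.conjStarAlgAut_apply, star_eq_conjTranspose,
    conjTranspose_eq_transpose_of_trivial]
  rfl

lemma eq_eigenvectorUnitary_mul {A : Matrix ι ι ℝ} (hA : A.IsHermitian) :
    A = (hA.eigenvectorUnitary : Matrix ι ι ℝ) * diagonal hA.eigenvalues *
      (hA.eigenvectorUnitary : Matrix ι ι ℝ)ᵀ := by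
  conv_lhs => rw [hA.spectral_theorem, Unitary.conjStarAlgAut_apply, star_eq_conjTranspose,
    conjTranspose_eq_transpose_of_trivial]
  rfl

lemma posSemidef_cfc {A : Matrix ι ι ℝ} (hA : A.IsHermitian) {f : ℝ → ℝ} (hf : ∀ x, 0 ≤ f x) :
    (hA.cfc f).PosSemidef := by
  rw [hermitian_cfc_eq_mul, ← conjTranspose_eq_transpose_of_trivial]
  exact (PosSemidef.diagonal fun i => hf (hA.eigenvalues i)).mul_mul_conjTranspose_same _

lemma trace_cfc {A : Matrix ι ι ℝ} (hA : A.IsHermitian) (f : ℝ → ℝ) :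
    (hA.cfc f).trace = ∑ i, f (hA.eigenvalues i) := by
  rw [hermitian_cfc_eq_mul, trace_mul_comm, ← Matrix.mul_assoc, transpose_mul_eigenvectorUnitary,
    Matrix.one_mul, trace_diagonal]

lemma trace_mul_diagonal_mul_mul {R : Type*} [CommRing R] (U V : Matrix ι ι R) (d a : ι → R) :
    (U * diagonal d * Uᵀ * (V * diagonal a * Vᵀ)).trace =
      ∑ i, d i * ∑ k, (Vᵀ * U) k i ^ 2 * a k := by
  have hcycle : (U * diagonal d * Uᵀ * (V * diagonal a * Vᵀ)).trace =
      (diagonal d * ((Vᵀ * U)ᵀ * (diagonal a * (Vᵀ * U)))).trace := by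
    rw [transpose_mul, transpose_transpose, Matrix.mul_assoc U, Matrix.mul_assoc, trace_mul_comm]
    simp only [Matrix.mul_assoc]
  rw [hcycle, trace]
  refine Finset.sum_congr rfl fun i _ => ?_
  rw [diag_apply, diagonal_mul, mul_apply]
  congr 1
  refine Finset.sum_congr rfl fun k _ => ?_
  rw [transpose_apply, diagonal_mul]
  ring

lemma sum_sq_row_eq_one {O : Matrix ι ι ℝ} (hO : O * Oᵀ = 1) (k : ι) : ∑ i, O k i ^ 2 = 1 := by
  simpa only [mul_apply, transpose_apply, one_apply_eq, sq] using congrFun (congrFun hO k) k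

lemma sum_sq_col_eq_one {O : Matrix ι ι ℝ} (hO : Oᵀ * O = 1) (i : ι) : ∑ k, O k i ^ 2 = 1 := by
  simpa only [mul_apply, transpose_apply, one_apply_eq, sq] using congrFun (congrFun hO i) i

lemma trace_cfc_mul_self {A : Matrix ι ι ℝ} (hA : A.IsHermitian) (f : ℝ → ℝ) :
    (hA.cfc f * A).trace = ∑ i, f (hA.eigenvalues i) * hA.eigenvalues i := by
  set U := (hA.eigenvectorUnitary : Matrix ι ι ℝ)
  have hUA : A = U * diagonal hA.eigenvalues * Uᵀ := eq_eigenvectorUnitary_mul hA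
  calc (hA.cfc f * A).trace
      = (U * diagonal (fun i => f (hA.eigenvalues i)) * Uᵀ *
          (U * diagonal hA.eigenvalues * Uᵀ)).trace := by rw [← hUA, hermitian_cfc_eq_mul]
    _ = ∑ i, f (hA.eigenvalues i) * hA.eigenvalues i := by
        rw [trace_mul_diagonal_mul_mul, transpose_mul_eigenvectorUnitary hA]
        simp [one_apply, ite_pow]

/-- Klein's inequality. -/
lemma sum_eigenvalues_le_add_trace {f f' : ℝ → ℝ} (hf : ∀ x y, f y ≤ f x + f' x * (y - x))
    {A P : Matrix ι ι ℝ} (hA : A.IsHermitian) (hP : P.IsHermitian) :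
    ∑ i, f (hA.eigenvalues i) ≤
      ∑ i, f (hP.eigenvalues i) + (hP.cfc f' * (A - P)).trace := by
  set U := (hP.eigenvectorUnitary : Matrix ι ι ℝ)
  set V := (hA.eigenvectorUnitary : Matrix ι ι ℝ)
  have hU := eigenvectorUnitary_mul_transpose hP
  have hU' := transpose_mul_eigenvectorUnitary hP
  have hV := eigenvectorUnitary_mul_transpose hA
  have hV' := transpose_mul_eigenvectorUnitary hA
  have hO : (Vᵀ * U) * (Vᵀ * U)ᵀ = 1 := by
    rw [transpose_mul, transpose_transpose, Matrix.mul_assoc, ← Matrix.mul_assoc U, hU,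
      Matrix.one_mul, hV']
  have hO' : (Vᵀ * U)ᵀ * (Vᵀ * U) = 1 := by
    rw [transpose_mul, transpose_transpose, Matrix.mul_assoc, ← Matrix.mul_assoc V, hV,
      Matrix.one_mul, hU']
  have hBA : (hP.cfc f' * A).trace =
      ∑ i, f' (hP.eigenvalues i) * ∑ k, (Vᵀ * U) k i ^ 2 * hA.eigenvalues k := by
    rw [hermitian_cfc_eq_mul, ← trace_mul_diagonal_mul_mul, ← eq_eigenvectorUnitary_mul]
  rw [Matrix.mul_sub, trace_sub, hBA, trace_cfc_mul_self]
  exact sum_le_sum_tangent_of_doublyStochastic hf (fun k i => sq_nonneg _)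
    (sum_sq_row_eq_one hO) (sum_sq_col_eq_one hO') _ _

end SpectralTraceInequality

section PosSemidef

variable {ι : Type*}

open scoped MatrixOrder in
lemma trace_mul_nonneg_of_posSemidef [Fintype ι] {B C : Matrix ι ι ℝ} (hB : B.PosSemidef)
    (hC : C.PosSemidef) : 0 ≤ (B * C).trace := by
  classical
  obtain ⟨X, rfl⟩ := CStarAlgebra.nonneg_iff_eq_star_mul_self.1 hB.nonneg
  rw [star_eq_conjTranspose, Matrix.mul_assoc, trace_mul_comm]
  exact (hC.mul_mul_conjTranspose_same X).trace_nonneg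

open scoped Matrix.Norms.L2Operator in
lemma neg_l2OpNorm_mul_le_dotProduct_mulVec [Fintype ι] [DecidableEq ι] (E : Matrix ι ι ℝ)
    (x : ι → ℝ) :
    -(‖E‖ * (x ⬝ᵥ x)) ≤ x ⬝ᵥ E *ᵥ x := by
  have hxx : x ⬝ᵥ x = ‖WithLp.toLp 2 x‖ ^ 2 := by
    rw [← real_inner_self_eq_norm_sq, EuclideanSpace.inner_toLp_toLp, star_trivial]
  have hCS := abs_real_inner_le_norm (WithLp.toLp 2 (E *ᵥ x)) (WithLp.toLp 2 x)
  have hE : ‖WithLp.toLp 2 (E *ᵥ x)‖ ≤ ‖E‖ * ‖WithLp.toLp 2 x‖ :=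
    l2_opNorm_mulVec E (WithLp.toLp 2 x)
  rw [EuclideanSpace.inner_toLp_toLp, star_trivial] at hCS
  have hbound := hCS.trans (mul_le_mul_of_nonneg_right hE (norm_nonneg _))
  rw [hxx]
  linarith [(abs_le.1 hbound).1]

open scoped Matrix.Norms.L2Operator in
lemma eventually_posSemidef_add_smul_one [Finite ι] [DecidableEq ι] {κ : ℝ} (hκ : 0 < κ) :
    ∀ᶠ E : Matrix ι ι ℝ in nhds 0, E.IsSymm → (E + κ • (1 : Matrix ι ι ℝ)).PosSemidef := by
  have := Fintype.ofFinite ι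
  filter_upwards [Metric.ball_mem_nhds (0 : Matrix ι ι ℝ) hκ] with E hEκ hE
  rw [mem_ball_zero_iff] at hEκ
  have hsymm := hE.add (isSymm_one.smul κ)
  refine .of_dotProduct_mulVec_nonneg (isHermitian_iff_isSymm.2 hsymm) fun x => ?_
  have hx : 0 ≤ x ⬝ᵥ x := by simpa using dotProduct_star_self_nonneg x
  simp only [star_trivial, add_mulVec, dotProduct_add, smul_mulVec, one_mulVec, dotProduct_smul,
    smul_eq_mul]
  nlinarith [neg_l2OpNorm_mul_le_dotProduct_mulVec E x]

end PosSemidef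

section LagrangianAngle

lemma roots_prod_X_sub_C {R ι : Type*} [CommRing R] [IsDomain R] [Fintype ι] (f : ι → R) :
    (∏ i, (Polynomial.X - Polynomial.C (f i))).roots = Multiset.map f Finset.univ.val := by
  rw [← Polynomial.roots_multiset_prod_X_sub_C (Multiset.map f Finset.univ.val),
    Multiset.map_map]
  rfl

variable {m : ℕ} {c : ℝ} {A P : Matrix (Fin m) (Fin m) ℝ}

lemma liftedAngle_eq_sum (hA : A.IsHermitian) :
    liftedAngle A = ∑ j, arctan (hA.eigenvalues j) := dif_pos hA

lemma liftedAngle_le (A : Matrix (Fin m) (Fin m) ℝ) : liftedAngle A ≤ m * (π / 2) := by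
  unfold liftedAngle
  split_ifs with hA
  · calc ∑ j, arctan (hA.eigenvalues j) ≤ ∑ _j : Fin m, π / 2 :=
          Finset.sum_le_sum fun j _ => (arctan_lt_pi_div_two _).le
      _ = m * (π / 2) := by simp
  · positivity

lemma liftedAngle_neg (hA : A.IsSymm) : liftedAngle (-A) = -liftedAngle A := by
  have hA' := isHermitian_iff_isSymm.2 hA
  have hroots : Multiset.map (fun j => -hA'.eigenvalues j) Finset.univ.val =
      Multiset.map hA'.neg.eigenvalues Finset.univ.val := by
    have hcharpoly := hA'.charpoly_cfc_eq fun x => -x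
    rw [cfc_neg_id (R := ℝ) (a := A) hA'.isSelfAdjoint] at hcharpoly
    rw [← roots_prod_X_sub_C fun j => -hA'.eigenvalues j]
    exact (congrArg Polynomial.roots hcharpoly).symm.trans hA'.neg.roots_charpoly_eq_eigenvalues
  have hsum := congrArg (fun s : Multiset ℝ => (s.map arctan).sum) hroots
  simp only [Multiset.map_map, Function.comp_def, arctan_neg] at hsum
  rw [liftedAngle_eq_sum hA', liftedAngle_eq_sum hA'.neg, ← Finset.sum_neg_distrib]
  exact hsum.symm

lemma sum_concaveArctan_le_liftedAngle (hA : A.IsHermitian) :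
    ∑ j, concaveArctan (hA.eigenvalues j) ≤ liftedAngle A := by
  rw [liftedAngle_eq_sum hA]
  exact Finset.sum_le_sum fun j _ => concaveArctan_le_arctan _

lemma eigenvalues_nonneg_of_mem_Fc (hc : ((m : ℝ) - 1) * (π / 2) ≤ c) (hAF : A ∈ Fc m c)
    (hA : A.IsHermitian) (j : Fin m) : 0 ≤ hA.eigenvalues j := by
  by_contra! hj
  have hangle := hAF.2
  rw [liftedAngle_eq_sum hA, ← Finset.add_sum_erase _ _ (Finset.mem_univ j)] at hangle
  have hother : ∑ i ∈ Finset.univ.erase j, arctan (hA.eigenvalues i) ≤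
      ∑ i ∈ Finset.univ.erase j, π / 2 :=
    Finset.sum_le_sum fun i _ => (arctan_lt_pi_div_two _).le
  rw [Finset.sum_const, Finset.card_erase_of_mem (Finset.mem_univ j), Finset.card_univ,
    Fintype.card_fin, nsmul_eq_mul, Nat.cast_pred j.pos] at hother
  linarith [arctan_lt_zero.2 hj]

lemma posSemidef_of_mem_Fc (hc : ((m : ℝ) - 1) * (π / 2) ≤ c) (hAF : A ∈ Fc m c) :
    A.PosSemidef :=
  have hA := isHermitian_iff_isSymm.2 hAF.1
  hA.posSemidef_iff_eigenvalues_nonneg.2 (eigenvalues_nonneg_of_mem_Fc hc hAF hA)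

lemma mem_Fc_iff_le_sum_concaveArctan (hc : ((m : ℝ) - 1) * (π / 2) ≤ c) (hA : A.IsHermitian) :
    A ∈ Fc m c ↔ c ≤ ∑ j, concaveArctan (hA.eigenvalues j) := by
  refine ⟨fun hAF => ?_, fun h =>
    ⟨isHermitian_iff_isSymm.1 hA, h.trans (sum_concaveArctan_le_liftedAngle hA)⟩⟩
  have hangle := hAF.2
  rw [liftedAngle_eq_sum hA] at hangle
  refine hangle.trans (Finset.sum_le_sum fun j _ => ?_)
  rw [concaveArctan_of_nonneg (eigenvalues_nonneg_of_mem_Fc hc hAF hA j)]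

lemma trace_cfc_concaveArctanDeriv_pos (hm : m ≠ 0) (hP : P.IsHermitian) :
    0 < (hP.cfc concaveArctanDeriv).trace := by
  have : NeZero m := ⟨hm⟩
  rw [trace_cfc]
  exact Finset.sum_pos (fun i _ => concaveArctanDeriv_pos _) Finset.univ_nonempty

lemma le_sum_concaveArctan_add_trace (hc : ((m : ℝ) - 1) * (π / 2) ≤ c) (hA : A ∈ Fc m c)
    (hP : P.IsHermitian) :
    c ≤ ∑ j, concaveArctan (hP.eigenvalues j) +
      (hP.cfc concaveArctanDeriv * (A - P)).trace :=
  have hA' := isHermitian_iff_isSymm.2 hA.1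
  ((mem_Fc_iff_le_sum_concaveArctan hc hA').1 hA).trans
    (sum_eigenvalues_le_add_trace concaveArctan_le_tangent hA' hP)

lemma exists_separating_posSemidef (hc : ((m : ℝ) - 1) * (π / 2) ≤ c) (hcm : c < m * (π / 2))
    (hP : P.IsSymm) (hPF : P ∉ Fc m c) :
    ∃ B : Matrix (Fin m) (Fin m) ℝ, ∃ δ > 0, B.PosSemidef ∧ 0 < B.trace ∧
      ∀ A ∈ Fc m c, δ ≤ (B * (A - P)).trace := by
  have hP' := isHermitian_iff_isSymm.2 hP
  rw [mem_Fc_iff_le_sum_concaveArctan hc hP', not_le] at hPF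
  have hm : m ≠ 0 := by
    rintro rfl
    simp only [Finset.univ_eq_empty, Finset.sum_empty, CharP.cast_eq_zero, zero_mul] at hPF hcm
    exact hPF.not_gt hcm
  refine ⟨hP'.cfc concaveArctanDeriv, c - ∑ j, concaveArctan (hP'.eigenvalues j),
    sub_pos.2 hPF, posSemidef_cfc hP' fun x => (concaveArctanDeriv_pos x).le,
    trace_cfc_concaveArctanDeriv_pos hm hP', fun A hA => ?_⟩
  linarith [le_sum_concaveArctan_add_trace hc hA hP']

lemma mem_Fc_of_posSemidef_sub (hc : ((m : ℝ) - 1) * (π / 2) ≤ c) (hA : A ∈ Fc m c)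
    (hP : P.IsSymm) (hAP : (P - A).PosSemidef) : P ∈ Fc m c := by
  have hP' := isHermitian_iff_isSymm.2 hP
  rw [mem_Fc_iff_le_sum_concaveArctan hc hP']
  have htr := trace_mul_nonneg_of_posSemidef
    (posSemidef_cfc hP' fun x => (concaveArctanDeriv_pos x).le) hAP
  rw [← neg_sub A P, Matrix.mul_neg, trace_neg] at htr
  linarith [le_sum_concaveArctan_add_trace hc hA hP']

lemma lt_liftedAngle_add_smul_one (hc : ((m : ℝ) - 1) * (π / 2) ≤ c) (hcm : c < m * (π / 2))
    {κ : ℝ} (hκ : 0 < κ) (hA : A ∈ Fc m c) :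
    c < liftedAngle (A + κ • (1 : Matrix (Fin m) (Fin m) ℝ)) := by
  have hP := isHermitian_iff_isSymm.2 (hA.1.add (isSymm_one.smul κ))
  rcases eq_or_ne m 0 with rfl | hm
  · rw [liftedAngle_eq_sum hP]
    simpa using hcm
  have htr : (hP.cfc concaveArctanDeriv * (A - (A + κ • 1))).trace =
      -(κ * (hP.cfc concaveArctanDeriv).trace) := by
    rw [sub_add_cancel_left, Matrix.mul_neg, trace_neg, Matrix.mul_smul, Matrix.mul_one,
      trace_smul, smul_eq_mul]
  linarith [le_sum_concaveArctan_add_trace hc hA hP, sum_concaveArctan_le_liftedAngle hP,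
    mul_pos hκ (trace_cfc_concaveArctanDeriv_pos hm hP)]

lemma add_smul_one_mem_symInterior_Fc (hc : ((m : ℝ) - 1) * (π / 2) ≤ c) {κ : ℝ} (hκ : 0 < κ)
    (hA : A ∈ Fc m c) : A + κ • (1 : Matrix (Fin m) (Fin m) ℝ) ∈ symInterior (Fc m c) := by
  have hP : (A + κ • (1 : Matrix (Fin m) (Fin m) ℝ)).IsSymm := hA.1.add (isSymm_one.smul κ)
  refine ⟨hP, ?_⟩
  have hsub := ((continuous_sub_right (A + κ • 1)).tendsto' (A + κ • 1)
    (0 : Matrix (Fin m) (Fin m) ℝ) (sub_self _)).eventually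
    (eventually_posSemidef_add_smul_one hκ)
  filter_upwards [hsub] with B hB hBsymm
  refine mem_Fc_of_posSemidef_sub hc hA hBsymm ?_
  convert hB (hBsymm.sub hP) using 1
  abel

lemma mem_dualSub_of_neg_notMem {F : Set (Matrix (Fin m) (Fin m) ℝ)} (hA : A.IsSymm)
    (hAF : -A ∉ F) : A ∈ dualSub F :=
  ⟨hA, fun hint => hAF (hint.2.self_of_nhds hint.1)⟩

end LagrangianAngle

/-! ### The space-time Lagrangian angle -/

section ArgSum

variable {ι : Type*} [Fintype ι] [DecidableEq ι]

/-- The sum of the principal arguments of the eigenvalues of a complex matrix. -/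
noncomputable def argSum (M : Matrix ι ι ℂ) : ℝ := (M.charpoly.roots.map Complex.arg).sum

lemma det_smul_one_add_smul {K : Type*} [Field K] [IsAlgClosed K] (M : Matrix ι ι K) (a b : K) :
    (a • (1 : Matrix ι ι K) + b • M).det = (M.charpoly.roots.map fun z => a + b * z).prod := by
  have hcard : M.charpoly.roots.card = Fintype.card ι := by
    rw [← (IsAlgClosed.splits _).natDegree_eq_card_roots, charpoly_natDegree_eq_dim]
  rcases eq_or_ne b 0 with rfl | hb
  · simp [hcard]
  have hscale : a • (1 : Matrix ι ι K) + b • M = (-b) • (scalar ι (-(a / b)) - M) := by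
    rw [scalar_apply, ← smul_one_eq_diagonal, smul_sub, smul_smul, neg_smul, sub_neg_eq_add]
    congr 2
    field_simp
  rw [hscale, det_smul, ← eval_charpoly,
    (IsAlgClosed.splits _).eval_eq_prod_roots_of_monic M.charpoly_monic, ← hcard,
    ← Multiset.prod_replicate, ← Multiset.map_const', ← Multiset.prod_map_mul]
  congr 1
  refine Multiset.map_congr rfl fun z _ => ?_
  field_simp
  ring

lemma roots_charpoly_smul_one_add_smul {K : Type*} [Field K] [IsAlgClosed K] (M : Matrix ι ι K)
    (a b : K) : (a • (1 : Matrix ι ι K) + b • M).charpoly.roots =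
      M.charpoly.roots.map fun z => a + b * z := by
  have := IsAlgClosed.instInfinite (K := K)
  have hcharpoly : (a • (1 : Matrix ι ι K) + b • M).charpoly =
      ((M.charpoly.roots.map fun z => a + b * z).map fun w => Polynomial.X - Polynomial.C w).prod :=
    Polynomial.funext fun x => by
      have hshift : scalar ι x - (a • (1 : Matrix ι ι K) + b • M) =
          (x - a) • (1 : Matrix ι ι K) + (-b) • M := by
        rw [scalar_apply, ← smul_one_eq_diagonal]
        module
      rw [eval_charpoly, hshift, det_smul_one_add_smul, Multiset.map_map,
        Polynomial.eval_multiset_prod, Multiset.map_map]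
      refine congrArg Multiset.prod (Multiset.map_congr rfl fun z _ => ?_)
      simp only [Function.comp_apply, Polynomial.eval_sub, Polynomial.eval_X, Polynomial.eval_C]
      ring
  rw [hcharpoly, Polynomial.roots_multiset_prod_X_sub_C]

lemma det_lineMap_one (M : Matrix ι ι ℂ) (s : ℝ) :
    (AffineMap.lineMap 1 M s : Matrix ι ι ℂ).det =
      (M.charpoly.roots.map fun z => (AffineMap.lineMap 1 z s : ℂ)).prod := by
  have h := det_smul_one_add_smul M ((1 - s : ℝ) : ℂ) s
  simpa only [AffineMap.lineMap_apply_module, Complex.coe_smul, Complex.real_smul, mul_one] using h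

lemma lineMap_one_mem_slitPlane {z : ℂ} (hz : z ∈ Complex.slitPlane) {s : ℝ}
    (hs : s ∈ Set.Icc (0 : ℝ) 1) : AffineMap.lineMap 1 z s ∈ Complex.slitPlane := by
  rw [AffineMap.lineMap_apply_module]
  exact Complex.starConvex_one_slitPlane hz (by linarith [hs.2]) hs.1 (by ring)

lemma coe_sum_arg {S : Multiset ℂ} (hS : 0 ∉ S) :
    ((S.map Complex.arg).sum : Real.Angle) = S.prod.arg := by
  induction S using Multiset.induction_on with
  | empty => simp
  | cons a S ih =>
    rw [Multiset.mem_cons, not_or] at hS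
    rw [Multiset.map_cons, Multiset.sum_cons, Multiset.prod_cons, Real.Angle.coe_add, ih hS.2,
      Complex.arg_mul_coe_angle (Ne.symm hS.1) (mt Multiset.prod_eq_zero_iff.1 hS.2)]

lemma continuousOn_sum_arg_lineMap {S : Multiset ℂ} (hS : ∀ z ∈ S, z ∈ Complex.slitPlane) :
    ContinuousOn (fun s : ℝ => (S.map fun z => (AffineMap.lineMap 1 z s : ℂ).arg).sum)
      (Set.Icc 0 1) := by
  induction S using Multiset.induction_on with
  | empty => simpa using continuousOn_const
  | cons a S ih =>
    simp only [Multiset.map_cons, Multiset.sum_cons]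
    refine ContinuousOn.add (fun s hs => ?_) (ih fun z hz => hS z (Multiset.mem_cons_of_mem hz))
    have hs' := lineMap_one_mem_slitPlane (hS a (Multiset.mem_cons_self a S)) hs
    exact ((Complex.continuousAt_arg hs').comp
      (f := fun s : ℝ => (AffineMap.lineMap 1 a s : ℂ))
      AffineMap.lineMap_continuous.continuousAt).continuousWithinAt

lemma zero_notMem_map_lineMap {S : Multiset ℂ} (hS : ∀ z ∈ S, z ∈ Complex.slitPlane) {s : ℝ}
    (hs : s ∈ Set.Icc (0 : ℝ) 1) : 0 ∉ S.map fun z => (AffineMap.lineMap 1 z s : ℂ) := by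
  rw [Multiset.mem_map]
  rintro ⟨z, hz, hz0⟩
  exact Complex.slitPlane_ne_zero (lineMap_one_mem_slitPlane (hS z hz) hs) hz0

lemma det_lineMap_one_ne_zero {M : Matrix ι ι ℂ}
    (hM : ∀ z ∈ M.charpoly.roots, z ∈ Complex.slitPlane) {s : ℝ} (hs : s ∈ Set.Icc (0 : ℝ) 1) :
    (AffineMap.lineMap 1 M s : Matrix ι ι ℂ).det ≠ 0 := by
  rw [det_lineMap_one]
  exact mt Multiset.prod_eq_zero_iff.1 (zero_notMem_map_lineMap hM hs)

lemma coe_sum_arg_lineMap {M : Matrix ι ι ℂ}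
    (hM : ∀ z ∈ M.charpoly.roots, z ∈ Complex.slitPlane) {s : ℝ} (hs : s ∈ Set.Icc (0 : ℝ) 1) :
    (((M.charpoly.roots.map fun z => (AffineMap.lineMap 1 z s : ℂ).arg).sum : ℝ) : Real.Angle) =
      (AffineMap.lineMap 1 M s : Matrix ι ι ℂ).det.arg := by
  rw [det_lineMap_one, ← coe_sum_arg (zero_notMem_map_lineMap hM hs), Multiset.map_map]
  rfl

lemma continuous_det_lineMap_one {X : Type*} [TopologicalSpace X] {M : X → Matrix ι ι ℂ}
    {s : X → ℝ} (hM : Continuous M) (hs : Continuous s) :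
    Continuous fun x => (AffineMap.lineMap 1 (M x) (s x) : Matrix ι ι ℂ).det := by
  refine Continuous.matrix_det ?_
  simp only [AffineMap.lineMap_apply_module]
  fun_prop

/-- The error, an integral multiple of `2π` along the segments joining `1` to `M` and to `N`, is
continuous and vanishes at `1`. -/
lemma argSum_sub_argSum {M N : Matrix ι ι ℂ}
    (hM : ∀ z ∈ M.charpoly.roots, z ∈ Complex.slitPlane)
    (hN : ∀ z ∈ N.charpoly.roots, z ∈ Complex.slitPlane)
    (hMN : ∀ s ∈ Set.Icc (0 : ℝ) 1, (AffineMap.lineMap 1 M s : Matrix ι ι ℂ).det /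
      (AffineMap.lineMap 1 N s : Matrix ι ι ℂ).det ∈ Complex.slitPlane) :
    argSum M - argSum N = (M.det / N.det).arg := by
  set ratio : ℝ → ℂ := fun s => (AffineMap.lineMap 1 M s : Matrix ι ι ℂ).det /
    (AffineMap.lineMap 1 N s : Matrix ι ι ℂ).det with hratio
  set error : ℝ → ℝ := fun s =>
    (M.charpoly.roots.map fun z => (AffineMap.lineMap 1 z s : ℂ).arg).sum -
      (N.charpoly.roots.map fun z => (AffineMap.lineMap 1 z s : ℂ).arg).sum - (ratio s).arg
    with herror
  have hratio_cont : ContinuousOn ratio (Set.Icc 0 1) :=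
    (continuous_det_lineMap_one continuous_const continuous_id).continuousOn.div
      (continuous_det_lineMap_one continuous_const continuous_id).continuousOn
      fun s hs => det_lineMap_one_ne_zero hN hs
  have herror_cont : ContinuousOn error (Set.Icc 0 1) :=
    ((continuousOn_sum_arg_lineMap hM).sub (continuousOn_sum_arg_lineMap hN)).sub fun s hs =>
      (Complex.continuousAt_arg (hMN s hs)).comp_continuousWithinAt (f := ratio) (hratio_cont s hs)
  have herror_mem : Set.MapsTo error (Set.Icc 0 1) (AddSubgroup.zmultiples (2 * π) : Set ℝ) := by
    intro s hs
    have hzero : (error s : Real.Angle) = 0 := by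
      rw [herror, Real.Angle.coe_sub, Real.Angle.coe_sub, coe_sum_arg_lineMap hM hs,
        coe_sum_arg_lineMap hN hs, hratio, Complex.arg_div_coe_angle
          (det_lineMap_one_ne_zero hM hs) (det_lineMap_one_ne_zero hN hs), sub_self]
    obtain ⟨k, hk⟩ := Real.Angle.coe_eq_zero_iff.1 hzero
    exact hk ▸ AddSubgroup.zsmul_mem_zmultiples _ _
  have hdiscrete : IsDiscrete (AddSubgroup.zmultiples (2 * π) : Set ℝ) :=
    isDiscrete_iff_discreteTopology.2
      (inferInstanceAs (DiscreteTopology (AddSubgroup.zmultiples (2 * π))))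
  have h01 : error 1 = error 0 := isPreconnected_Icc.constant_of_mapsTo hdiscrete herror_cont
    herror_mem (Set.right_mem_Icc.2 zero_le_one) (Set.left_mem_Icc.2 zero_le_one)
  simp only [herror, hratio, AffineMap.lineMap_apply_zero, AffineMap.lineMap_apply_one,
    Complex.arg_one, Multiset.map_const', Multiset.sum_replicate, det_one, div_one, smul_zero,
    sub_zero] at h01
  exact sub_eq_zero.1 h01

lemma isLocallyConstant_argSum {X : Type*} [TopologicalSpace X] {M : X → Matrix ι ι ℂ}
    (hcont : Continuous M) (hroots : ∀ x, ∀ z ∈ (M x).charpoly.roots, z ∈ Complex.slitPlane)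
    {d : ℂ} (hdet : ∀ x, (M x).det = d) : IsLocallyConstant fun x => argSum (M x) := by
  rw [IsLocallyConstant.iff_eventually_eq]
  intro x
  have hnear : ∀ᶠ y in nhds x, ∀ s ∈ Set.Icc (0 : ℝ) 1,
      (AffineMap.lineMap 1 (M y) s : Matrix ι ι ℂ).det /
        (AffineMap.lineMap 1 (M x) s : Matrix ι ι ℂ).det ∈ Complex.slitPlane := by
    refine isCompact_Icc.eventually_forall_of_forall_eventually fun s hs => ?_
    have hne := det_lineMap_one_ne_zero (hroots x) hs
    have hcontAt : ContinuousAt (fun p : X × ℝ =>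
        (AffineMap.lineMap 1 (M p.1) p.2 : Matrix ι ι ℂ).det /
          (AffineMap.lineMap 1 (M x) p.2 : Matrix ι ι ℂ).det) (x, s) :=
      (continuous_det_lineMap_one (hcont.comp continuous_fst) continuous_snd).continuousAt.div
        (continuous_det_lineMap_one continuous_const continuous_snd).continuousAt hne
    refine hcontAt.eventually_mem (Complex.isOpen_slitPlane.mem_nhds ?_)
    rw [div_self hne]
    exact Complex.one_mem_slitPlane
  filter_upwards [hnear] with y hy
  have hdet_ne : d ≠ 0 := by
    have h1 := det_lineMap_one_ne_zero (hroots x) (Set.right_mem_Icc.2 zero_le_one)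
    rwa [AffineMap.lineMap_apply_one, hdet] at h1
  have hdiff := argSum_sub_argSum (hroots y) (hroots x) hy
  rw [hdet, hdet, div_self hdet_ne, Complex.arg_one] at hdiff
  exact sub_eq_zero.1 hdiff

open scoped ComplexOrder in
lemma re_nonneg_of_mem_roots_charpoly {M : Matrix ι ι ℂ}
    (hM : ∀ v, 0 ≤ (star v ⬝ᵥ M *ᵥ v).re) {z : ℂ} (hz : z ∈ M.charpoly.roots) : 0 ≤ z.re := by
  have hroot := Polynomial.isRoot_of_mem_roots hz
  rw [Polynomial.IsRoot, eval_charpoly] at hroot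
  obtain ⟨v, hv, hv0⟩ := exists_mulVec_eq_zero_iff.2 hroot
  have hMv : M *ᵥ v = z • v := by
    rw [sub_mulVec, scalar_apply, ← smul_one_eq_diagonal, smul_mulVec, one_mulVec,
      sub_eq_zero] at hv0
    exact hv0.symm
  have hpos : 0 < star v ⬝ᵥ v := dotProduct_star_self_pos_iff.2 hv
  have h := hM v
  rw [hMv, dotProduct_smul, smul_eq_mul, Complex.mul_re, (Complex.pos_iff.1 hpos).2.symm,
    mul_zero, sub_zero] at h
  exact nonneg_of_mul_nonneg_left h (Complex.pos_iff.1 hpos).1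

end ArgSum

section SpaceTimeAngle

variable {n : ℕ}

/-- The symmetric matrix with corner `a`, first column `(a, b)` and remaining block `S`. -/
def bordered (a : ℝ) (b : Fin n → ℝ) (S : Matrix (Fin n) (Fin n) ℝ) :
    Matrix (Fin (n + 1)) (Fin (n + 1)) ℝ :=
  Matrix.of (vecCons (vecCons a b) fun i => vecCons (b i) (S i))

lemma eq_bordered_of_isSymm {A : Matrix (Fin (n + 1)) (Fin (n + 1)) ℝ} (hA : A.IsSymm) :
    A = bordered (A 0 0) (fun j => A 0 j.succ) (Aplus A) := by
  ext i j
  cases i using Fin.cases <;> cases j using Fin.cases <;> simp [bordered, Aplus, hA.apply]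

lemma isSymm_bordered (a : ℝ) (b : Fin n → ℝ) {S : Matrix (Fin n) (Fin n) ℝ} (hS : S.IsSymm) :
    (bordered a b S).IsSymm := by
  ext i j
  cases i using Fin.cases <;> cases j using Fin.cases <;> simp [bordered, hS.apply]

lemma neg_bordered (a : ℝ) (b : Fin n → ℝ) (S : Matrix (Fin n) (Fin n) ℝ) :
    -bordered a b S = bordered (-a) (-b) (-S) := by
  ext i j
  cases i using Fin.cases <;> cases j using Fin.cases <;> simp [bordered]

/-- The Schur complement of the `(0, 0)` entry. It is meaningful only where that entry is
nonzero. -/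
def schurComplement {K : Type*} [Field K] (M : Matrix (Fin (n + 1)) (Fin (n + 1)) K) :
    Matrix (Fin n) (Fin n) K :=
  Matrix.of fun i j => M i.succ j.succ - M i.succ 0 * M 0 j.succ / M 0 0

lemma isSymm_schurComplement {K : Type*} [Field K] {M : Matrix (Fin (n + 1)) (Fin (n + 1)) K}
    (hM : M.IsSymm) : (schurComplement M).IsSymm := by
  ext i j
  simp only [transpose_apply, schurComplement, of_apply, hM.apply]
  ring

lemma schurComplement_bordered_zero (a : ℝ) (S : Matrix (Fin n) (Fin n) ℝ) :
    schurComplement (bordered a 0 S) = S := by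
  ext i j
  simp [schurComplement, bordered]

lemma det_eq_mul_det_schurComplement {K : Type*} [Field K]
    {M : Matrix (Fin (n + 1)) (Fin (n + 1)) K} (hM : M 0 0 ≠ 0) :
    M.det = M 0 0 * (schurComplement M).det := by
  set B : Matrix (Fin (n + 1)) (Fin (n + 1)) K :=
    Matrix.of (Fin.cons (M 0) fun i j => M i.succ j - M i.succ 0 / M 0 0 * M 0 j) with hB
  have hMB : M.det = B.det := by
    refine det_eq_of_forall_row_eq_smul_add_const
      (Fin.cons 0 fun i => M i.succ 0 / M 0 0) 0 rfl fun i j => ?_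
    cases i using Fin.cases <;> simp [hB]
  have hcol (i : Fin n) : B i.succ 0 = 0 := by simp [hB, hM]
  rw [hMB, det_succ_column_zero, Fin.sum_univ_succ]
  simp only [hcol, mul_zero, zero_mul, Finset.sum_const_zero, add_zero, Fin.val_zero, pow_zero,
    one_mul, Fin.succAbove_zero]
  congr 2
  ext i j
  simp only [schurComplement, submatrix_apply, hB, of_apply, Fin.cons_succ]
  ring

lemma schurComplement_cmat (A : Matrix (Fin (n + 1)) (Fin (n + 1)) ℝ) :
    schurComplement (cmat A) = 1 + Complex.I • (schurComplement A).map Complex.ofReal := by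
  ext i j
  simp [schurComplement, cmat, Inmat, diagonal_apply, one_apply, (Fin.succ_ne_zero _).symm]
  field_simp
  ring

lemma arg_one_add_I_mul (x : ℝ) : (1 + Complex.I * x : ℂ).arg = arctan x := by
  rw [Complex.arg_of_re_nonneg (by simp), arctan_eq_arcsin, Complex.norm_def,
    Complex.normSq_apply]
  simp [sq]

lemma arg_I_mul_of_pos {a : ℝ} (ha : 0 < a) : (Complex.I * a).arg = π / 2 := by
  rw [mul_comm, Complex.arg_real_mul _ ha, Complex.arg_I]

lemma arg_I_mul_of_neg {a : ℝ} (ha : a < 0) : (Complex.I * a).arg = -(π / 2) := by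
  rw [← neg_mul_neg, ← Complex.ofReal_neg, mul_comm, Complex.arg_real_mul _ (neg_pos.2 ha),
    Complex.arg_neg_I]

lemma roots_charpoly_one_add_I_smul {S : Matrix (Fin n) (Fin n) ℝ} (hS : S.IsHermitian) :
    (1 + Complex.I • S.map Complex.ofReal : Matrix (Fin n) (Fin n) ℂ).charpoly.roots =
      Finset.univ.val.map fun j => (1 + Complex.I * (hS.eigenvalues j : ℂ)) := by
  have hcharpoly : (S.map Complex.ofReal).charpoly =
      ∏ j, (Polynomial.X - Polynomial.C (hS.eigenvalues j : ℂ)) := by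
    have h := charpoly_map S Complex.ofRealHom
    rw [hS.charpoly_eq, Polynomial.map_prod] at h
    simp only [Polynomial.map_sub, Polynomial.map_X, Polynomial.map_C] at h
    exact h
  have h := roots_charpoly_smul_one_add_smul (S.map Complex.ofReal) 1 Complex.I
  rwa [one_smul, hcharpoly, roots_prod_X_sub_C, Multiset.map_map] at h

lemma argSum_one_add_I_smul {S : Matrix (Fin n) (Fin n) ℝ} (hS : S.IsSymm) :
    argSum (1 + Complex.I • S.map Complex.ofReal) = liftedAngle S := by
  have hS' := isHermitian_iff_isSymm.2 hS
  rw [argSum, roots_charpoly_one_add_I_smul hS', liftedAngle_eq_sum hS', Multiset.map_map]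
  exact Finset.sum_congr rfl fun j _ => arg_one_add_I_mul _

lemma cmat_bordered_zero_charpoly (a : ℝ) (S : Matrix (Fin n) (Fin n) ℝ) :
    (cmat (bordered a 0 S)).charpoly = (Polynomial.X - Polynomial.C (Complex.I * a)) *
      (1 + Complex.I • S.map Complex.ofReal : Matrix (Fin n) (Fin n) ℂ).charpoly := by
  have hrow (j : Fin n) : (cmat (bordered a 0 S)).charmatrix 0 j.succ = 0 := by
    simp [cmat, Inmat, bordered, (Fin.succ_ne_zero j).symm]
  have hblock : (cmat (bordered a 0 S)).charmatrix.submatrix Fin.succ Fin.succ =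
      (1 + Complex.I • S.map Complex.ofReal : Matrix (Fin n) (Fin n) ℂ).charmatrix := by
    ext1 i j
    simp [charmatrix_apply, cmat, Inmat, bordered, diagonal_apply, one_apply]
  have hcorner : (cmat (bordered a 0 S)).charmatrix 0 0 =
      Polynomial.X - Polynomial.C (Complex.I * a) := by
    simp [cmat, Inmat, bordered]
  rw [charpoly, det_succ_row_zero, Fin.sum_univ_succ]
  simp only [hrow, hcorner, mul_zero, zero_mul, Finset.sum_const_zero, add_zero, Fin.val_zero,
    pow_zero, one_mul, Fin.succAbove_zero, hblock, charpoly]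

lemma argSum_cmat_bordered_zero (a : ℝ) {S : Matrix (Fin n) (Fin n) ℝ} (hS : S.IsSymm) :
    argSum (cmat (bordered a 0 S)) = (Complex.I * a).arg + liftedAngle S := by
  rw [← argSum_one_add_I_smul hS, argSum, argSum, cmat_bordered_zero_charpoly,
    Polynomial.roots_mul (mul_ne_zero (Polynomial.X_sub_C_ne_zero _) (charpoly_monic _).ne_zero),
    Polynomial.roots_X_sub_C, Multiset.map_add, Multiset.sum_add, Multiset.map_singleton,
    Multiset.sum_singleton]

open scoped ComplexOrder in
lemma re_star_dotProduct_cmat_mulVec_nonneg {A : Matrix (Fin (n + 1)) (Fin (n + 1)) ℝ}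
    (hA : A.IsSymm) (v : Fin (n + 1) → ℂ) : 0 ≤ (star v ⬝ᵥ cmat A *ᵥ v).re := by
  have hA' : (A.map Complex.ofReal).IsHermitian := by
    ext i j
    simp [conjTranspose_apply, hA.apply]
  have him : (star v ⬝ᵥ A.map Complex.ofReal *ᵥ v).im = 0 := hA'.im_star_dotProduct_mulVec_self v
  have hI : (Inmat n).PosSemidef := by
    refine PosSemidef.diagonal fun i => ?_
    split_ifs
    exacts [le_rfl, zero_le_one]
  rw [cmat, add_mulVec, dotProduct_add, smul_mulVec, dotProduct_smul, smul_eq_mul, Complex.add_re,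
    Complex.I_mul_re, him, neg_zero, add_zero]
  exact hI.re_dotProduct_nonneg v

lemma mem_slitPlane_of_mem_roots_cmat {A : Matrix (Fin (n + 1)) (Fin (n + 1)) ℝ} (hA : A.IsSymm)
    (hdet : (cmat A).det ≠ 0) {z : ℂ} (hz : z ∈ (cmat A).charpoly.roots) :
    z ∈ Complex.slitPlane := by
  have hre := re_nonneg_of_mem_roots_charpoly (re_star_dotProduct_cmat_mulVec_nonneg hA) hz
  refine Complex.mem_slitPlane_iff_not_le_zero.2 fun hz0 => hdet ?_
  have hz_eq : z = 0 := Complex.ext (le_antisymm hz0.1 hre) hz0.2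
  rw [det_eq_prod_roots_charpoly, Multiset.prod_eq_zero_iff]
  exact hz_eq ▸ hz

lemma continuous_cmat : Continuous (cmat : Matrix (Fin (n + 1)) (Fin (n + 1)) ℝ → _) :=
  continuous_const.add ((continuous_id.matrix_map Complex.continuous_ofReal).const_smul Complex.I)

lemma det_cmat {A : Matrix (Fin (n + 1)) (Fin (n + 1)) ℝ} (hA : A 0 0 ≠ 0) :
    (cmat A).det = Complex.I * A 0 0 *
      (1 + Complex.I • (schurComplement A).map Complex.ofReal : Matrix (Fin n) (Fin n) ℂ).det := by
  have hcorner : cmat A 0 0 = Complex.I * A 0 0 := by simp [cmat, Inmat]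
  rw [det_eq_mul_det_schurComplement, schurComplement_cmat, hcorner]
  simpa [hcorner] using hA

lemma det_cmat_ne_zero {A : Matrix (Fin (n + 1)) (Fin (n + 1)) ℝ} (hA : A.IsSymm)
    (ha : A 0 0 ≠ 0) : (cmat A).det ≠ 0 := by
  have hS := isHermitian_iff_isSymm.2 (isSymm_schurComplement hA)
  rw [det_cmat ha, det_eq_prod_roots_charpoly, roots_charpoly_one_add_I_smul hS]
  refine mul_ne_zero (by simpa using ha) (Finset.prod_ne_zero_iff.2 fun j _ h => ?_)
  simpa using congrArg Complex.re h

/-- Rescaling the off-diagonal entries of `A` to zero while keeping the Schur complement deforms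
`A` to a block diagonal matrix without changing `det (I_n + iA)`. -/
lemma spaceTimeAngle_eq {A : Matrix (Fin (n + 1)) (Fin (n + 1)) ℝ} (hA : A.IsSymm)
    (ha : A 0 0 ≠ 0) :
    spaceTimeAngle A = (Complex.I * A 0 0).arg + liftedAngle (schurComplement A) := by
  set a := A 0 0
  set b : Fin n → ℝ := fun j => A 0 j.succ with hb
  have hS := isSymm_schurComplement hA
  set P : ℝ → Matrix (Fin (n + 1)) (Fin (n + 1)) ℝ := fun σ =>
    bordered a (σ • b) (schurComplement A + (σ ^ 2 / a) • vecMulVec b b) with hP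
  have hP_symm (σ : ℝ) : (P σ).IsSymm :=
    isSymm_bordered _ _ (hS.add (IsSymm.smul (transpose_vecMulVec b b) _))
  have hP_schur (σ : ℝ) : schurComplement (P σ) = schurComplement A := by
    ext i j
    simp only [schurComplement, hP, bordered, of_apply, cons_val_zero, cons_val_succ,
      Matrix.add_apply, Matrix.smul_apply, vecMulVec_apply, Pi.smul_apply, smul_eq_mul]
    ring
  have hP_cont : Continuous P := by
    refine continuous_matrix fun i j => ?_
    cases i using Fin.cases <;> cases j using Fin.cases <;>
      simp only [hP, bordered, of_apply, cons_val_zero, cons_val_succ, Matrix.add_apply,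
        Matrix.smul_apply, Pi.smul_apply] <;> fun_prop
  have hP_det (σ : ℝ) : (cmat (P σ)).det = (cmat A).det := by
    rw [det_cmat (A := P σ) ha, det_cmat ha, hP_schur]
    rfl
  have hdet := det_cmat_ne_zero hA ha
  have hconst := (isLocallyConstant_argSum (M := fun σ => cmat (P σ)) (continuous_cmat.comp hP_cont)
    (fun σ z => mem_slitPlane_of_mem_roots_cmat (hP_symm σ) (hP_det σ ▸ hdet))
    hP_det).apply_eq_of_preconnectedSpace 1 0
  have hP1 : P 1 = A := by
    have hblock : schurComplement A + (1 ^ 2 / a) • vecMulVec b b = Aplus A := by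
      ext i j
      simp only [schurComplement, Aplus, Matrix.add_apply, Matrix.smul_apply, vecMulVec_apply,
        smul_eq_mul, of_apply, hA.apply 0 i.succ, hb]
      ring
    simp only [hP, one_smul, hblock]
    exact (eq_bordered_of_isSymm hA).symm
  have hP0 : P 0 = bordered a 0 (schurComplement A) := by simp [hP]
  rw [← argSum_cmat_bordered_zero a hS, spaceTimeAngle, if_neg hdet, ← hP0, ← hconst, hP1, argSum]

lemma notMem_calF_of_neg {c : ℝ} (hc : n * (π / 2) ≤ c)
    {A : Matrix (Fin (n + 1)) (Fin (n + 1)) ℝ} (ha : A 0 0 < 0) : A ∉ calF n c := by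
  rintro ⟨hA, hAc⟩
  rw [spaceTimeAngle_eq hA ha.ne, arg_I_mul_of_neg ha] at hAc
  linarith [liftedAngle_le (schurComplement A), pi_pos]

lemma notMem_calF_of_schurComplement_notMem {c : ℝ} {A : Matrix (Fin (n + 1)) (Fin (n + 1)) ℝ}
    (ha : 0 < A 0 0) (hS : schurComplement A ∉ Fc n (c - π / 2)) : A ∉ calF n c := by
  rintro ⟨hA, hAc⟩
  rw [spaceTimeAngle_eq hA ha.ne', arg_I_mul_of_pos ha] at hAc
  exact hS ⟨isSymm_schurComplement hA, by linarith⟩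

lemma neg_bordered_zero_notMem_calF {c κ : ℝ} (hκ : 0 < κ) {S : Matrix (Fin n) (Fin n) ℝ}
    (hS : S.IsSymm) (hc : c - π / 2 < liftedAngle S) : -bordered κ 0 S ∉ calF n (-c) := by
  rintro ⟨hA, hAc⟩
  have hcorner : (-bordered κ 0 S) 0 0 = -κ := rfl
  rw [spaceTimeAngle_eq hA (hcorner ▸ (neg_neg_of_pos hκ).ne), hcorner,
    arg_I_mul_of_neg (neg_neg_of_pos hκ), neg_bordered, neg_zero, schurComplement_bordered_zero,
    liftedAngle_neg hS] at hAc
  linarith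

end SpaceTimeAngle

/-! ### Hessians and second-order Taylor expansions -/

section Taylor

variable {E : Type*} [NormedAddCommGroup E] [NormedSpace ℝ E]

lemma hasFDerivAt_quadratic {L : E →L[ℝ] E →L[ℝ] ℝ} (hL : ∀ a b, L a b = L b a)
    (a : ℝ) (l : E →L[ℝ] ℝ) (x₁ z : E) :
    HasFDerivAt (fun z => a + l (z - x₁) + (1 / 2) * L (z - x₁) (z - x₁)) (l + L (z - x₁)) z := by
  have hid : HasFDerivAt (fun z : E => z - x₁) (ContinuousLinearMap.id ℝ _) z :=
    (hasFDerivAt_id z).sub_const x₁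
  have hl : HasFDerivAt (fun z => l (z - x₁)) l z := l.hasFDerivAt.comp z hid
  have hLz : HasFDerivAt (fun z => L (z - x₁)) L z := L.hasFDerivAt.comp z hid
  refine ((hl.const_add a).add ((hLz.clm_apply hid).const_mul (1 / 2))).congr_fderiv ?_
  ext w
  have hzw := hL z w
  have hxw := hL x₁ w
  simp
  linarith

lemma eventually_abs_sub_taylor_two_le {v : E → ℝ} {x₁ : E} (hv : ContDiffAt ℝ 2 v x₁)
    {s : ℝ} (hs : 0 < s) :
    ∀ᶠ x in nhds x₁, |v x - (v x₁ + fderiv ℝ v x₁ (x - x₁)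
      + (1 / 2) * fderiv ℝ (fderiv ℝ v) x₁ (x - x₁) (x - x₁))| ≤ s * (‖x - x₁‖ * ‖x - x₁‖) := by
  set L := fderiv ℝ (fderiv ℝ v) x₁
  have hd : HasFDerivAt (fderiv ℝ v) L x₁ :=
    ((hv.fderiv_right (m := 1) (by norm_num)).differentiableAt (by norm_num)).hasFDerivAt
  have hdiff : ∀ᶠ x in nhds x₁, DifferentiableAt ℝ v x :=
    (hv.eventually (by simp)).mono fun x hx => hx.differentiableAt (by norm_num)
  obtain ⟨r, hr, hball⟩ := Metric.eventually_nhds_iff_ball.1 ((hd.isLittleO.def hs).and hdiff)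
  filter_upwards [Metric.ball_mem_nhds x₁ hr] with x hx
  set R : E → ℝ := fun z => v z - (v x₁ + fderiv ℝ v x₁ (z - x₁)
      + (1 / 2) * (L (z - x₁) (z - x₁))) with hR
  have hRd : ∀ z ∈ Metric.ball x₁ r,
      HasFDerivAt R (fderiv ℝ v z - (fderiv ℝ v x₁ + L (z - x₁))) z := fun z hz =>
    (hball z hz).2.hasFDerivAt.sub
      (hasFDerivAt_quadratic (fun a b => (hv.isSymmSndFDerivAt (by simp)).eq a b) _ _ _ _)
  have hbound : ∀ z ∈ Metric.ball x₁ r ∩ Metric.closedBall x₁ ‖x - x₁‖,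
      ‖fderiv ℝ v z - (fderiv ℝ v x₁ + L (z - x₁))‖ ≤ s * ‖x - x₁‖ := fun z hz => by
    rw [← sub_sub]
    refine (hball z hz.1).1.trans (mul_le_mul_of_nonneg_left ?_ hs.le)
    simpa [dist_eq_norm] using hz.2
  have hmv := ((convex_ball x₁ r).inter
    (convex_closedBall x₁ ‖x - x₁‖)).norm_image_sub_le_of_norm_hasFDerivWithin_le
    (fun z hz => (hRd z hz.1).hasFDerivWithinAt) hbound ⟨Metric.mem_ball_self hr, by simp⟩
    ⟨hx, by simp [dist_eq_norm]⟩
  have hR₁ : R x₁ = 0 := by simp [hR]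
  rwa [hR₁, sub_zero, Real.norm_eq_abs, mul_assoc] at hmv

end Taylor

section Hessian

variable {m : ℕ}

lemma hessianMatrix_apply (v : (Fin m → ℝ) → ℝ) (x : Fin m → ℝ) (i j : Fin m) :
    hessianMatrix v x i j = fderiv ℝ (fderiv ℝ v) x (Pi.single i 1) (Pi.single j 1) := by
  simp [hessianMatrix, iteratedFDeriv_two_apply]

lemma isSymm_hessianMatrix {v : (Fin m → ℝ) → ℝ} {x : Fin m → ℝ}
    (hv : ContDiffAt ℝ 2 v x) : (hessianMatrix v x).IsSymm := by
  ext i j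
  rw [Matrix.transpose_apply, hessianMatrix_apply, hessianMatrix_apply]
  exact (hv.isSymmSndFDerivAt (by simp)).eq _ _

lemma fderiv_fderiv_eq_dotProduct (v : (Fin m → ℝ) → ℝ) (x y z : Fin m → ℝ) :
    fderiv ℝ (fderiv ℝ v) x y z = y ⬝ᵥ hessianMatrix v x *ᵥ z := by
  conv_lhs => rw [pi_eq_sum_univ' y, pi_eq_sum_univ' z]
  simp only [map_sum, map_smul, _root_.sum_apply, _root_.smul_apply,
    dotProduct, Matrix.mulVec, Finset.mul_sum, hessianMatrix_apply, smul_eq_mul]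
  rw [Finset.sum_comm]
  refine Finset.sum_congr rfl fun i _ => Finset.sum_congr rfl fun j _ => ?_
  ring

lemma norm_mul_norm_le_dotProduct_self (y : Fin m → ℝ) : ‖y‖ * ‖y‖ ≤ y ⬝ᵥ y := by
  have hyy : 0 ≤ y ⬝ᵥ y := Finset.sum_nonneg fun i _ => mul_self_nonneg _
  have h : ‖y‖ ≤ √(y ⬝ᵥ y) := by
    refine (pi_norm_le_iff_of_nonneg (Real.sqrt_nonneg _)).2 fun i => ?_
    refine Real.le_sqrt_of_sq_le ?_
    rw [Real.norm_eq_abs, sq_abs, sq]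
    exact Finset.single_le_sum (f := fun i => y i * y i) (fun j _ => mul_self_nonneg _)
      (Finset.mem_univ i)
  calc ‖y‖ * ‖y‖ ≤ √(y ⬝ᵥ y) * √(y ⬝ᵥ y) := mul_self_le_mul_self (norm_nonneg _) h
    _ = y ⬝ᵥ y := Real.mul_self_sqrt hyy

lemma eventually_abs_sub_hessian_expansion_le {v : (Fin m → ℝ) → ℝ} {x₁ : Fin m → ℝ}
    (hv : ContDiffAt ℝ 2 v x₁) {s : ℝ} (hs : 0 < s) :
    ∀ᶠ x in nhds x₁, |v x - (v x₁ + fderiv ℝ v x₁ (x - x₁)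
      + (1 / 2) * ((x - x₁) ⬝ᵥ hessianMatrix v x₁ *ᵥ (x - x₁)))|
      ≤ s * ((x - x₁) ⬝ᵥ (x - x₁)) := by
  filter_upwards [eventually_abs_sub_taylor_two_le hv hs] with x hx
  rw [← fderiv_fderiv_eq_dotProduct]
  exact hx.trans (mul_le_mul_of_nonneg_left (norm_mul_norm_le_dotProduct_self _) hs.le)

lemma posSemidef_neg_hessianMatrix_of_isLocalMax {v : (Fin m → ℝ) → ℝ} {x₁ : Fin m → ℝ}
    (hv : ContDiffAt ℝ 2 v x₁) (hmax : IsLocalMax v x₁) : (-(hessianMatrix v x₁)).PosSemidef := by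
  refine Matrix.PosSemidef.of_dotProduct_mulVec_nonneg
    (Matrix.isHermitian_iff_isSymm.2 (isSymm_hessianMatrix hv).neg) fun y => ?_
  rw [Matrix.neg_mulVec, dotProduct_neg, star_trivial, neg_nonneg]
  set q := y ⬝ᵥ hessianMatrix v x₁ *ᵥ y with hq
  have hyy : 0 ≤ y ⬝ᵥ y := Finset.sum_nonneg fun i _ => mul_self_nonneg _
  have hsmall : ∀ s > 0, q / 2 ≤ s * (y ⬝ᵥ y) := fun s hs => by
    have hline : Tendsto (fun σ : ℝ => x₁ + σ • y) (nhdsWithin 0 (Set.Ioi 0)) (nhds x₁) := by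
      have : Continuous (fun σ : ℝ => x₁ + σ • y) := by fun_prop
      simpa using (this.tendsto 0).mono_left nhdsWithin_le_nhds
    obtain ⟨σ, ⟨htaylor, hle⟩, hσ : 0 < σ⟩ := ((hline.eventually
      ((eventually_abs_sub_hessian_expansion_le hv hs).and hmax)).and
      eventually_mem_nhdsWithin).exists
    rw [hmax.fderiv_eq_zero] at htaylor
    simp only [add_sub_cancel_left, _root_.zero_apply, add_zero, Matrix.mulVec_smul,
      dotProduct_smul, smul_dotProduct, smul_eq_mul, ← hq] at htaylor
    have hσq : σ * σ * (q / 2) ≤ σ * σ * (s * (y ⬝ᵥ y)) := by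
      linarith [neg_le_of_abs_le htaylor]
    exact le_of_mul_le_mul_left hσq (by positivity)
  by_contra! hpos
  have hlim := hsmall (q / (4 * (y ⬝ᵥ y + 1))) (by positivity)
  rw [div_mul_eq_mul_div, div_le_div_iff₀ (by norm_num) (by positivity)] at hlim
  nlinarith

end Hessian

/-! ### Euclidean balls and constant coefficient operators on polynomials -/

section EuclideanBall

variable {m : ℕ}

/-- The square of the Euclidean distance; the norm of `Fin m → ℝ` is the sup norm. -/
def sqDist (y x : Fin m → ℝ) : ℝ := (x - y) ⬝ᵥ (x - y)

lemma sqDist_nonneg (y x : Fin m → ℝ) : 0 ≤ sqDist y x := by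
  unfold sqDist dotProduct
  exact Finset.sum_nonneg fun _ _ => mul_self_nonneg _

lemma sqDist_self (y : Fin m → ℝ) : sqDist y y = 0 := by simp [sqDist]

lemma sqDist_pos {y x : Fin m → ℝ} (h : x ≠ y) : 0 < sqDist y x := by
  have hnorm : 0 < ‖x - y‖ := norm_pos_iff.2 (sub_ne_zero.2 h)
  exact lt_of_lt_of_le (by positivity) (norm_mul_norm_le_dotProduct_self (x - y))

lemma continuous_sqDist (y : Fin m → ℝ) : Continuous (sqDist y) := by
  unfold sqDist dotProduct; fun_prop

/-- The closed Euclidean ball of radius `r` around `y`. -/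
def euclideanBall (y : Fin m → ℝ) (r : ℝ) : Set (Fin m → ℝ) := {x | sqDist y x ≤ r ^ 2}

/-- The Euclidean sphere of radius `r` around `y`. -/
def euclideanSphere (y : Fin m → ℝ) (r : ℝ) : Set (Fin m → ℝ) := {x | sqDist y x = r ^ 2}

lemma euclideanSphere_subset_euclideanBall (y : Fin m → ℝ) (r : ℝ) :
    euclideanSphere y r ⊆ euclideanBall y r :=
  fun _ hx => le_of_eq hx

lemma euclideanBall_subset_closedBall {y : Fin m → ℝ} {r : ℝ} (hr : 0 ≤ r) :
    euclideanBall y r ⊆ Metric.closedBall y r := fun x (hx : sqDist y x ≤ r ^ 2) => by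
  rw [Metric.mem_closedBall, dist_eq_norm]
  refine abs_le_of_sq_le_sq' ?_ hr |>.2
  rw [sq]
  exact (norm_mul_norm_le_dotProduct_self (x - y)).trans hx

lemma isCompact_euclideanBall (y : Fin m → ℝ) {r : ℝ} (hr : 0 ≤ r) :
    IsCompact (euclideanBall y r) :=
  (isCompact_closedBall y r).of_isClosed_subset
    (isClosed_le (continuous_sqDist y) continuous_const) (euclideanBall_subset_closedBall hr)

lemma isCompact_euclideanSphere (y : Fin m → ℝ) {r : ℝ} (hr : 0 ≤ r) :
    IsCompact (euclideanSphere y r) :=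
  (isCompact_euclideanBall y hr).of_isClosed_subset
    (isClosed_eq (continuous_sqDist y) continuous_const)
    (euclideanSphere_subset_euclideanBall y r)

lemma frontier_euclideanBall_subset (y : Fin m → ℝ) (r : ℝ) :
    frontier (euclideanBall y r) ⊆ euclideanSphere y r :=
  frontier_le_subset_eq (continuous_sqDist y) continuous_const

lemma isOpen_setOf_sqDist_lt (y : Fin m → ℝ) (a : ℝ) : IsOpen {x | sqDist y x < a} :=
  isOpen_lt (continuous_sqDist y) continuous_const

lemma euclideanBall_mem_nhds {y x : Fin m → ℝ} {r : ℝ} (hx : sqDist y x < r ^ 2) :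
    euclideanBall y r ∈ nhds x :=
  Filter.mem_of_superset ((isOpen_setOf_sqDist_lt y (r ^ 2)).mem_nhds hx)
    fun w (hw : sqDist y w < r ^ 2) => hw.le

lemma self_mem_euclideanBall (y : Fin m → ℝ) (r : ℝ) : y ∈ euclideanBall y r := by
  simp only [euclideanBall, Set.mem_ofPred_eq, sqDist_self]; positivity

end EuclideanBall

section Polynomial

open MvPolynomial

lemma hasFDerivAt_eval_mvPolynomial {m : ℕ} (p : MvPolynomial (Fin m) ℝ) (x : Fin m → ℝ) :
    HasFDerivAt (fun x => eval x p)
      (∑ i, eval x (pderiv i p) • (ContinuousLinearMap.proj i : (Fin m → ℝ) →L[ℝ] ℝ)) x := by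
  induction p using MvPolynomial.induction_on with
  | C a => simpa using hasFDerivAt_const a x
  | add p q hp hq =>
    simp only [map_add, add_smul, Finset.sum_add_distrib]
    exact hp.add hq
  | mul_X p j hp =>
    have hX : HasFDerivAt (fun x : Fin m → ℝ => x j)
      (ContinuousLinearMap.proj j : (Fin m → ℝ) →L[ℝ] ℝ) x := hasFDerivAt_apply j x
    simp only [map_mul, eval_X]
    refine (hp.mul hX).congr_fderiv ?_
    ext w
    simp only [Derivation.leibniz, pderiv_X, Pi.single_apply, _root_.add_apply, _root_.smul_apply,
      ContinuousLinearMap.proj_apply, smul_eq_mul, _root_.sum_apply, map_add, map_mul, eval_X,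
      apply_ite (eval x), map_one, map_zero, add_mul, Finset.sum_add_distrib, Finset.mul_sum]
    simp [mul_assoc]

lemma contDiff_eval_mvPolynomial {m : ℕ} (p : MvPolynomial (Fin m) ℝ) {k : WithTop ℕ∞} :
    ContDiff ℝ k (fun x => eval x p) :=
  ((AnalyticOnNhd.eval_mvPolynomial p).contDiff).of_le le_top

variable {m : ℕ}

lemma hessianMatrix_eval (p : MvPolynomial (Fin m) ℝ) (x : Fin m → ℝ) (i j : Fin m) :
    hessianMatrix (fun x => eval x p) x i j = eval x (pderiv i (pderiv j p)) := by
  have hfderiv : ∀ (q : MvPolynomial (Fin m) ℝ) x k,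
      fderiv ℝ (fun x => eval x q) x (Pi.single k 1) = eval x (pderiv k q) := fun q x k => by
    rw [(hasFDerivAt_eval_mvPolynomial q x).fderiv]
    simp [Pi.single_apply]
  have hdiff : DifferentiableAt ℝ (fderiv ℝ (fun x => eval x p)) x :=
    ((contDiff_eval_mvPolynomial (k := 2) p).fderiv_right (m := 1) (by norm_num)).differentiable
      (by norm_num) x
  rw [hessianMatrix_apply, ← hfderiv, ← funext fun y => hfderiv p y j,
    fderiv_clm_apply hdiff (differentiableAt_const _)]
  simp

/-- The polynomial `|x - y|²`. -/
noncomputable def sqDistPoly (y : Fin m → ℝ) : MvPolynomial (Fin m) ℝ :=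
  ∑ i, (X i - C (y i)) ^ 2

lemma eval_sqDistPoly (y x : Fin m → ℝ) : eval x (sqDistPoly y) = sqDist y x := by
  simp [sqDistPoly, sqDist, dotProduct, sq]

lemma pderiv_pderiv_sqDistPoly (y : Fin m → ℝ) (i j : Fin m) :
    pderiv i (pderiv j (sqDistPoly y)) = if i = j then C 2 else 0 := by
  have hfirst : pderiv j (sqDistPoly y) = C 2 * (X j - C (y j)) := by
    simp [sqDistPoly, pderiv_X, Pi.single_apply, map_ofNat]
  rw [hfirst, pderiv_C_mul]
  by_cases h : i = j
  · subst h; simp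
  · simp [h, pderiv_X, Ne.symm h]

/-- The constant coefficient operator `∑ Bᵢⱼ ∂ᵢ∂ⱼ` on polynomials. -/
noncomputable def constCoeffOp (B : Matrix (Fin m) (Fin m) ℝ) :
    MvPolynomial (Fin m) ℝ →ₗ[ℝ] MvPolynomial (Fin m) ℝ :=
  ∑ i, ∑ j, B i j • ((pderiv i).toLinearMap ∘ₗ (pderiv j).toLinearMap)

lemma constCoeffOp_apply (B : Matrix (Fin m) (Fin m) ℝ) (p : MvPolynomial (Fin m) ℝ) :
    constCoeffOp B p = ∑ i, ∑ j, B i j • pderiv i (pderiv j p) := by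
  simp [constCoeffOp, LinearMap.sum_apply]

lemma eval_constCoeffOp (B : Matrix (Fin m) (Fin m) ℝ) (p : MvPolynomial (Fin m) ℝ)
    (x : Fin m → ℝ) :
    eval x (constCoeffOp B p) = (B * hessianMatrix (fun x => eval x p) x).trace := by
  have hsymm := isSymm_hessianMatrix (x := x) (contDiff_eval_mvPolynomial p).contDiffAt
  rw [constCoeffOp_apply, Matrix.trace]
  simp only [map_sum, smul_eval, Matrix.diag_apply, Matrix.mul_apply]
  refine Finset.sum_congr rfl fun i _ => Finset.sum_congr rfl fun j _ => ?_
  rw [← hsymm.apply, hessianMatrix_eval]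

lemma constCoeffOp_sqDistPoly (B : Matrix (Fin m) (Fin m) ℝ) (y : Fin m → ℝ) :
    constCoeffOp B (sqDistPoly y) = C (2 * B.trace) := by
  rw [constCoeffOp_apply]
  simp only [pderiv_pderiv_sqDistPoly, Matrix.trace, Matrix.diag_apply, smul_ite, smul_zero,
    Finset.sum_ite_eq, Finset.mem_univ, if_true, Finset.mul_sum, map_sum]
  refine Finset.sum_congr rfl fun i _ => ?_
  rw [smul_eq_C_mul, ← C_mul, mul_comm]

lemma sphere_of_isMaxOn_of_constCoeffOp_pos {B : Matrix (Fin m) (Fin m) ℝ} (hB : B.PosSemidef)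
    {q : MvPolynomial (Fin m) ℝ} (hq : ∀ x, 0 < eval x (constCoeffOp B q)) {y z : Fin m → ℝ}
    {r : ℝ} (hz : z ∈ euclideanBall y r)
    (hmax : IsMaxOn (fun x => eval x q) (euclideanBall y r) z) :
    z ∈ euclideanSphere y r := by
  by_contra hzs
  have hloc := hmax.isLocalMax (euclideanBall_mem_nhds (lt_of_le_of_ne hz hzs))
  have htrace := trace_mul_nonneg_of_posSemidef hB
    (posSemidef_neg_hessianMatrix_of_isLocalMax (contDiff_eval_mvPolynomial q).contDiffAt hloc)
  rw [Matrix.mul_neg, Matrix.trace_neg, ← eval_constCoeffOp] at htrace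
  linarith [hq z]

lemma eval_le_of_constCoeffOp_nonneg {B : Matrix (Fin m) (Fin m) ℝ} (hB : B.PosSemidef)
    (htr : 0 < B.trace) {p : MvPolynomial (Fin m) ℝ} (hp : ∀ x, 0 ≤ eval x (constCoeffOp B p))
    {y : Fin m → ℝ} {r : ℝ} (hr : 0 ≤ r) {M : ℝ} (hM : ∀ x ∈ euclideanSphere y r, eval x p ≤ M) :
    ∀ x ∈ euclideanBall y r, eval x p ≤ M := by
  intro x hx
  have hperturbed : ∀ ε > 0, eval x p ≤ M + ε * r ^ 2 := fun ε hε => by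
    set q := p + C ε * sqDistPoly y with hq
    have hq_eval : ∀ x, eval x q = eval x p + ε * sqDist y x := fun x => by
      simp [hq, eval_sqDistPoly]
    have hq_op : ∀ x, 0 < eval x (constCoeffOp B q) := fun x => by
      rw [hq, map_add, ← smul_eq_C_mul, map_smul, constCoeffOp_sqDistPoly, map_add, smul_eval,
        eval_C]
      have := hp x
      positivity
    obtain ⟨z, hz, hmax⟩ := (isCompact_euclideanBall y hr).exists_isMaxOn ⟨x, hx⟩
      (MvPolynomial.continuous_eval q).continuousOn
    have hzs := sphere_of_isMaxOn_of_constCoeffOp_pos hB hq_op hz hmax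
    have hxz : eval x q ≤ eval z q := hmax hx
    rw [hq_eval, hq_eval, show sqDist y z = r ^ 2 from hzs] at hxz
    linarith [hM z hzs, mul_nonneg hε.le (sqDist_nonneg y x)]
  have hlim : Tendsto (fun ε : ℝ => M + ε * r ^ 2) (nhdsWithin 0 (Set.Ioi 0)) (nhds M) := by
    have : Continuous fun ε : ℝ => M + ε * r ^ 2 := by fun_prop
    simpa using (this.tendsto 0).mono_left nhdsWithin_le_nhds
  exact ge_of_tendsto hlim (eventually_mem_nhdsWithin.mono hperturbed)

lemma totalDegree_pderiv_le {σ R : Type*} [CommSemiring R] (i : σ) (p : MvPolynomial σ R) {k : ℕ}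
    (h : p.totalDegree ≤ k + 1) : (pderiv i p).totalDegree ≤ k := by
  rw [totalDegree, Finset.sup_le_iff]
  intro s hs
  rw [mem_support_iff, coeff_pderiv] at hs
  have hle := (le_totalDegree (mem_support_iff.2 (left_ne_zero_of_mul hs))).trans h
  rw [Finsupp.sum_add_index' (fun _ => rfl) (fun _ _ _ => rfl)] at hle
  simpa using hle

lemma totalDegree_constCoeffOp_le (B : Matrix (Fin m) (Fin m) ℝ) (p : MvPolynomial (Fin m) ℝ)
    {k : ℕ} (h : p.totalDegree ≤ k + 2) : (constCoeffOp B p).totalDegree ≤ k := by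
  rw [constCoeffOp_apply]
  refine totalDegree_finsetSum_le fun i _ => totalDegree_finsetSum_le fun j _ => ?_
  exact (totalDegree_smul_le _ _).trans (totalDegree_pderiv_le _ _ (totalDegree_pderiv_le _ _ h))

lemma totalDegree_sqDistPoly_le (y : Fin m → ℝ) : (sqDistPoly y).totalDegree ≤ 2 := by
  refine totalDegree_finsetSum_le fun i _ => (totalDegree_pow _ _).trans ?_
  have hlinear : (X i - C (y i) : MvPolynomial (Fin m) ℝ).totalDegree ≤ 1 :=
    (totalDegree_sub _ _).trans (by simp)
  omega

lemma eq_zero_of_eval_eq_zero_of_mem_nhds {q : MvPolynomial (Fin m) ℝ} {y : Fin m → ℝ}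
    {s : Set (Fin m → ℝ)} (hs : s ∈ nhds y) (hq : ∀ x ∈ s, eval x q = 0) : q = 0 := by
  obtain ⟨ρ, hρ, hρs⟩ := Metric.mem_nhds_iff.1 hs
  refine funext_set (fun i => Metric.ball (y i) ρ)
    (fun i => infinite_of_mem_nhds (y i) (Metric.ball_mem_nhds (y i) hρ)) fun x hx => ?_
  rw [hq x (hρs (by rw [ball_pi _ hρ]; exact hx)), map_zero]

lemma eq_zero_of_constCoeffOp_mul_eq_zero {B : Matrix (Fin m) (Fin m) ℝ} (hB : B.PosSemidef)
    (htr : 0 < B.trace) {y : Fin m → ℝ} {r : ℝ} (hr : 0 < r) {q : MvPolynomial (Fin m) ℝ}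
    (hq : constCoeffOp B ((C (r ^ 2) - sqDistPoly y) * q) = 0) : q = 0 := by
  set φ : MvPolynomial (Fin m) ℝ := C (r ^ 2) - sqDistPoly y with hφ
  have hφ_eval : ∀ x, eval x φ = r ^ 2 - sqDist y x := fun x => by simp [hφ, eval_sqDistPoly]
  have hφ_sphere : ∀ x ∈ euclideanSphere y r, eval x φ = 0 := fun x hx => by
    rw [hφ_eval, show sqDist y x = r ^ 2 from hx, sub_self]
  have hle := eval_le_of_constCoeffOp_nonneg hB htr (p := φ * q) (y := y) (M := 0)
    (fun x => by rw [hq, map_zero]) hr.le fun x hx => by simp [hφ_sphere x hx]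
  have hge := eval_le_of_constCoeffOp_nonneg hB htr (p := -(φ * q)) (y := y) (M := 0)
    (fun x => by rw [map_neg, hq, neg_zero, map_zero]) hr.le fun x hx => by simp [hφ_sphere x hx]
  refine eq_zero_of_eval_eq_zero_of_mem_nhds ((isOpen_setOf_sqDist_lt y (r ^ 2)).mem_nhds
    (show sqDist y y < r ^ 2 by rw [sqDist_self]; positivity)) fun x (hx : sqDist y x < r ^ 2) => ?_
  have hx_ball : x ∈ euclideanBall y r := hx.le
  have hprod : eval x φ * eval x q = 0 := by
    rw [← map_mul]
    exact le_antisymm (hle x hx_ball) (by simpa only [map_neg, neg_nonpos] using hge x hx_ball)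
  refine (mul_eq_zero.1 hprod).resolve_left ?_
  rw [hφ_eval]
  exact (sub_pos.2 hx).ne'

-- With `φ = r² - |x - y|²`, the map `q ↦ L(φ q)` preserves the polynomials of degree at most
-- `deg p` and is injective by the maximum principle, hence surjective.
lemma exists_constCoeffOp_eq_zero_of_sphere {B : Matrix (Fin m) (Fin m) ℝ} (hB : B.PosSemidef)
    (htr : 0 < B.trace) (y : Fin m → ℝ) {r : ℝ} (hr : 0 < r) (p : MvPolynomial (Fin m) ℝ) :
    ∃ h : MvPolynomial (Fin m) ℝ,
      constCoeffOp B h = 0 ∧ ∀ x ∈ euclideanSphere y r, eval x h = eval x p := by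
  set φ : MvPolynomial (Fin m) ℝ := C (r ^ 2) - sqDistPoly y with hφ
  have hφ_degree : φ.totalDegree ≤ 2 := by
    refine (totalDegree_sub _ _).trans ?_
    rw [totalDegree_C]
    simpa using totalDegree_sqDistPoly_le y
  set V := restrictTotalDegree (Fin m) ℝ p.totalDegree with hV
  have hmap : ∀ q ∈ V, (constCoeffOp B ∘ₗ LinearMap.mulLeft ℝ φ) q ∈ V := fun q hq => by
    rw [hV, mem_restrictTotalDegree] at *
    exact totalDegree_constCoeffOp_le B _ ((totalDegree_mul _ _).trans (by omega))
  set T : V →ₗ[ℝ] V := (constCoeffOp B ∘ₗ LinearMap.mulLeft ℝ φ).restrict hmap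
  have hT_inj : Function.Injective T := by
    rw [← LinearMap.ker_eq_bot, LinearMap.ker_eq_bot']
    exact fun q hq => Subtype.ext
      (eq_zero_of_constCoeffOp_mul_eq_zero hB htr hr (congrArg Subtype.val hq))
  obtain ⟨⟨s, _⟩, hTs⟩ := LinearMap.injective_iff_surjective.1 hT_inj
    ⟨constCoeffOp B p, by
      rw [hV, mem_restrictTotalDegree]; exact totalDegree_constCoeffOp_le B p (by omega)⟩
  have hs : constCoeffOp B (φ * s) = constCoeffOp B p := congrArg Subtype.val hTs
  refine ⟨p - φ * s, by rw [map_sub, hs, sub_self], fun x hx => ?_⟩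
  have hφx : eval x φ = 0 := by
    rw [hφ, map_sub, eval_C, eval_sqDistPoly, show sqDist y x = r ^ 2 from hx, sub_self]
  rw [map_sub, map_mul, hφx, zero_mul, sub_zero]

lemma exists_mvPolynomial_abs_eval_sub_lt {K : Set (Fin m → ℝ)} (hK : IsCompact K)
    {f : (Fin m → ℝ) → ℝ} (hf : ContinuousOn f K) {ε : ℝ} (hε : 0 < ε) :
    ∃ p : MvPolynomial (Fin m) ℝ, ∀ x ∈ K, |eval x p - f x| < ε := by
  have : CompactSpace K := isCompact_iff_compactSpace.1 hK
  set Φ : MvPolynomial (Fin m) ℝ →ₐ[ℝ] C(K, ℝ) := aeval fun i =>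
    (⟨fun x => x.1 i, (continuous_apply i).comp continuous_subtype_val⟩ : C(K, ℝ)) with hΦ
  have hΦ_apply : ∀ p (x : K), Φ p x = eval x.1 p := fun p x => by
    induction p using MvPolynomial.induction_on with
    | C a => simp [hΦ]
    | add p q hp hq => simp [hp, hq]
    | mul_X p j hp => rw [map_mul, ContinuousMap.mul_apply, hp]; simp [hΦ]
  have hsep : Φ.range.SeparatesPoints := fun x y hxy => by
    obtain ⟨i, hi⟩ := Function.ne_iff.1 (Subtype.coe_ne_coe.2 hxy)
    exact ⟨Φ (X i), ⟨Φ (X i), ⟨X i, rfl⟩, rfl⟩, by simpa [hΦ_apply] using hi⟩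
  obtain ⟨⟨_, p, rfl⟩, hp⟩ := ContinuousMap.exists_mem_subalgebra_near_continuous_of_separatesPoints
    Φ.range hsep (fun x : K => f x.1) (continuousOn_iff_continuous_domRestrict.1 hf) ε hε
  refine ⟨p, fun x hx => ?_⟩
  rw [← hΦ_apply p ⟨x, hx⟩, ← Real.norm_eq_abs]
  exact hp ⟨x, hx⟩

/-- The quadratic polynomial `b + ℓ (x - y) + ½ (x - y)ᵀ H (x - y)`. -/
noncomputable def quadPoly (b : ℝ) (ℓ : (Fin m → ℝ) →ₗ[ℝ] ℝ) (H : Matrix (Fin m) (Fin m) ℝ)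
    (y : Fin m → ℝ) : MvPolynomial (Fin m) ℝ :=
  C b + ∑ k, C (ℓ (Pi.single k 1)) * (X k - C (y k)) +
    C (1 / 2) * ∑ k, ∑ l, C (H k l) * ((X k - C (y k)) * (X l - C (y l)))

lemma eval_quadPoly (b : ℝ) (ℓ : (Fin m → ℝ) →ₗ[ℝ] ℝ) (H : Matrix (Fin m) (Fin m) ℝ)
    (y x : Fin m → ℝ) :
    eval x (quadPoly b ℓ H y) = b + ℓ (x - y) + (1 / 2) * ((x - y) ⬝ᵥ H *ᵥ (x - y)) := by
  have hlin : ∑ k, ℓ (Pi.single k 1) * (x k - y k) = ℓ (x - y) := by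
    conv_rhs => rw [pi_eq_sum_univ' (x - y), map_sum]
    exact Finset.sum_congr rfl fun k _ => by rw [map_smul, smul_eq_mul, mul_comm, Pi.sub_apply]
  simp only [quadPoly, map_add, map_mul, eval_C, map_sum, map_sub, eval_X, hlin, dotProduct,
    Matrix.mulVec, Finset.mul_sum, Pi.sub_apply]
  congr 1
  refine Finset.sum_congr rfl fun k _ => Finset.sum_congr rfl fun l _ => ?_
  ring

lemma pderiv_quadPoly (b : ℝ) (ℓ : (Fin m → ℝ) →ₗ[ℝ] ℝ) {H : Matrix (Fin m) (Fin m) ℝ}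
    (hH : H.IsSymm) (y : Fin m → ℝ) (j : Fin m) :
    pderiv j (quadPoly b ℓ H y) = C (ℓ (Pi.single j 1)) + ∑ k, C (H j k) * (X k - C (y k)) := by
  have hhalf : ∀ p : MvPolynomial (Fin m) ℝ, C (1 / 2) * (p + p) = p := fun p => by
    rw [← two_mul, ← mul_assoc, ← map_ofNat C 2, ← C_mul]
    simp
  have hmul : ∀ k l, pderiv j (C (H k l) * ((X k - C (y k)) * (X l - C (y l)))) =
      (if k = j then C (H j l) * (X l - C (y l)) else 0) +
        if l = j then C (H j k) * (X k - C (y k)) else 0 := fun k l => by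
    rw [pderiv_C_mul, Derivation.leibniz, map_sub, map_sub, pderiv_C, pderiv_C, sub_zero, sub_zero,
      pderiv_X, pderiv_X, Pi.single_apply, Pi.single_apply]
    split_ifs with hk hl hl <;> subst_vars <;> simp [hH.apply, mul_add, add_comm]
  simp only [quadPoly, map_add, map_sum, pderiv_C_mul, pderiv_C, zero_add, hmul,
    Finset.sum_add_distrib, map_sub, pderiv_X, sub_zero]
  have hlin : ∑ k, C (ℓ (Pi.single k 1)) * Pi.single (M := fun _ => MvPolynomial (Fin m) ℝ) j 1 k =
      (C (ℓ (Pi.single j 1)) : MvPolynomial (Fin m) ℝ) := by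
    simp [Pi.single_apply]
  have hquad : ∑ k, ∑ l, (if k = j then C (H j l) * (X l - C (y l)) else 0) =
      (∑ l, C (H j l) * (X l - C (y l)) : MvPolynomial (Fin m) ℝ) := by
    rw [Finset.sum_comm]
    simp
  rw [hlin, hquad]
  simp only [Finset.sum_ite_eq', Finset.mem_univ, if_true, hhalf]

lemma hessianMatrix_quadPoly (b : ℝ) (ℓ : (Fin m → ℝ) →ₗ[ℝ] ℝ) {H : Matrix (Fin m) (Fin m) ℝ}
    (hH : H.IsSymm) (y x : Fin m → ℝ) :
    hessianMatrix (fun x => eval x (quadPoly b ℓ H y)) x = H := by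
  ext i j
  rw [hessianMatrix_eval, pderiv_quadPoly b ℓ hH, ← hH.apply]
  simp [pderiv_X, Pi.single_apply]

end Polynomial

/-! ### Comparison and penalization for functions of type `F` -/

section Penalization

variable {m : ℕ}

lemma hessianMatrix_neg (v : (Fin m → ℝ) → ℝ) (x : Fin m → ℝ) :
    hessianMatrix (fun x => -v x) x = -hessianMatrix v x := by
  ext i j
  rw [neg_apply, hessianMatrix, hessianMatrix, of_apply, of_apply, ← Pi.neg_def, iteratedFDeriv_neg]
  rfl

lemma IsTypeF.le_of_le_frontier {G : Set (Matrix (Fin m) (Fin m) ℝ)} {U K : Set (Fin m → ℝ)}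
    {V : (Fin m → ℝ) → EReal} (hV : IsTypeF G U V) {Ψ : (Fin m → ℝ) → ℝ} (hΨ : ContDiff ℝ 2 Ψ)
    (hΨG : ∀ x ∈ U, hessianMatrix Ψ x ∉ G) (hK : IsCompact K) (hKU : K ⊆ U)
    (hfr : ∀ x ∈ frontier K, V x ≤ (Ψ x : EReal)) : ∀ x ∈ K, V x ≤ (Ψ x : EReal) := by
  have hdual : ∀ x ∈ U, hessianMatrix (fun x => -Ψ x) x ∈ dualSub G := fun x hx => by
    rw [hessianMatrix_neg]
    exact mem_dualSub_of_neg_notMem (isSymm_hessianMatrix hΨ.contDiffAt).neg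
      ((neg_neg (hessianMatrix Ψ x)).symm ▸ hΨG x hx)
  have hsub := hV.2.2 (fun x => -Ψ x) hΨ.neg.contDiffOn hdual 0 K hK hKU
  have hiff : ∀ x, V x + ((-Ψ x : ℝ) : EReal) ≤ (((0 : (Fin m → ℝ) →ᵃ[ℝ] ℝ) x : ℝ) : EReal) ↔
      V x ≤ (Ψ x : EReal) := fun x => by
    rw [EReal.coe_neg, ← sub_eq_add_neg,
      EReal.sub_le_iff_le_add (.inl (EReal.coe_ne_bot _)) (.inl (EReal.coe_ne_top _))]
    simp
  simpa only [hiff] using hsub (by simpa only [hiff] using hfr)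

lemma exists_eventually_le_add_mul {S : Set (Fin m → ℝ)} {V : (Fin m → ℝ) → EReal}
    {Ψ ρ : (Fin m → ℝ) → ℝ} (hΨ : Continuous Ψ) (hρ : Continuous ρ) {x : Fin m → ℝ}
    (hV : UpperSemicontinuousWithinAt V S x) (htop : V x ≠ ⊤) (hρx : 0 ≤ ρ x)
    (hlt : ρ x = 0 → V x < (Ψ x : EReal)) :
    ∃ N : ℝ, 0 < N ∧ ∀ᶠ w in nhdsWithin x S, V w ≤ ((Ψ w + N * ρ w : ℝ) : EReal) := by
  obtain ⟨N, hN, hltN⟩ : ∃ N : ℝ, 0 < N ∧ V x < ((Ψ x + N * ρ x : ℝ) : EReal) := by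
    rcases hρx.eq_or_lt with h | h
    · exact ⟨1, one_pos, by simpa [← h] using hlt h.symm⟩
    · obtain ⟨b, hb, -⟩ := EReal.lt_iff_exists_real_btwn.1 htop.lt_top
      have htends : Tendsto (fun N : ℝ => Ψ x + N * ρ x) atTop atTop :=
        tendsto_atTop_add_const_left _ _ (tendsto_id.atTop_mul_const h)
      obtain ⟨N, hbN, hN⟩ := ((htends.eventually_gt_atTop b).and (eventually_gt_atTop 0)).exists
      exact ⟨N, hN, hb.trans (EReal.coe_lt_coe_iff.2 hbN)⟩
  obtain ⟨b, hVb, hb⟩ := EReal.lt_iff_exists_real_btwn.1 hltN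
  have hcont : Continuous fun w => Ψ w + N * ρ w := by fun_prop
  have hb' : ∀ᶠ w in nhdsWithin x S, b < Ψ w + N * ρ w :=
    (hcont.continuousAt.eventually (lt_mem_nhds (EReal.coe_lt_coe_iff.1 hb))).filter_mono
      nhdsWithin_le_nhds
  refine ⟨N, hN, ?_⟩
  filter_upwards [hV b hVb, hb'] with w hw hw'
  exact hw.le.trans (EReal.coe_le_coe_iff.2 hw'.le)

lemma exists_le_add_mul_of_isCompact {S : Set (Fin m → ℝ)} (hS : IsCompact S)
    {V : (Fin m → ℝ) → EReal} (hV : UpperSemicontinuousOn V S) (htop : ∀ x ∈ S, V x ≠ ⊤)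
    {Ψ ρ : (Fin m → ℝ) → ℝ} (hΨ : Continuous Ψ) (hρ : Continuous ρ) (hρ_nonneg : ∀ x, 0 ≤ ρ x)
    (hlt : ∀ x ∈ S, ρ x = 0 → V x < (Ψ x : EReal)) :
    ∃ N : ℝ, 0 < N ∧ ∀ x ∈ S, V x ≤ ((Ψ x + N * ρ x : ℝ) : EReal) := by
  refine hS.induction_on (p := fun T => ∃ N : ℝ, 0 < N ∧ ∀ x ∈ T,
    V x ≤ ((Ψ x + N * ρ x : ℝ) : EReal)) ⟨1, one_pos, by simp⟩
    (fun T T' hTT' ⟨N, hN, h⟩ => ⟨N, hN, fun x hx => h x (hTT' hx)⟩) ?_ fun x hx => ?_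
  · rintro T T' ⟨N, hN, h⟩ ⟨M, -, h'⟩
    refine ⟨max N M, lt_max_of_lt_left hN, ?_⟩
    rintro x (hx | hx)
    · refine (h x hx).trans (EReal.coe_le_coe_iff.2 ?_)
      gcongr
      exacts [hρ_nonneg x, le_max_left N M]
    · refine (h' x hx).trans (EReal.coe_le_coe_iff.2 ?_)
      gcongr
      exacts [hρ_nonneg x, le_max_right N M]
  · obtain ⟨N, hN, h⟩ := exists_eventually_le_add_mul hΨ hρ (hV x hx) (htop x hx) (hρ_nonneg x)
      (hlt x hx)
    exact ⟨_, h, N, hN, fun w hw => hw⟩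

lemma IsTypeF.le_of_penalized {G : Set (Matrix (Fin m) (Fin m) ℝ)} {U K : Set (Fin m → ℝ)}
    {V : (Fin m → ℝ) → EReal} (hV : IsTypeF G U V) (hK : IsCompact K) (hKU : K ⊆ U)
    {Ψ ρ : (Fin m → ℝ) → ℝ} (hΨ : ContDiff ℝ 2 Ψ) (hρ : ContDiff ℝ 2 ρ) (hρ_nonneg : ∀ x, 0 ≤ ρ x)
    (hG : ∀ N : ℝ, 0 < N → ∀ x ∈ U, hessianMatrix (fun x => Ψ x + N * ρ x) x ∉ G)
    (hfr : ∀ x ∈ frontier K, ρ x = 0 → V x < (Ψ x : EReal)) {x : Fin m → ℝ} (hx : x ∈ K)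
    (hρx : ρ x = 0) : V x ≤ (Ψ x : EReal) := by
  have hfrK : frontier K ⊆ K := hK.isClosed.frontier_subset
  obtain ⟨N, hN, hle⟩ := exists_le_add_mul_of_isCompact
    (hK.of_isClosed_subset isClosed_frontier hfrK) (hV.2.1.mono (hfrK.trans hKU))
    (fun x hx => hV.1 x (hKU (hfrK hx))) hΨ.continuous hρ.continuous hρ_nonneg hfr
  simpa [hρx] using hV.le_of_le_frontier (hΨ.add (contDiff_const.mul hρ)) (hG N hN) hK hKU hle x hx

end Penalization

/-! ### Convexity along segments -/

section Segment

variable {m : ℕ}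

/-- The affine parameter of the orthogonal projection of `x` onto the line through `y` and `z`;
it is `0` at `y` and `1` at `z`. -/
noncomputable def lineParam (y z x : Fin m → ℝ) : ℝ := ((z - y) ⬝ᵥ (x - y)) / sqDist y z

/-- The squared Euclidean distance of `x` to the line through `y` and `z`. -/
noncomputable def sqDistLine (y z x : Fin m → ℝ) : ℝ :=
  sqDist (y + lineParam y z x • (z - y)) x

lemma contDiff_lineParam (y z : Fin m → ℝ) : ContDiff ℝ 2 (lineParam y z) := by
  unfold lineParam dotProduct
  fun_prop

lemma contDiff_sqDistLine (y z : Fin m → ℝ) : ContDiff ℝ 2 (sqDistLine y z) := by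
  have h := contDiff_lineParam y z
  unfold sqDistLine sqDist dotProduct
  fun_prop

lemma lineParam_add_smul {y z : Fin m → ℝ} (hyz : y ≠ z) (s : ℝ) :
    lineParam y z (y + s • (z - y)) = s := by
  rw [lineParam, add_sub_cancel_left, dotProduct_smul, smul_eq_mul]
  exact mul_div_cancel_right₀ s (sqDist_pos hyz.symm).ne'

lemma sqDistLine_add_smul {y z : Fin m → ℝ} (hyz : y ≠ z) (s : ℝ) :
    sqDistLine y z (y + s • (z - y)) = 0 := by
  rw [sqDistLine, lineParam_add_smul hyz, sqDist_self]

lemma sqDistLine_eq {y z : Fin m → ℝ} (hyz : y ≠ z) (x : Fin m → ℝ) :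
    sqDistLine y z x = sqDist y x - sqDist y z * lineParam y z x ^ 2 := by
  have hproj : (z - y) ⬝ᵥ (x - y) = lineParam y z x * sqDist y z :=
    (div_mul_cancel₀ _ (sqDist_pos hyz.symm).ne').symm
  rw [sqDistLine, sqDist, ← sub_sub, sub_dotProduct _ (_ • _), dotProduct_sub _ _ (_ • _),
    dotProduct_sub _ _ (_ • _), smul_dotProduct, smul_dotProduct, dotProduct_smul, dotProduct_smul,
    dotProduct_comm (x - y) (z - y), hproj]
  simp only [sqDist, smul_eq_mul]
  ring

lemma lineParam_left (y z : Fin m → ℝ) : lineParam y z y = 0 := by simp [lineParam]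

lemma lineParam_right {y z : Fin m → ℝ} (hyz : y ≠ z) : lineParam y z z = 1 := by
  simpa using lineParam_add_smul hyz 1

lemma eq_of_sqDistLine_eq_zero {y z x : Fin m → ℝ} (h : sqDistLine y z x = 0) :
    x = y + lineParam y z x • (z - y) := by
  by_contra hne
  exact (sqDist_pos hne).ne' h

/-- The points at distance at most `η` from the line through `y` and `z` whose projection to this
line lies in the segment from `y` to `z`. -/
def segmentTube (y z : Fin m → ℝ) (η : ℝ) : Set (Fin m → ℝ) :=
  {x | 0 ≤ lineParam y z x ∧ lineParam y z x ≤ 1 ∧ sqDistLine y z x ≤ η ^ 2}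

lemma segmentTube_subset_cthickening (y z : Fin m → ℝ) {η : ℝ} (hη : 0 ≤ η) :
    segmentTube y z η ⊆ Metric.cthickening η (segment ℝ y z) := by
  rintro x ⟨h0, h1, hx⟩
  refine Metric.mem_cthickening_of_dist_le x (y + lineParam y z x • (z - y)) η _ ?_
    (euclideanBall_subset_closedBall hη hx)
  rw [segment_eq_image']
  exact ⟨lineParam y z x, ⟨h0, h1⟩, rfl⟩

lemma isCompact_segment (y z : Fin m → ℝ) : IsCompact (segment ℝ y z) := by
  rw [segment_eq_image']
  exact isCompact_Icc.image (by fun_prop)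

lemma isCompact_segmentTube (y z : Fin m → ℝ) {η : ℝ} (hη : 0 ≤ η) :
    IsCompact (segmentTube y z η) := by
  have hσ := (contDiff_lineParam y z).continuous
  exact (isCompact_segment y z).cthickening.of_isClosed_subset
    ((isClosed_le continuous_const hσ).inter ((isClosed_le hσ continuous_const).inter
      (isClosed_le (contDiff_sqDistLine y z).continuous continuous_const)))
    (segmentTube_subset_cthickening y z hη)

lemma eq_or_eq_of_mem_frontier_segmentTube {y z x : Fin m → ℝ} {η : ℝ} (hη : 0 < η)
    (hx : x ∈ frontier (segmentTube y z η)) (hx0 : sqDistLine y z x = 0) : x = y ∨ x = z := by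
  have hσ := (contDiff_lineParam y z).continuous.continuousAt (x := x)
  have hρ := (contDiff_sqDistLine y z).continuous.continuousAt (x := x)
  obtain ⟨h0, h1, -⟩ := (isCompact_segmentTube y z hη.le).isClosed.frontier_subset hx
  suffices lineParam y z x = 0 ∨ lineParam y z x = 1 by
    refine this.imp (fun h => ?_) fun h => ?_ <;> simpa [h] using eq_of_sqDistLine_eq_zero hx0
  by_contra! hne
  refine hx.2 (mem_interior_iff_mem_nhds.2 ?_)
  filter_upwards [hσ.eventually (lt_mem_nhds (h0.lt_of_ne' hne.1)),
    hσ.eventually (gt_mem_nhds (h1.lt_of_ne hne.2)),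
    hρ.eventually (gt_mem_nhds (hx0.trans_lt (sq_pos_of_pos hη)))] with w hw0 hw1 hw
  exact ⟨hw0.le, hw1.le, hw.le⟩

lemma hessianMatrix_penalized_segment {y z : Fin m → ℝ} (hyz : y ≠ z) (a b ε N : ℝ)
    (x : Fin m → ℝ) :
    hessianMatrix (fun x => a + b * lineParam y z x - ε * lineParam y z x ^ 2 +
      N * sqDistLine y z x) x =
      (2 * N) • (1 : Matrix (Fin m) (Fin m) ℝ) -
        (2 * (ε + N * sqDist y z) / sqDist y z ^ 2) • vecMulVec (z - y) (z - y) := by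
  set H : Matrix (Fin m) (Fin m) ℝ := (2 * N) • 1 -
    (2 * (ε + N * sqDist y z) / sqDist y z ^ 2) • vecMulVec (z - y) (z - y) with hHdef
  have hH : H.IsSymm := by
    simp [hHdef, IsSymm, transpose_sub, transpose_smul, transpose_vecMulVec]
  have hquad : (fun x => a + b * lineParam y z x - ε * lineParam y z x ^ 2 +
      N * sqDistLine y z x) = fun x => MvPolynomial.eval x
        (quadPoly a ((b / sqDist y z) • dotProductBilin ℝ ℝ (z - y)) H y) := by
    ext x
    have hnorm : (x - y) ⬝ᵥ (x - y) = sqDist y x := rfl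
    rw [eval_quadPoly, LinearMap.smul_apply, hHdef, sub_mulVec, smul_mulVec, smul_mulVec,
      one_mulVec, dotProduct_sub, dotProduct_smul, dotProduct_smul, vecMulVec_mulVec, hnorm,
      sqDistLine_eq hyz, lineParam, dotProductBilin_apply_apply, op_smul_eq_smul, dotProduct_smul,
      dotProduct_comm (x - y) (z - y)]
    simp only [smul_eq_mul]
    field_simp [(sqDist_pos hyz.symm).ne']
    ring
  rw [hquad, hessianMatrix_quadPoly _ _ hH]

lemma dotProduct_hessianMatrix_penalized_segment {y z : Fin m → ℝ} (hyz : y ≠ z) (a b ε N : ℝ)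
    (x : Fin m → ℝ) :
    (z - y) ⬝ᵥ hessianMatrix (fun x => a + b * lineParam y z x - ε * lineParam y z x ^ 2 +
      N * sqDistLine y z x) x *ᵥ (z - y) = -2 * ε := by
  have hnorm : (z - y) ⬝ᵥ (z - y) = sqDist y z := rfl
  rw [hessianMatrix_penalized_segment hyz, sub_mulVec, smul_mulVec, smul_mulVec, one_mulVec,
    dotProduct_sub, dotProduct_smul, dotProduct_smul, vecMulVec_mulVec, op_smul_eq_smul,
    dotProduct_smul, hnorm]
  simp only [smul_eq_mul]
  field_simp [(sqDist_pos hyz.symm).ne']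
  ring

lemma IsTypeF.le_add_two_mul_of_segment {G : Set (Matrix (Fin m) (Fin m) ℝ)} {U : Set (Fin m → ℝ)}
    (hU : IsOpen U) {V : (Fin m → ℝ) → EReal} (hV : IsTypeF G U V) {y z : Fin m → ℝ} (hyz : y ≠ z)
    (hseg : segment ℝ y z ⊆ U)
    (hG : ∀ A : Matrix (Fin m) (Fin m) ℝ, A.IsSymm → (z - y) ⬝ᵥ A *ᵥ (z - y) < 0 → A ∉ G)
    {α β : ℝ} (hα : V y ≤ (α : EReal)) (hβ : V z ≤ (β : EReal)) {s : ℝ} (hs : s ∈ Set.Icc (0 : ℝ) 1)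
    {ε : ℝ} (hε : 0 < ε) :
    V (y + s • (z - y)) ≤ ((α + s * (β - α) + 2 * ε : ℝ) : EReal) := by
  obtain ⟨η, hη, hηU⟩ := (isCompact_segment y z).exists_cthickening_subset_open hU hseg
  have hσ := contDiff_lineParam y z
  have hρ := contDiff_sqDistLine y z
  set Ψ : (Fin m → ℝ) → ℝ :=
    fun x => (α + 2 * ε) + (β - α) * lineParam y z x - ε * lineParam y z x ^ 2 with hΨdef
  have hΨ : ContDiff ℝ 2 Ψ := by fun_prop
  have hcurv : ∀ N : ℝ, 0 < N → ∀ x ∈ U,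
      hessianMatrix (fun x => Ψ x + N * sqDistLine y z x) x ∉ G := fun N _ x _ => by
    refine hG _ (isSymm_hessianMatrix (hΨ.add (contDiff_const.mul hρ)).contDiffAt) ?_
    rw [dotProduct_hessianMatrix_penalized_segment hyz]
    linarith
  have hends : ∀ x ∈ frontier (segmentTube y z η), sqDistLine y z x = 0 → V x < (Ψ x : EReal) := by
    intro x hx hx0
    rcases eq_or_eq_of_mem_frontier_segmentTube hη hx hx0 with rfl | rfl
    · refine hα.trans_lt (EReal.coe_lt_coe_iff.2 ?_)
      rw [hΨdef]; dsimp only; rw [lineParam_left]; linarith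
    · refine hβ.trans_lt (EReal.coe_lt_coe_iff.2 ?_)
      rw [hΨdef]; dsimp only; rw [lineParam_right hyz]; linarith
  have hmem : y + s • (z - y) ∈ segmentTube y z η := by
    rw [segmentTube, Set.mem_ofPred_eq, lineParam_add_smul hyz, sqDistLine_add_smul hyz]
    exact ⟨hs.1, hs.2, sq_nonneg η⟩
  refine (hV.le_of_penalized (isCompact_segmentTube y z hη.le)
    ((segmentTube_subset_cthickening y z hη.le).trans hηU) hΨ hρ (fun x => sqDist_nonneg _ x)
    hcurv hends hmem (sqDistLine_add_smul hyz s)).trans (EReal.coe_le_coe_iff.2 ?_)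
  simp only [hΨdef, lineParam_add_smul hyz]
  nlinarith [mul_nonneg hε.le (sq_nonneg s)]

lemma IsTypeF.le_of_segment {G : Set (Matrix (Fin m) (Fin m) ℝ)} {U : Set (Fin m → ℝ)}
    (hU : IsOpen U) {V : (Fin m → ℝ) → EReal} (hV : IsTypeF G U V) {y z : Fin m → ℝ} (hyz : y ≠ z)
    (hseg : segment ℝ y z ⊆ U)
    (hG : ∀ A : Matrix (Fin m) (Fin m) ℝ, A.IsSymm → (z - y) ⬝ᵥ A *ᵥ (z - y) < 0 → A ∉ G)
    {α β : ℝ} (hα : V y ≤ (α : EReal)) (hβ : V z ≤ (β : EReal)) {s : ℝ}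
    (hs : s ∈ Set.Icc (0 : ℝ) 1) :
    V (y + s • (z - y)) ≤ ((α + s * (β - α) : ℝ) : EReal) := by
  refine EReal.le_of_forall_lt_iff_le.1 fun b hb => ?_
  have hb' := sub_pos.2 (EReal.coe_lt_coe_iff.1 hb)
  convert hV.le_add_two_mul_of_segment hU hyz hseg hG hα hβ hs (half_pos hb') using 2
  ring

end Segment

/-! ### The minimum principle for the partial infimum -/

section Cylinder

variable {n : ℕ}

/-- The open cylinder `(0, 1) × D`, in the coordinates `Fin.cons t x`. -/
def openCylinder (D : Set (Fin n → ℝ)) : Set (Fin (n + 1) → ℝ) :=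
  {y | y 0 ∈ Set.Ioo (0 : ℝ) 1 ∧ Fin.tail y ∈ D}

lemma continuous_finTail : Continuous fun y : Fin (n + 1) → ℝ => (Fin.tail y : Fin n → ℝ) :=
  continuous_pi fun _ => continuous_apply _

lemma continuous_finCons :
    Continuous fun p : ℝ × (Fin n → ℝ) => (Fin.cons p.1 p.2 : Fin (n + 1) → ℝ) :=
  Continuous.finCons (A := fun _ => ℝ) continuous_fst continuous_snd

lemma isOpen_openCylinder {D : Set (Fin n → ℝ)} (hD : IsOpen D) : IsOpen (openCylinder D) :=
  (isOpen_Ioo.preimage (continuous_apply 0)).inter (hD.preimage continuous_finTail)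

lemma cons_mem_openCylinder {D : Set (Fin n → ℝ)} {s : ℝ} {x : Fin n → ℝ} :
    (Fin.cons s x : Fin (n + 1) → ℝ) ∈ openCylinder D ↔ s ∈ Set.Ioo (0 : ℝ) 1 ∧ x ∈ D :=
  Iff.rfl

lemma cons_add_smul_cons_sub_cons (s t : ℝ) (x : Fin n → ℝ) (b : ℝ) :
    (Fin.cons s x : Fin (n + 1) → ℝ) + b • ((Fin.cons t x : Fin (n + 1) → ℝ) - Fin.cons s x) =
      Fin.cons (s + b * (t - s)) x := by
  ext i
  refine Fin.cases ?_ (fun j => ?_) i <;> simp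

lemma cons_sub_cons_self (s t : ℝ) (x : Fin n → ℝ) :
    (Fin.cons t x : Fin (n + 1) → ℝ) - Fin.cons s x = Pi.single 0 (t - s) := by
  ext i
  refine Fin.cases ?_ (fun j => ?_) i <;> simp

lemma convexOn_of_isTypeF_calF {c : ℝ} (hc : n * (π / 2) ≤ c) {D : Set (Fin n → ℝ)}
    (hD : IsOpen D) {u : (Fin (n + 1) → ℝ) → ℝ}
    (hu : IsTypeF (calF n c) (openCylinder D) fun y => (u y : EReal)) {x : Fin n → ℝ} (hx : x ∈ D) :
    ConvexOn ℝ (Set.Ioo 0 1) fun t => u (Fin.cons t x) := by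
  refine ⟨convex_Ioo 0 1, fun s hs t ht a b ha hb hab => ?_⟩
  have hcomb : ∀ p q : ℝ, a • p + b • q = p + b * (q - p) := fun p q => by
    rw [eq_sub_of_add_eq hab, smul_eq_mul, smul_eq_mul]; ring
  simp only [hcomb]
  rcases eq_or_ne s t with rfl | hst
  · simp
  have hseg : segment ℝ (Fin.cons s x : Fin (n + 1) → ℝ) (Fin.cons t x) ⊆ openCylinder D := by
    rw [segment_eq_image']
    rintro _ ⟨b, hb, rfl⟩
    dsimp only
    rw [cons_add_smul_cons_sub_cons, cons_mem_openCylinder]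
    exact ⟨by simpa using (convex_Ioo (0 : ℝ) 1).add_smul_sub_mem hs ht hb, hx⟩
  have hG : ∀ A : Matrix (Fin (n + 1)) (Fin (n + 1)) ℝ, A.IsSymm →
      ((Fin.cons t x : Fin (n + 1) → ℝ) - Fin.cons s x) ⬝ᵥ
        A *ᵥ ((Fin.cons t x : Fin (n + 1) → ℝ) - Fin.cons s x) < 0 → A ∉ calF n c := by
    intro A _ hA
    rw [cons_sub_cons_self, single_dotProduct, mulVec_single] at hA
    refine notMem_calF_of_neg hc (not_le.1 fun h => hA.not_ge ?_)
    simp only [Pi.smul_apply, col_apply, MulOpposite.smul_eq_mul_unop, MulOpposite.unop_op]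
    nlinarith [mul_nonneg h (sq_nonneg (t - s))]
  have hle := hu.le_of_segment (isOpen_openCylinder hD)
    (fun h => hst (by simpa using congrFun h 0)) hseg hG le_rfl le_rfl
    (s := b) ⟨hb, by linarith⟩
  rw [cons_add_smul_cons_sub_cons] at hle
  exact EReal.coe_le_coe_iff.1 hle

end Cylinder

section Graph

open MvPolynomial

variable {n : ℕ}

lemma pderiv_zero_rename_succ (p : MvPolynomial (Fin n) ℝ) :
    pderiv (0 : Fin (n + 1)) (rename Fin.succ p) = 0 :=
  pderiv_eq_zero_of_notMem_vars fun h =>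
    let ⟨i, _, hi⟩ := mem_vars_rename _ _ h
    Fin.succ_ne_zero i hi

lemma eval_rename_succ (p : MvPolynomial (Fin n) ℝ) (y : Fin (n + 1) → ℝ) :
    eval y (rename Fin.succ p) = eval (Fin.tail y) p :=
  eval_rename ..

/-- The polynomial `q(x) + τ t + N (t - h(x))²` in the variables `(t, x)`: the test function
`q(x) + τ t` with a penalty for leaving the graph `t = h(x)`. -/
noncomputable def graphPoly (q h : MvPolynomial (Fin n) ℝ) (τ N : ℝ) :
    MvPolynomial (Fin (n + 1)) ℝ :=
  rename Fin.succ q + C τ * X 0 + C N * (X 0 - rename Fin.succ h) ^ 2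

lemma eval_graphPoly (q h : MvPolynomial (Fin n) ℝ) (τ N : ℝ) (y : Fin (n + 1) → ℝ) :
    eval y (graphPoly q h τ N) =
      eval (Fin.tail y) q + τ * y 0 + N * (y 0 - eval (Fin.tail y) h) ^ 2 := by
  simp [graphPoly, eval_rename_succ]

lemma pderiv_zero_graphPoly (q h : MvPolynomial (Fin n) ℝ) (τ N : ℝ) :
    pderiv 0 (graphPoly q h τ N) = C τ + C (2 * N) * (X 0 - rename Fin.succ h) := by
  simp only [graphPoly, map_add, pderiv_C_mul, pderiv_pow, map_sub, pderiv_zero_rename_succ,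
    pderiv_X_self, map_mul, map_ofNat]
  push_cast
  ring

lemma pderiv_succ_graphPoly (q h : MvPolynomial (Fin n) ℝ) (τ N : ℝ) (i : Fin n) :
    pderiv i.succ (graphPoly q h τ N) = rename Fin.succ (pderiv i q) -
      C (2 * N) * ((X 0 - rename Fin.succ h) * rename Fin.succ (pderiv i h)) := by
  simp only [graphPoly, map_add, pderiv_C_mul, pderiv_pow, map_sub,
    pderiv_rename (Fin.succ_injective n), pderiv_X_of_ne (Fin.succ_ne_zero i).symm, map_mul,
    map_ofNat]
  push_cast
  ring

lemma hessianMatrix_graphPoly_zero_zero (q h : MvPolynomial (Fin n) ℝ) (τ N : ℝ)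
    (y : Fin (n + 1) → ℝ) :
    hessianMatrix (fun y => eval y (graphPoly q h τ N)) y 0 0 = 2 * N := by
  rw [hessianMatrix_eval, pderiv_zero_graphPoly, map_add, pderiv_C_mul, map_sub,
    pderiv_zero_rename_succ]
  simp

lemma schurComplement_hessianMatrix_graphPoly (q h : MvPolynomial (Fin n) ℝ) (τ : ℝ) {N : ℝ}
    (hN : N ≠ 0) (y : Fin (n + 1) → ℝ) :
    schurComplement (hessianMatrix (fun y => eval y (graphPoly q h τ N)) y) =
      hessianMatrix (fun x => eval x q) (Fin.tail y) -
        (2 * N * (y 0 - eval (Fin.tail y) h)) •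
          hessianMatrix (fun x => eval x h) (Fin.tail y) := by
  ext i j
  rw [schurComplement, of_apply, hessianMatrix_graphPoly_zero_zero, Matrix.sub_apply,
    Matrix.smul_apply, ← (isSymm_hessianMatrix (contDiff_eval_mvPolynomial _).contDiffAt).apply 0]
  simp only [hessianMatrix_eval, pderiv_zero_graphPoly, pderiv_succ_graphPoly, map_add, map_sub,
    pderiv_C, pderiv_rename (Fin.succ_injective n), Derivation.leibniz, pderiv_X_of_ne
    (Fin.succ_ne_zero _).symm, map_mul, eval_C, eval_X, eval_rename_succ, map_zero, smul_eq_mul]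
  field_simp
  ring

lemma exists_pos_forall_eval_mem_Icc {B : Matrix (Fin n) (Fin n) ℝ} (hB : B.PosSemidef)
    (htr : 0 < B.trace) {h : MvPolynomial (Fin n) ℝ} (hh : constCoeffOp B h = 0) {y : Fin n → ℝ}
    {r : ℝ} (hr : 0 ≤ r) (hS : ∀ x ∈ euclideanSphere y r, eval x h ∈ Set.Ioo (0 : ℝ) 1) :
    ∃ η : ℝ, 0 < η ∧ ∀ x ∈ euclideanBall y r, eval x h ∈ Set.Icc η (1 - η) := by
  have himage : IsCompact ((fun x => eval x h) '' euclideanSphere y r) :=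
    (isCompact_euclideanSphere y hr).image (MvPolynomial.continuous_eval h)
  obtain ⟨η, hη, hηS⟩ :=
    himage.exists_cthickening_subset_open isOpen_Ioo (Set.image_subset_iff.2 hS)
  have hmem : ∀ x ∈ euclideanSphere y r, ∀ t, |t - eval x h| ≤ η → t ∈ Set.Ioo (0 : ℝ) 1 :=
    fun x hx t ht => hηS (Metric.mem_cthickening_of_dist_le t _ η _ (Set.mem_image_of_mem _ hx) ht)
  refine ⟨η, hη, fun x hx => ⟨?_, ?_⟩⟩
  · have hle := eval_le_of_constCoeffOp_nonneg hB htr (p := -h) (by simp [hh]) hr (M := -η)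
      (fun x hx => by
        have := (hmem x hx (eval x h - η) (by simp [abs_of_pos hη])).1
        rw [map_neg]; linarith) x hx
    rw [map_neg] at hle
    linarith
  · refine eval_le_of_constCoeffOp_nonneg hB htr (by simp [hh]) hr (fun x hx => ?_) x hx
    have := (hmem x hx (eval x h + η) (by simp [abs_of_pos hη])).2
    linarith

/-- The points `(t, x)` with `x` in a Euclidean ball and `t` at distance at most `η` from
`h(x)`. -/
def graphTube (h : MvPolynomial (Fin n) ℝ) (y : Fin n → ℝ) (r η : ℝ) : Set (Fin (n + 1) → ℝ) :=
  {w | Fin.tail w ∈ euclideanBall y r ∧ |w 0 - eval (Fin.tail w) h| ≤ η}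

lemma isCompact_graphTube (h : MvPolynomial (Fin n) ℝ) (y : Fin n → ℝ) {r : ℝ} (hr : 0 ≤ r)
    (η : ℝ) : IsCompact (graphTube h y r η) := by
  have hcont : Continuous fun p : ℝ × (Fin n → ℝ) =>
      (Fin.cons (eval p.2 h + p.1) p.2 : Fin (n + 1) → ℝ) :=
    continuous_finCons.comp
      ((((MvPolynomial.continuous_eval h).comp continuous_snd).add continuous_fst).prodMk
        continuous_snd)
  refine (((isCompact_Icc (a := -η) (b := η)).prod (isCompact_euclideanBall y hr)).image
    hcont).of_isClosed_subset ?_ fun w hw => ?_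
  · exact ((isCompact_euclideanBall y hr).isClosed.preimage continuous_finTail).inter
      (isClosed_le (((continuous_apply 0).sub
        ((MvPolynomial.continuous_eval h).comp continuous_finTail)).abs) continuous_const)
  · exact ⟨(w 0 - eval (Fin.tail w) h, Fin.tail w), ⟨abs_le.1 hw.2, hw.1⟩, by simp⟩

lemma tail_mem_euclideanSphere_of_mem_frontier_graphTube {h : MvPolynomial (Fin n) ℝ}
    {y : Fin n → ℝ} {r η : ℝ} (hr : 0 ≤ r) (hη : 0 < η) {w : Fin (n + 1) → ℝ}
    (hw : w ∈ frontier (graphTube h y r η)) (hgraph : w 0 = eval (Fin.tail w) h) :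
    Fin.tail w ∈ euclideanSphere y r := by
  by_contra hsphere
  have hlt : sqDist y (Fin.tail w) < r ^ 2 :=
    lt_of_le_of_ne ((isCompact_graphTube h y hr η).isClosed.frontier_subset hw).1 hsphere
  have hdist : Continuous fun w : Fin (n + 1) → ℝ => |w 0 - eval (Fin.tail w) h| :=
    ((continuous_apply 0).sub ((MvPolynomial.continuous_eval h).comp continuous_finTail)).abs
  refine hw.2 (mem_interior_iff_mem_nhds.2 ?_)
  filter_upwards [((continuous_sqDist y).comp continuous_finTail).continuousAt.eventually
    (gt_mem_nhds hlt), hdist.continuousAt.eventually (gt_mem_nhds (by simpa [hgraph] using hη))]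
    with v hv hv'
  exact ⟨hv.le, hv'.le⟩

lemma graphTube_subset_openCylinder {D : Set (Fin n → ℝ)} {h : MvPolynomial (Fin n) ℝ}
    {y : Fin n → ℝ} {r η : ℝ} (hη : 0 < η) (hD : euclideanBall y r ⊆ D)
    (hh : ∀ x ∈ euclideanBall y r, eval x h ∈ Set.Icc η (1 - η)) :
    graphTube h y r (η / 2) ⊆ openCylinder D := by
  rintro w ⟨hw, hwη⟩
  have hmem := hh _ hw
  have habs := abs_le.1 hwη
  exact ⟨⟨by linarith [hmem.1], by linarith [hmem.2]⟩, hD hw⟩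

lemma contDiff_sq_sub_eval_tail (h : MvPolynomial (Fin n) ℝ) :
    ContDiff ℝ 2 fun w : Fin (n + 1) → ℝ => (w 0 - eval (Fin.tail w) h) ^ 2 := by
  convert contDiff_eval_mvPolynomial (k := 2)
    ((X 0 - rename Fin.succ h) ^ 2 : MvPolynomial (Fin (n + 1)) ℝ) using 2 with w
  simp only [map_pow, map_sub, eval_X, eval_rename_succ]

lemma hessianMatrix_graphPoly_notMem_calF {c : ℝ} {q h : MvPolynomial (Fin n) ℝ}
    {P B : Matrix (Fin n) (Fin n) ℝ} (hq : ∀ x, hessianMatrix (fun x => eval x q) x = P)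
    (hsep : ∀ A ∈ Fc n (c - π / 2), 0 < (B * (A - P)).trace) (hh : constCoeffOp B h = 0) (τ : ℝ)
    {N : ℝ} (hN : 0 < N) (y : Fin (n + 1) → ℝ) :
    hessianMatrix (fun y => eval y (graphPoly q h τ N)) y ∉ calF n c := by
  have h00 := hessianMatrix_graphPoly_zero_zero q h τ N y
  refine notMem_calF_of_schurComplement_notMem (by rw [h00]; positivity) fun hmem => ?_
  rw [schurComplement_hessianMatrix_graphPoly q h τ hN.ne'] at hmem
  have hpos := hsep _ hmem
  rw [hq, sub_sub_cancel_left, mul_neg, Matrix.mul_smul, trace_neg, trace_smul,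
    ← eval_constCoeffOp, hh] at hpos
  simp at hpos

lemma exists_le_eval_of_polynomial_selection {c : ℝ} (hc : n * (π / 2) ≤ c)
    (hcn : c - π / 2 < n * (π / 2)) {D : Set (Fin n → ℝ)} {u : (Fin (n + 1) → ℝ) → ℝ}
    (hu : IsTypeF (calF n c) (openCylinder D) fun y => (u y : EReal))
    {q : MvPolynomial (Fin n) ℝ} {P : Matrix (Fin n) (Fin n) ℝ}
    (hq : ∀ x, hessianMatrix (fun x => eval x q) x = P) (hP : P ∉ Fc n (c - π / 2))
    {y : Fin n → ℝ} {r : ℝ} (hr : 0 < r) (hball : euclideanBall y r ⊆ D) {τ : ℝ}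
    {p : MvPolynomial (Fin n) ℝ} (hp : ∀ x ∈ euclideanSphere y r, eval x p ∈ Set.Ioo (0 : ℝ) 1 ∧
      u (Fin.cons (eval x p) x) - τ * eval x p < eval x q) :
    ∃ t ∈ Set.Ioo (0 : ℝ) 1, u (Fin.cons t y) - τ * t ≤ eval y q := by
  have hPsymm : P.IsSymm :=
    hq y ▸ isSymm_hessianMatrix (contDiff_eval_mvPolynomial q).contDiffAt
  obtain ⟨B, δ, hδ, hB, htr, hsep⟩ := exists_separating_posSemidef (by linarith) hcn hPsymm hP
  obtain ⟨h, hh, hhp⟩ := exists_constCoeffOp_eq_zero_of_sphere hB htr y hr p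
  obtain ⟨η, hη, hηh⟩ := exists_pos_forall_eval_mem_Icc hB htr hh hr.le
    fun x hx => (hhp x hx).symm ▸ (hp x hx).1
  have hsub := graphTube_subset_openCylinder hη hball hηh
  have hy : (Fin.cons (eval y h) y : Fin (n + 1) → ℝ) ∈ graphTube h y r (η / 2) :=
    ⟨self_mem_euclideanBall y r, by simpa using (half_pos hη).le⟩
  have hpoly : ∀ N, (fun w => eval w (graphPoly q h τ 0) +
      N * (w 0 - eval (Fin.tail w) h) ^ 2) = fun w => eval w (graphPoly q h τ N) := fun N => by
    ext w
    simp [eval_graphPoly]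
  have hle := hu.le_of_penalized (isCompact_graphTube h y hr.le _) hsub
    (contDiff_eval_mvPolynomial (graphPoly q h τ 0)) (contDiff_sq_sub_eval_tail h)
    (fun w => sq_nonneg _) (fun N hN w _ => (hpoly N).symm ▸ hessianMatrix_graphPoly_notMem_calF hq
      (fun A hA => hδ.trans_le (hsep A hA)) hh τ hN w) ?_ hy (by simp)
  · refine ⟨eval y h, (hsub hy).1, ?_⟩
    have := EReal.coe_le_coe_iff.1 hle
    simp [eval_graphPoly] at this
    linarith
  · intro w hw hgraph
    have hgraph' : w 0 = eval (Fin.tail w) h := sub_eq_zero.1 (sq_eq_zero_iff.1 hgraph)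
    have hS := tail_mem_euclideanSphere_of_mem_frontier_graphTube hr.le (half_pos hη) hw hgraph'
    have hlt := (hp _ hS).2
    rw [← hhp _ hS, ← hgraph', Fin.cons_self_tail] at hlt
    refine EReal.coe_lt_coe_iff.2 ?_
    rw [eval_graphPoly]
    linarith

lemma dist_cons_cons_le (s t : ℝ) (x : Fin n → ℝ) :
    dist (Fin.cons s x : Fin (n + 1) → ℝ) (Fin.cons t x) ≤ |s - t| := by
  refine (dist_pi_le_iff (abs_nonneg _)).2 fun i => Fin.cases ?_ (fun j => ?_) i
  · simp [Real.dist_eq]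
  · simp

lemma exists_continuousOn_selection {S : Set (Fin n → ℝ)} {Z : Set (Fin (n + 1) → ℝ)}
    (hZ : IsOpen Z) (hconv : ∀ x ∈ S, Convex ℝ {t : ℝ | (Fin.cons t x : Fin (n + 1) → ℝ) ∈ Z})
    (hne : ∀ x ∈ S, ∃ t : ℝ, (Fin.cons t x : Fin (n + 1) → ℝ) ∈ Z) :
    ∃ φ : (Fin n → ℝ) → ℝ, ContinuousOn φ S ∧
      ∀ x ∈ S, (Fin.cons (φ x) x : Fin (n + 1) → ℝ) ∈ Z := by
  have hcons : ∀ t : ℝ, Continuous fun w : S => (Fin.cons t w.1 : Fin (n + 1) → ℝ) :=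
    fun t => continuous_finCons.comp (continuous_const.prodMk continuous_subtype_val)
  have hlocal : ∀ x : S, ∃ t : ℝ, ∀ᶠ w : S in nhds x, (Fin.cons t w.1 : Fin (n + 1) → ℝ) ∈ Z :=
    fun x => (hne x x.2).imp fun t ht => (hcons t).continuousAt.eventually (hZ.mem_nhds ht)
  obtain ⟨f, hf⟩ := exists_continuous_forall_mem_convex_of_local_const
    (t := fun x : S => {t : ℝ | (Fin.cons t x.1 : Fin (n + 1) → ℝ) ∈ Z})
    (fun x => hconv x x.2) hlocal
  have hextend : ∀ x : S, Function.extend Subtype.val f 0 x.1 = f x :=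
    Subtype.val_injective.extend_apply f 0
  refine ⟨Function.extend Subtype.val f 0, ?_, fun x hx => ?_⟩
  · rw [continuousOn_iff_continuous_domRestrict]
    convert f.continuous using 1
    exact funext hextend
  · rw [hextend ⟨x, hx⟩]
    exact hf ⟨x, hx⟩

lemma exists_mvPolynomial_selection {S : Set (Fin n → ℝ)} (hS : IsCompact S)
    {Z : Set (Fin (n + 1) → ℝ)} (hZ : IsOpen Z)
    (hconv : ∀ x ∈ S, Convex ℝ {t : ℝ | (Fin.cons t x : Fin (n + 1) → ℝ) ∈ Z})
    (hne : ∀ x ∈ S, ∃ t : ℝ, (Fin.cons t x : Fin (n + 1) → ℝ) ∈ Z) :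
    ∃ p : MvPolynomial (Fin n) ℝ, ∀ x ∈ S, (Fin.cons (eval x p) x : Fin (n + 1) → ℝ) ∈ Z := by
  obtain ⟨φ, hφ, hφZ⟩ := exists_continuousOn_selection hZ hconv hne
  have hgraph : IsCompact ((fun x => (Fin.cons (φ x) x : Fin (n + 1) → ℝ)) '' S) :=
    hS.image_of_continuousOn (continuous_finCons.comp_continuousOn (hφ.prodMk continuousOn_id))
  obtain ⟨η, hη, hηZ⟩ := hgraph.exists_cthickening_subset_open hZ (Set.image_subset_iff.2 hφZ)
  obtain ⟨p, hp⟩ := exists_mvPolynomial_abs_eval_sub_lt hS hφ hη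
  exact ⟨p, fun x hx => hηZ (Metric.mem_cthickening_of_dist_le _ _ η _ (Set.mem_image_of_mem _ hx)
    ((dist_cons_cons_le _ _ _).trans (hp x hx).le))⟩

/- Convexity in `t` makes near-minimizers of `u - τ t` over the sphere selectable as a polynomial
graph `t = p(x)`. -/
lemma exists_le_eval_of_forall_sphere_exists_lt {c : ℝ} (hc : n * (π / 2) ≤ c)
    (hcn : c - π / 2 < n * (π / 2)) {D : Set (Fin n → ℝ)} (hD : IsOpen D)
    {u : (Fin (n + 1) → ℝ) → ℝ} (hcont : ContinuousOn u (openCylinder D))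
    (hu : IsTypeF (calF n c) (openCylinder D) fun y => (u y : EReal))
    {q : MvPolynomial (Fin n) ℝ} {P : Matrix (Fin n) (Fin n) ℝ}
    (hq : ∀ x, hessianMatrix (fun x => eval x q) x = P) (hP : P ∉ Fc n (c - π / 2))
    {y : Fin n → ℝ} {r : ℝ} (hr : 0 < r) (hball : euclideanBall y r ⊆ D) {τ : ℝ}
    (hsel : ∀ x ∈ euclideanSphere y r, ∃ s ∈ Set.Ioo (0 : ℝ) 1,
      u (Fin.cons s x) - τ * s < eval x q) :
    ∃ t ∈ Set.Ioo (0 : ℝ) 1, u (Fin.cons t y) - τ * t ≤ eval y q := by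
  set Z : Set (Fin (n + 1) → ℝ) :=
    openCylinder D ∩ {w | u w - τ * w 0 - eval (Fin.tail w) q < 0} with hZdef
  have hZ : IsOpen Z :=
    ((hcont.sub (continuous_const.mul (continuous_apply 0)).continuousOn).sub
      ((MvPolynomial.continuous_eval q).comp continuous_finTail).continuousOn).isOpen_inter_preimage
      (isOpen_openCylinder hD) isOpen_Iio
  have hSD : ∀ x ∈ euclideanSphere y r, x ∈ D :=
    fun x hx => hball (euclideanSphere_subset_euclideanBall y r hx)
  have hmem : ∀ x ∈ euclideanSphere y r, ∀ s : ℝ, (Fin.cons s x : Fin (n + 1) → ℝ) ∈ Z ↔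
      s ∈ Set.Ioo (0 : ℝ) 1 ∧ u (Fin.cons s x) - τ * s < eval x q := fun x hx s => by
    rw [hZdef, Set.mem_inter_iff, cons_mem_openCylinder, and_iff_left (hSD x hx),
      ← sub_neg (b := eval x q)]
    rfl
  have hconv : ∀ x ∈ euclideanSphere y r,
      Convex ℝ {s : ℝ | (Fin.cons s x : Fin (n + 1) → ℝ) ∈ Z} := fun x hx => by
    simp only [hmem x hx]
    have hlin : ConcaveOn ℝ (Set.Ioo (0 : ℝ) 1) fun s => τ * s :=
      (LinearMap.mulLeft ℝ τ).concaveOn (convex_Ioo 0 1)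
    exact ((convexOn_of_isTypeF_calF hc hD hu (hSD x hx)).sub hlin).convex_lt _
  obtain ⟨p, hp⟩ := exists_mvPolynomial_selection (isCompact_euclideanSphere y hr.le) hZ hconv
    fun x hx => (hsel x hx).imp fun s hs => (hmem x hx s).2 hs
  exact exists_le_eval_of_polynomial_selection hc hcn hu hq hP hr hball
    fun x hx => (hmem x hx _).1 (hp x hx)

end Graph

/-! ### Functions tested by quadratic polynomials -/

section QuadraticTest

open MvPolynomial

variable {n : ℕ}

lemma hessianMatrix_sub {v w : (Fin n → ℝ) → ℝ} {x : Fin n → ℝ} (hv : ContDiffAt ℝ 2 v x)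
    (hw : ContDiffAt ℝ 2 w x) :
    hessianMatrix (fun x => v x - w x) x = hessianMatrix v x - hessianMatrix w x := by
  ext i j
  simp only [hessianMatrix, of_apply, Matrix.sub_apply]
  rw [← Pi.sub_def, iteratedFDeriv_sub_apply hv hw]
  rfl

lemma eventually_le_eval_quadPoly {φ : (Fin n → ℝ) → ℝ} {x₁ : Fin n → ℝ}
    (hφ : ContDiffAt ℝ 2 φ x₁) {κ : ℝ} (hκ : 0 < κ) :
    ∀ᶠ x in nhds x₁, ∀ b : ℝ, φ x - φ x₁ + κ / 4 * sqDist x₁ x + b ≤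
      eval x (quadPoly b (fderiv ℝ φ x₁) (hessianMatrix φ x₁ + κ • 1) x₁) := by
  filter_upwards [eventually_abs_sub_hessian_expansion_le hφ (s := κ / 4) (by positivity)]
    with x hx b
  rw [eval_quadPoly, add_mulVec, smul_mulVec, one_mulVec, dotProduct_add, dotProduct_smul,
    smul_eq_mul, sqDist]
  have hx' := (le_abs_self _).trans hx
  rw [ContinuousLinearMap.coe_coe]
  linarith

lemma exists_pos_forall_mul_le {X : Type*} [TopologicalSpace X] {K : Set X} (hK : IsCompact K)
    {f : X → ℝ} (hf : ContinuousOn f K) {ε : ℝ} (hε : 0 < ε) :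
    ∃ κ : ℝ, 0 < κ ∧ ∀ x ∈ K, κ * f x ≤ ε := by
  obtain ⟨R, hR⟩ := hK.exists_bound_of_continuousOn hf
  refine ⟨ε / (|R| + 1), by positivity, fun x hx => ?_⟩
  rw [div_mul_eq_mul_div, div_le_iff₀ (by positivity)]
  exact mul_le_mul_of_nonneg_left
    (by linarith [(le_abs_self _).trans (hR x hx), le_abs_self R]) hε.le

lemma exists_isMaxOn_add_mul_sqDist_mem_interior {K : Set (Fin n → ℝ)} (hK : IsCompact K)
    {f : (Fin n → ℝ) → ℝ} (hf : UpperSemicontinuousOn f K) (hfr : ∀ x ∈ frontier K, f x ≤ 0)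
    {x₀ : Fin n → ℝ} (hx₀ : x₀ ∈ K) (hpos : 0 < f x₀) :
    ∃ κ : ℝ, 0 < κ ∧ ∃ x₁ ∈ interior K, IsMaxOn (fun x => f x + κ * sqDist x₀ x) K x₁ := by
  obtain ⟨κ, hκ, hκ_le⟩ := exists_pos_forall_mul_le hK (continuous_sqDist x₀).continuousOn
    (half_pos hpos)
  have husc : UpperSemicontinuousOn (fun x => f x + κ * sqDist x₀ x) K :=
    hf.add (continuous_const.mul (continuous_sqDist x₀)).continuousOn.upperSemicontinuousOn
  obtain ⟨x₁, hx₁, hmax⟩ := husc.exists_isMaxOn ⟨x₀, hx₀⟩ hK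
  refine ⟨κ, hκ, x₁, ?_, hmax⟩
  by_contra hint
  have hmax₀ : f x₀ + κ * sqDist x₀ x₀ ≤ f x₁ + κ * sqDist x₀ x₁ := hmax hx₀
  have hfr₁ := hfr x₁ ⟨subset_closure hx₁, hint⟩
  rw [sqDist_self] at hmax₀
  linarith [hκ_le x₁ hx₁]

lemma exists_touching_mvPolynomial {K : Set (Fin n → ℝ)} {w φ : (Fin n → ℝ) → ℝ}
    {x₁ : Fin n → ℝ} (hx₁ : x₁ ∈ interior K) (hφ : ContDiffAt ℝ 2 φ x₁)
    (hmax : IsMaxOn (fun x => w x - φ x) K x₁) {κ : ℝ} (hκ : 0 < κ) :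
    ∃ q : MvPolynomial (Fin n) ℝ,
      (∀ x, hessianMatrix (fun x => eval x q) x = hessianMatrix φ x₁ + κ • 1) ∧
      eval x₁ q < w x₁ ∧
      ∃ r : ℝ, 0 < r ∧ euclideanBall x₁ r ⊆ K ∧ ∀ x ∈ euclideanSphere x₁ r, w x < eval x q := by
  obtain ⟨r, hr, hball⟩ := Metric.nhds_basis_closedBall.mem_iff.1 (inter_mem
    (eventually_le_eval_quadPoly hφ hκ) (mem_interior_iff_mem_nhds.1 hx₁))
  replace hball := (euclideanBall_subset_closedBall hr.le).trans hball
  refine ⟨quadPoly (w x₁ - κ / 8 * r ^ 2) (fderiv ℝ φ x₁) (hessianMatrix φ x₁ + κ • 1) x₁,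
    hessianMatrix_quadPoly _ _ ((isSymm_hessianMatrix hφ).add (isSymm_one.smul κ)) x₁, ?_,
    r, hr, fun x hx => (hball hx).2, fun x hx => ?_⟩
  · have : 0 < κ / 8 * r ^ 2 := by positivity
    rw [eval_quadPoly, sub_self, map_zero, zero_dotProduct]
    linarith
  · obtain ⟨hle, hxK⟩ := hball (euclideanSphere_subset_euclideanBall x₁ r hx)
    have hmax_x : w x - φ x ≤ w x₁ - φ x₁ := hmax hxK
    have hx' : sqDist x₁ x = r ^ 2 := hx
    refine lt_of_lt_of_le ?_ (hle _)
    rw [hx']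
    have : 0 < κ * r ^ 2 := by positivity
    linarith

lemma isTypeF_Fc_of_mvPolynomial {c : ℝ} (hc : ((n : ℝ) - 1) * (π / 2) ≤ c)
    {D : Set (Fin n → ℝ)} {w : (Fin n → ℝ) → ℝ} (hw : UpperSemicontinuousOn w D)
    (htest : ∀ (q : MvPolynomial (Fin n) ℝ) (P : Matrix (Fin n) (Fin n) ℝ),
      (∀ x, hessianMatrix (fun x => eval x q) x = P) → P ∉ Fc n c → ∀ (y : Fin n → ℝ) (r : ℝ),
      0 < r → euclideanBall y r ⊆ D → (∀ x ∈ euclideanSphere y r, w x < eval x q) →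
      w y ≤ eval y q) :
    IsTypeF (Fc n c) D fun x => (w x : EReal) := by
  refine ⟨fun x _ => EReal.coe_ne_top _, continuous_coe_real_ereal.comp_upperSemicontinuousOn hw
    EReal.coe_strictMono.monotone, fun v hv hvF a K hK hKD hfr x₀ hx₀ => ?_⟩
  simp only [← EReal.coe_add, EReal.coe_le_coe_iff] at hfr ⊢
  by_contra! hlt
  have ha : Continuous a := a.continuous_of_finiteDimensional
  obtain ⟨κ, hκ, x₁, hx₁, hmax⟩ := exists_isMaxOn_add_mul_sqDist_mem_interior hK
    (f := fun x => w x + (v x - a x))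
    ((hw.mono hKD).add ((hv.continuousOn.mono hKD).sub ha.continuousOn).upperSemicontinuousOn)
    (fun x hx => by linarith [hfr x hx]) hx₀ (by linarith)
  have hD : D ∈ nhds x₁ := mem_of_superset (mem_interior_iff_mem_nhds.1 hx₁) hKD
  have hv₁ : ContDiffAt ℝ 2 v x₁ := hv.contDiffAt hD
  set p : MvPolynomial (Fin n) ℝ := quadPoly (a x₀) a.linear (-(2 * κ) • 1) x₀ with hp
  have hp_eval : ∀ x, eval x p = a x - κ * sqDist x₀ x := fun x => by
    have hlin : a x = a x₀ + a.linear (x - x₀) := by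
      rw [← vsub_eq_sub, a.linearMap_vsub]
      simp
    rw [hp, eval_quadPoly, hlin, smul_mulVec, one_mulVec, dotProduct_smul, smul_eq_mul, sqDist]
    ring
  have hp_hess : hessianMatrix (fun x => eval x p) x₁ = -(2 * κ) • 1 :=
    hessianMatrix_quadPoly _ _ (isSymm_one.smul _) x₀ x₁
  have hφ := (contDiff_eval_mvPolynomial p).contDiffAt (x := x₁) |>.sub hv₁
  have hφ_hess := hessianMatrix_sub (contDiff_eval_mvPolynomial p).contDiffAt hv₁
  have hφ_max : IsMaxOn (fun x => w x - (eval x p - v x)) K x₁ := by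
    convert hmax using 2 with x
    rw [hp_eval]
    ring
  obtain ⟨q, hq, hqw, r, hr, hball, hsphere⟩ := exists_touching_mvPolynomial hx₁ hφ hφ_max hκ
  refine hqw.not_ge (htest q _ hq (fun hF => (hvF x₁ (mem_of_mem_nhds hD)).2 ?_) x₁ r hr
    (hball.trans hKD) hsphere)
  convert add_smul_one_mem_symInterior_Fc hc hκ hF using 1
  rw [hφ_hess, hp_hess]
  module

end QuadraticTest

/-! ### The partial Legendre transform -/

section ClosedCylinder

variable {n : ℕ} {D : Set (Fin n → ℝ)}

/-- The closed cylinder `[0, 1] × closure D`, in the coordinates `Fin.cons t x`. -/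
def closedCylinder (D : Set (Fin n → ℝ)) : Set (Fin (n + 1) → ℝ) :=
  {y | y 0 ∈ Set.Icc (0 : ℝ) 1 ∧ Fin.tail y ∈ closure D}

lemma cons_mem_closedCylinder {s : ℝ} {x : Fin n → ℝ} :
    (Fin.cons s x : Fin (n + 1) → ℝ) ∈ closedCylinder D ↔ s ∈ Set.Icc (0 : ℝ) 1 ∧ x ∈ closure D :=
  Iff.rfl

lemma openCylinder_subset_closedCylinder (D : Set (Fin n → ℝ)) :
    openCylinder D ⊆ closedCylinder D :=
  fun _ hy => ⟨Set.Ioo_subset_Icc_self hy.1, subset_closure hy.2⟩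

lemma continuous_cons_left (x : Fin n → ℝ) :
    Continuous fun s : ℝ => (Fin.cons s x : Fin (n + 1) → ℝ) :=
  continuous_finCons.comp (.prodMk_left x)

lemma continuous_cons_right (s : ℝ) :
    Continuous fun x : Fin n → ℝ => (Fin.cons s x : Fin (n + 1) → ℝ) :=
  continuous_finCons.comp (.prodMk_right s)

lemma interior_closedCylinder_subset :
    interior (closedCylinder D) ⊆ openCylinder (interior (closure D)) := fun y hy => by
  rw [← Fin.cons_self_tail y] at hy ⊢
  have hy' := mem_interior_iff_mem_nhds.1 hy
  refine cons_mem_openCylinder.2 ⟨?_, ?_⟩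
  · rw [← interior_Icc, mem_interior_iff_mem_nhds]
    filter_upwards [(continuous_cons_left (Fin.tail y)).continuousAt.eventually hy'] with s hs
    exact (cons_mem_closedCylinder.1 hs).1
  · rw [mem_interior_iff_mem_nhds]
    filter_upwards [(continuous_cons_right (y 0)).continuousAt.eventually hy'] with x hx
    exact (cons_mem_closedCylinder.1 hx).2

lemma cons_mem_frontier_closedCylinder_of_eq {s : ℝ} (hs : s = 0 ∨ s = 1) {x : Fin n → ℝ}
    (hx : x ∈ closure D) : (Fin.cons s x : Fin (n + 1) → ℝ) ∈ frontier (closedCylinder D) := by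
  refine ⟨subset_closure (cons_mem_closedCylinder.2 ⟨?_, hx⟩), fun hint => ?_⟩
  · rcases hs with rfl | rfl <;> simp
  · have hs' := (cons_mem_openCylinder.1 (interior_closedCylinder_subset hint)).1
    rcases hs with rfl | rfl <;> simp at hs'

lemma cons_mem_frontier_closedCylinder_of_mem_frontier (hD : IsOpen D) (hconv : Convex ℝ D) {s : ℝ}
    (hs : s ∈ Set.Icc (0 : ℝ) 1) {x : Fin n → ℝ} (hx : x ∈ frontier D) :
    (Fin.cons s x : Fin (n + 1) → ℝ) ∈ frontier (closedCylinder D) := by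
  refine ⟨subset_closure (cons_mem_closedCylinder.2 ⟨hs, hx.1⟩), fun hint => hx.2 ?_⟩
  have hne : (interior D).Nonempty := by
    rw [hD.interior_eq]
    exact closure_nonempty_iff.1 ⟨x, hx.1⟩
  rw [← hconv.interior_closure_eq_interior_of_nonempty_interior hne]
  exact (cons_mem_openCylinder.1 (interior_closedCylinder_subset hint)).2

lemma continuousOn_comp_cons_left {u : (Fin (n + 1) → ℝ) → ℝ}
    (hu : ContinuousOn u (closedCylinder D)) {x : Fin n → ℝ} (hx : x ∈ closure D) :
    ContinuousOn (fun s => u (Fin.cons s x)) (Set.Icc 0 1) :=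
  hu.comp (continuous_cons_left x).continuousOn fun _ hs => cons_mem_closedCylinder.2 ⟨hs, hx⟩

lemma continuousOn_comp_cons_right {u : (Fin (n + 1) → ℝ) → ℝ}
    (hu : ContinuousOn u (closedCylinder D)) {s : ℝ} (hs : s ∈ Set.Icc (0 : ℝ) 1) :
    ContinuousOn (fun x => u (Fin.cons s x)) (closure D) :=
  hu.comp (continuous_cons_right s).continuousOn fun _ hx => cons_mem_closedCylinder.2 ⟨hs, hx⟩

end ClosedCylinder

lemma convexOn_closure {E : Type*} [AddCommGroup E] [Module ℝ E] [TopologicalSpace E]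
    [IsTopologicalAddGroup E] [ContinuousSMul ℝ E] {s : Set E} {f : E → ℝ} (hf : ConvexOn ℝ s f)
    (hcont : ContinuousOn f (closure s)) : ConvexOn ℝ (closure s) f := by
  refine ⟨hf.1.closure, fun x hx y hy a b ha hb hab => ?_⟩
  have hmaps : ∀ p ∈ closure s ×ˢ closure s, a • p.1 + b • p.2 ∈ closure s := fun p hp =>
    hf.1.closure hp.1 hp.2 ha hb hab
  refine le_on_closure (s := s ×ˢ s) (f := fun p : E × E => f (a • p.1 + b • p.2))
    (g := fun p => a • f p.1 + b • f p.2) (fun p hp => hf.2 hp.1 hp.2 ha hb hab) ?_ ?_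
    (x := (x, y)) (by rw [closure_prod_eq]; exact ⟨hx, hy⟩) <;> rw [closure_prod_eq]
  · exact hcont.comp (by fun_prop) hmaps
  · exact ((hcont.comp continuousOn_fst fun p hp => hp.1).const_smul a).add
      ((hcont.comp continuousOn_snd fun p hp => hp.2).const_smul b)

section PartialLegendre

variable {n : ℕ} {D : Set (Fin n → ℝ)} {u : (Fin (n + 1) → ℝ) → ℝ} {τ : ℝ} {x : Fin n → ℝ}

/-- The partial Legendre transform `x ↦ min_{s ∈ [0, 1]} (u(s, x) - τ s)` in the time variable. -/
noncomputable def partialLegendre (u : (Fin (n + 1) → ℝ) → ℝ) (τ : ℝ) (x : Fin n → ℝ) : ℝ :=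
  sInf ((fun s => u (Fin.cons s x) - τ * s) '' Set.Icc (0 : ℝ) 1)

lemma isCompact_image_sub_mul (hu : ContinuousOn u (closedCylinder D)) (τ : ℝ)
    (hx : x ∈ closure D) :
    IsCompact ((fun s => u (Fin.cons s x) - τ * s) '' Set.Icc (0 : ℝ) 1) :=
  isCompact_Icc.image_of_continuousOn ((continuousOn_comp_cons_left hu hx).sub (by fun_prop))

lemma partialLegendre_le (hu : ContinuousOn u (closedCylinder D)) (hx : x ∈ closure D) {s : ℝ}
    (hs : s ∈ Set.Icc (0 : ℝ) 1) : partialLegendre u τ x ≤ u (Fin.cons s x) - τ * s :=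
  csInf_le (isCompact_image_sub_mul hu τ hx).bddBelow ⟨s, hs, rfl⟩

lemma exists_partialLegendre_eq (hu : ContinuousOn u (closedCylinder D)) (τ : ℝ)
    (hx : x ∈ closure D) :
    ∃ s ∈ Set.Icc (0 : ℝ) 1, u (Fin.cons s x) - τ * s = partialLegendre u τ x :=
  (isCompact_image_sub_mul hu τ hx).sInf_mem ((Set.nonempty_Icc.2 zero_le_one).image _)

lemma exists_lt_of_partialLegendre_lt (hu : ContinuousOn u (closedCylinder D))
    (hx : x ∈ closure D) {b : ℝ} (hb : partialLegendre u τ x < b) :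
    ∃ s ∈ Set.Ioo (0 : ℝ) 1, u (Fin.cons s x) - τ * s < b := by
  obtain ⟨s, hs, h⟩ := exists_partialLegendre_eq hu τ hx
  have hcl : closure (Set.Ioo (0 : ℝ) 1) = Set.Icc 0 1 := closure_Ioo zero_ne_one
  have hcont : ContinuousOn (fun s => u (Fin.cons s x) - τ * s) (closure (Set.Ioo 0 1)) :=
    hcl ▸ (continuousOn_comp_cons_left hu hx).sub (by fun_prop)
  by_contra! hle
  exact (h.trans_lt hb).not_ge (le_on_closure (f := fun _ => b) hle continuousOn_const hcont
    (hcl.symm ▸ hs))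

lemma upperSemicontinuousOn_partialLegendre (hu : ContinuousOn u (closedCylinder D)) (τ : ℝ) :
    UpperSemicontinuousOn (partialLegendre u τ) (closure D) := fun x hx b hb => by
  obtain ⟨s, hs, h⟩ := exists_partialLegendre_eq hu τ hx
  have hcont : ContinuousOn (fun x => u (Fin.cons s x) - τ * s) (closure D) :=
    (continuousOn_comp_cons_right hu hs).sub continuousOn_const
  filter_upwards [(hcont x hx).eventually (gt_mem_nhds (h.trans_lt hb)), self_mem_nhdsWithin]
    with y hy hyD
  exact (partialLegendre_le hu hyD hs).trans_lt hy

lemma limsup_partialLegendre_le (hu : ContinuousOn u (closedCylinder D)) (τ : ℝ)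
    (hx : x ∈ closure D) :
    limsup (fun y => (partialLegendre u τ y : EReal)) (nhdsWithin x D) ≤ partialLegendre u τ x := by
  refine EReal.le_of_forall_lt_iff_le.1 fun b hb => limsup_le_of_le (by isBoundedDefault) ?_
  filter_upwards [(upperSemicontinuousOn_partialLegendre hu τ x hx b
    (EReal.coe_lt_coe_iff.1 hb)).filter_mono (nhdsWithin_mono x subset_closure)] with y hy
  exact EReal.coe_le_coe_iff.2 hy.le

lemma isTypeF_partialLegendre {c : ℝ} (hc : n * (π / 2) ≤ c) (hcn : c - π / 2 < n * (π / 2))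
    (hD : IsOpen D) (hcont : ContinuousOn u (closedCylinder D))
    (hu : IsTypeF (calF n c) (openCylinder D) fun y => (u y : EReal)) (τ : ℝ) :
    IsTypeF (Fc n (c - π / 2)) D fun x => (partialLegendre u τ x : EReal) := by
  refine isTypeF_Fc_of_mvPolynomial (by linarith)
    ((upperSemicontinuousOn_partialLegendre hcont τ).mono subset_closure)
    fun q P hq hP y r hr hball hlt => ?_
  obtain ⟨t, ht, h⟩ := exists_le_eval_of_forall_sphere_exists_lt hc hcn hD
    (hcont.mono (openCylinder_subset_closedCylinder D)) hu hq hP hr hball fun x hx =>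
      exists_lt_of_partialLegendre_lt hcont
        (subset_closure (hball (euclideanSphere_subset_euclideanBall y r hx))) (hlt x hx)
  exact (partialLegendre_le hcont (subset_closure (hball (self_mem_euclideanBall y r)))
    (Set.Ioo_subset_Icc_self ht)).trans h

lemma exists_le_partialLegendre_add_mul {c : ℝ} (hc : n * (π / 2) ≤ c) (hD : IsOpen D)
    (hcont : ContinuousOn u (closedCylinder D))
    (hu : IsTypeF (calF n c) (openCylinder D) fun y => (u y : EReal)) (hx : x ∈ D) {t b : ℝ}
    (ht : t ∈ Set.Icc (0 : ℝ) 1) (hb : b < u (Fin.cons t x)) :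
    ∃ τ : ℝ, b ≤ partialLegendre u τ x + τ * t := by
  have hcl : closure (Set.Ioo (0 : ℝ) 1) = Set.Icc 0 1 := closure_Ioo zero_ne_one
  have hxcl := subset_closure hx
  have hcont_x := continuousOn_comp_cons_left hcont hxcl
  have hconv : ConvexOn ℝ (Set.Icc 0 1) fun s => u (Fin.cons s x) :=
    hcl ▸ convexOn_closure (convexOn_of_isTypeF_calF hc hD hu hx) (hcl ▸ hcont_x)
  obtain ⟨τ, a, hle, heq⟩ := hconv.exists_affine_le_of_lt_real ht hb isClosed_Icc
    hcont_x.lowerSemicontinuousOn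
  obtain ⟨s, hs, hmin⟩ := exists_partialLegendre_eq hcont τ hxcl
  exact ⟨τ, by linarith [hle s hs]⟩

end PartialLegendre

/-! ### Mollification of functions of type `F_c` -/

lemma hessianMatrix_comp_sub {m : ℕ} (f : (Fin m → ℝ) → ℝ) (y x : Fin m → ℝ) :
    hessianMatrix (fun x => f (x - y)) x = hessianMatrix f (x - y) := by
  ext i j
  simp only [hessianMatrix, Matrix.of_apply]
  rw [iteratedFDeriv_comp_sub]

section HarmonicMeasure

open MvPolynomial MeasureTheory

variable {n : ℕ}

lemma exists_strongDual_comp_eq {V E : Type*} [AddCommGroup V] [Module ℝ V] [NormedAddCommGroup E]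
    [NormedSpace ℝ E] (R : V →ₗ[ℝ] E) (φ : V →ₗ[ℝ] ℝ) (hφ : ∀ v, |φ v| ≤ ‖R v‖) :
    ∃ Λ : StrongDual ℝ E, ‖Λ‖ ≤ 1 ∧ ∀ v, Λ (R v) = φ v := by
  obtain ⟨s, hs⟩ := R.rangeRestrict.exists_rightInverse_of_surjective R.range_rangeRestrict
  have hRs : ∀ y : LinearMap.range R, R (s y) = y := fun y =>
    congrArg Subtype.val (LinearMap.congr_fun hs y)
  have hbound : ∀ y, ‖(φ ∘ₗ s) y‖ ≤ 1 * ‖y‖ := fun y => by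
    rw [one_mul, Submodule.coe_norm, ← hRs y]
    exact hφ (s y)
  obtain ⟨Λ, hΛ, hnorm⟩ := exists_extension_norm_eq _ ((φ ∘ₗ s).mkContinuous 1 hbound)
  refine ⟨Λ, hnorm.trans_le (LinearMap.mkContinuous_norm_le _ zero_le_one hbound), fun v => ?_⟩
  have hzero : φ (s (R.rangeRestrict v) - v) = 0 := abs_nonpos_iff.1 <| by
    simpa [hRs] using hφ (s (R.rangeRestrict v) - v)
  rw [map_sub, sub_eq_zero] at hzero
  exact (hΛ (R.rangeRestrict v)).trans hzero

instance (y : Fin n → ℝ) (r : ℝ) : CompactSpace (euclideanSphere y r) := by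
  have h := isCompact_euclideanSphere y (abs_nonneg r)
  simp only [euclideanSphere, sq_abs] at h
  exact isCompact_iff_compactSpace.1 h

/-- The restriction of polynomials to the sphere of radius `r` centred at the origin. -/
noncomputable def sphereRestrict (r : ℝ) :
    MvPolynomial (Fin n) ℝ →ₗ[ℝ] C(euclideanSphere (0 : Fin n → ℝ) r, ℝ) where
  toFun p := ⟨fun ξ => eval ξ.1 p, (MvPolynomial.continuous_eval p).comp continuous_subtype_val⟩
  map_add' p q := by ext; simp
  map_smul' a p := by ext; simp [smul_eval]

/-- The restriction of `v` to the sphere of radius `r` centred at `y`, transported to the sphere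
centred at the origin. -/
def sphereSlice (r : ℝ) (v : C(Fin n → ℝ, ℝ)) (y : Fin n → ℝ) :
    C(euclideanSphere (0 : Fin n → ℝ) r, ℝ) :=
  ⟨fun ξ => v (y + ξ.1), by fun_prop⟩

/-- `Λ` is integration against a harmonic measure, seen from the centre, for the operator
`∑ Bᵢⱼ ∂ᵢ∂ⱼ` on the ball of radius `r`: it reproduces the value at the centre of every polynomial
solution. -/
structure IsHarmonicMeasure (B : Matrix (Fin n) (Fin n) ℝ) (r : ℝ)
    (Λ : StrongDual ℝ C(euclideanSphere (0 : Fin n → ℝ) r, ℝ)) : Prop where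
  norm_le_one : ‖Λ‖ ≤ 1
  map_sphereRestrict : ∀ h, constCoeffOp B h = 0 → Λ (sphereRestrict r h) = eval 0 h

lemma abs_eval_zero_le_norm_sphereRestrict {B : Matrix (Fin n) (Fin n) ℝ} (hB : B.PosSemidef)
    (htr : 0 < B.trace) {r : ℝ} (hr : 0 ≤ r) {h : MvPolynomial (Fin n) ℝ}
    (hh : constCoeffOp B h = 0) : |eval 0 h| ≤ ‖sphereRestrict r h‖ := by
  have hsphere : ∀ ξ ∈ euclideanSphere (0 : Fin n → ℝ) r, |eval ξ h| ≤ ‖sphereRestrict r h‖ :=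
    fun ξ hξ => (sphereRestrict r h).norm_coe_le_norm ⟨ξ, hξ⟩
  refine abs_le'.2 ⟨?_, ?_⟩
  · exact eval_le_of_constCoeffOp_nonneg hB htr (by simp [hh]) hr
      (fun ξ hξ => (abs_le'.1 (hsphere ξ hξ)).1) 0 (self_mem_euclideanBall 0 r)
  · rw [← map_neg]
    refine eval_le_of_constCoeffOp_nonneg hB htr (by simp [hh]) hr (fun ξ hξ => ?_) 0
      (self_mem_euclideanBall 0 r)
    rw [map_neg]
    exact (abs_le'.1 (hsphere ξ hξ)).2

lemma exists_isHarmonicMeasure {B : Matrix (Fin n) (Fin n) ℝ} (hB : B.PosSemidef)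
    (htr : 0 < B.trace) {r : ℝ} (hr : 0 ≤ r) : ∃ Λ, IsHarmonicMeasure B r Λ := by
  set V := LinearMap.ker (constCoeffOp B)
  obtain ⟨Λ, hΛ, hΛV⟩ := exists_strongDual_comp_eq (sphereRestrict r ∘ₗ V.subtype)
    ((aeval (0 : Fin n → ℝ)).toLinearMap ∘ₗ V.subtype)
    fun h => by simpa [aeval_eq_eval] using abs_eval_zero_le_norm_sphereRestrict hB htr hr h.2
  exact ⟨Λ, hΛ, fun h hh => by simpa [aeval_eq_eval] using hΛV ⟨h, hh⟩⟩

lemma IsHarmonicMeasure.abs_sub_eval_zero_le {B : Matrix (Fin n) (Fin n) ℝ} {r : ℝ}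
    {Λ : StrongDual ℝ C(euclideanSphere (0 : Fin n → ℝ) r, ℝ)} (hΛ : IsHarmonicMeasure B r Λ)
    {h : MvPolynomial (Fin n) ℝ} (hh : constCoeffOp B h = 0)
    {f : C(euclideanSphere (0 : Fin n → ℝ) r, ℝ)} {ε : ℝ} (hε : 0 ≤ ε)
    (hf : ∀ ξ, |f ξ - eval ξ.1 h| ≤ ε) : |Λ f - eval 0 h| ≤ ε := by
  rw [← hΛ.map_sphereRestrict h hh, ← map_sub]
  exact (Λ.le_of_opNorm_le hΛ.norm_le_one _).trans
    ((one_mul _).trans_le ((ContinuousMap.norm_le _ hε).2 hf))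

lemma constCoeffOp_C (B : Matrix (Fin n) (Fin n) ℝ) (a : ℝ) : constCoeffOp B (C a) = 0 := by
  simp [constCoeffOp_apply]

lemma constCoeffOp_smul_sqDistPoly_sub_C (B : Matrix (Fin n) (Fin n) ℝ) (γ a : ℝ) (y : Fin n → ℝ) :
    constCoeffOp B (γ • (sqDistPoly y - C a)) = C (2 * γ * B.trace) := by
  rw [map_smul, map_sub, constCoeffOp_sqDistPoly, constCoeffOp_C, sub_zero, smul_eq_C_mul, ← C_mul]
  congr 1
  ring

lemma IsTypeF.le_eval_zero_sub_mul_sq {F : Set (Matrix (Fin n) (Fin n) ℝ)} {D : Set (Fin n → ℝ)}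
    {w : (Fin n → ℝ) → ℝ} (hw : IsTypeF F D fun x => (w x : EReal))
    {B : Matrix (Fin n) (Fin n) ℝ} {γ : ℝ} (hF : ∀ A ∈ F, 2 * γ * B.trace < (B * A).trace)
    {y : Fin n → ℝ} {r : ℝ} (hr : 0 ≤ r) (hball : euclideanBall y r ⊆ D)
    {h : MvPolynomial (Fin n) ℝ} (hh : constCoeffOp B h = 0)
    (hle : ∀ ξ ∈ euclideanSphere (0 : Fin n → ℝ) r, w (y + ξ) ≤ eval ξ h) :
    w y ≤ eval 0 h - γ * r ^ 2 := by
  set p : MvPolynomial (Fin n) ℝ := h + γ • (sqDistPoly 0 - C (r ^ 2)) with hp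
  have hp_eval : ∀ x, eval x p = eval x h + γ * (sqDist 0 x - r ^ 2) := fun x => by
    simp [hp, smul_eval, eval_sqDistPoly]
  have hp_hessian : ∀ x ∈ D, hessianMatrix (fun x => eval (x - y) p) x ∉ F := fun x _ hx => by
    refine (hF _ hx).ne ?_
    rw [hessianMatrix_comp_sub fun x => eval x p, ← eval_constCoeffOp, hp, map_add, hh, zero_add,
      constCoeffOp_smul_sqDistPoly_sub_C, eval_C]
  have hcenter := hw.le_of_le_frontier
    ((contDiff_eval_mvPolynomial p).comp (contDiff_id.sub contDiff_const)) hp_hessian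
    (isCompact_euclideanBall y hr) hball (fun x hx => ?_) y (self_mem_euclideanBall y r)
  · rw [EReal.coe_le_coe_iff, Function.comp_apply, id_eq, sub_self, hp_eval, sqDist_self] at hcenter
    linarith
  · have hsphere : sqDist 0 (x - y) = r ^ 2 := by
      simpa [euclideanSphere, sqDist] using frontier_euclideanBall_subset y r hx
    have hx_le := hle (x - y) hsphere
    rw [add_sub_cancel] at hx_le
    simpa [hp_eval, hsphere] using hx_le

lemma exists_constCoeffOp_eq_zero_abs_eval_sub_lt {B : Matrix (Fin n) (Fin n) ℝ}
    (hB : B.PosSemidef) (htr : 0 < B.trace) (y : Fin n → ℝ) {r : ℝ} (hr : 0 < r)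
    {f : (Fin n → ℝ) → ℝ} (hf : ContinuousOn f (euclideanSphere y r)) {ε : ℝ} (hε : 0 < ε) :
    ∃ h : MvPolynomial (Fin n) ℝ,
      constCoeffOp B h = 0 ∧ ∀ ξ ∈ euclideanSphere y r, |eval ξ h - f ξ| < ε := by
  obtain ⟨p, hp⟩ :=
    exists_mvPolynomial_abs_eval_sub_lt (isCompact_euclideanSphere y hr.le) hf hε
  obtain ⟨h, hh, hhp⟩ := exists_constCoeffOp_eq_zero_of_sphere hB htr y hr p
  exact ⟨h, hh, fun ξ hξ => (hhp ξ hξ).symm ▸ hp ξ hξ⟩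

lemma IsHarmonicMeasure.add_mul_sq_le {F : Set (Matrix (Fin n) (Fin n) ℝ)} {D : Set (Fin n → ℝ)}
    {w : (Fin n → ℝ) → ℝ} (hw : IsTypeF F D fun x => (w x : EReal))
    {B : Matrix (Fin n) (Fin n) ℝ} (hB : B.PosSemidef) (htr : 0 < B.trace) {γ : ℝ}
    (hF : ∀ A ∈ F, 2 * γ * B.trace < (B * A).trace) {r : ℝ} (hr : 0 < r)
    {Λ : StrongDual ℝ C(euclideanSphere (0 : Fin n → ℝ) r, ℝ)} (hΛ : IsHarmonicMeasure B r Λ)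
    {y : Fin n → ℝ} (hball : euclideanBall y r ⊆ D) {v : C(Fin n → ℝ, ℝ)}
    (hvw : Set.EqOn v w (euclideanBall y r)) : v y + γ * r ^ 2 ≤ Λ (sphereSlice r v y) := by
  refine le_of_forall_pos_le_add fun ε hε => ?_
  obtain ⟨h, hh, hclose⟩ := exists_constCoeffOp_eq_zero_abs_eval_sub_lt hB htr 0 hr
    (f := fun ξ => v (y + ξ)) (by fun_prop) (half_pos hε)
  have hcenter := hw.le_eval_zero_sub_mul_sq hF hr.le hball (h := h + C (ε / 2))
    (by rw [map_add, hh, constCoeffOp_C, zero_add]) fun ξ hξ => by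
      have hy_add : y + ξ ∈ euclideanBall y r := euclideanSphere_subset_euclideanBall y r
        (by simpa only [euclideanSphere, sqDist, Set.mem_ofPred_eq, add_sub_cancel_left, sub_zero]
          using hξ)
      rw [← hvw hy_add, eval_add, eval_C]
      linarith [(abs_lt.1 (hclose ξ hξ)).1]
  have hΛh := hΛ.abs_sub_eval_zero_le hh (half_pos hε).le (f := sphereSlice r v y)
    fun ξ => abs_sub_comm (eval ξ.1 h) _ ▸ (hclose ξ.1 ξ.2).le
  rw [← hvw (self_mem_euclideanBall y r), map_add, eval_C] at hcenter
  linarith [(abs_le.1 hΛh).1]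

lemma continuous_sphereSlice (r : ℝ) (v : C(Fin n → ℝ, ℝ)) : Continuous (sphereSlice r v) :=
  ContinuousMap.continuous_of_continuous_uncurry _ <| by
    change Continuous fun p : (Fin n → ℝ) × euclideanSphere (0 : Fin n → ℝ) r => v (p.1 + p.2.1)
    fun_prop

lemma add_le_apply_sphereSlice_of_average {r : ℝ}
    (Λ : StrongDual ℝ C(euclideanSphere (0 : Fin n → ℝ) r, ℝ)) {ρ : (Fin n → ℝ) → ℝ}
    (hρ : Continuous ρ) (hρ_compact : HasCompactSupport ρ) (hρ_nonneg : ∀ z, 0 ≤ ρ z)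
    (hρ_integral : ∫ z, ρ z = 1) {v W : C(Fin n → ℝ, ℝ)}
    (hW : ∀ x, W x = ∫ z, ρ z * v (x - z)) {x : Fin n → ℝ} {b : ℝ}
    (hmean : ∀ z, ρ z ≠ 0 → v (x - z) + b ≤ Λ (sphereSlice r v (x - z))) :
    W x + b ≤ Λ (sphereSlice r W x) := by
  have hslice_int : Integrable fun z => ρ z • sphereSlice r v (x - z) :=
    (hρ.smul ((continuous_sphereSlice r v).comp (by fun_prop))).integrable_of_hasCompactSupport
      hρ_compact.smul_right
  have hslice : sphereSlice r W x = ∫ z, ρ z • sphereSlice r v (x - z) := by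
    ext ξ
    refine (hW _).trans (Eq.trans ?_ ((ContinuousMap.evalCLM ℝ ξ).integral_comp_comm hslice_int))
    refine integral_congr_ae (Eventually.of_forall fun z => ?_)
    change ρ z * v (x + ξ.1 - z) = ρ z * v (x - z + ξ.1)
    rw [add_sub_right_comm]
  have hv_int : Integrable fun z => ρ z * v (x - z) :=
    Continuous.integrable_of_hasCompactSupport (by fun_prop) hρ_compact.mul_right
  have hb_int : Integrable fun z => ρ z * b :=
    Continuous.integrable_of_hasCompactSupport (by fun_prop) hρ_compact.mul_right
  calc W x + b = ∫ z, (ρ z * v (x - z) + ρ z * b) := by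
        rw [integral_add hv_int hb_int, integral_mul_const, hρ_integral, one_mul, hW]
    _ ≤ ∫ z, Λ (ρ z • sphereSlice r v (x - z)) := by
        refine integral_mono (hv_int.add hb_int) (Λ.integrable_comp hslice_int) fun z => ?_
        simp only [map_smul, smul_eq_mul, ← mul_add]
        by_cases hz : ρ z = 0
        · simp [hz]
        · exact mul_le_mul_of_nonneg_left (hmean z hz) (hρ_nonneg z)
    _ = Λ (sphereSlice r W x) := by rw [Λ.integral_comp_comm hslice_int, hslice]

lemma eventually_apply_sphereSlice_le {B : Matrix (Fin n) (Fin n) ℝ} (htr : 0 < B.trace)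
    {W : C(Fin n → ℝ, ℝ)} (hW : ContDiff ℝ 2 W) (x : Fin n → ℝ) {s : ℝ} (hs : 0 < s) :
    ∀ᶠ r in nhdsWithin (0 : ℝ) (Set.Ioi 0), ∀ Λ, IsHarmonicMeasure B r Λ →
      Λ (sphereSlice r W x) ≤
        W x + ((B * hessianMatrix W x).trace / (2 * B.trace) + s) * r ^ 2 := by
  set H := hessianMatrix W x
  have hH : H.IsSymm := isSymm_hessianMatrix hW.contDiffAt
  set μ := (B * H).trace / (2 * B.trace) with hμ
  obtain ⟨e, he, htaylor⟩ := Metric.eventually_nhds_iff.1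
    (eventually_abs_sub_hessian_expansion_le (hW.contDiffAt (x := x)) hs)
  filter_upwards [Ioo_mem_nhdsGT he] with r ⟨hr, hre⟩ Λ hΛ
  set T := quadPoly (W x) (fderiv ℝ W x : (Fin n → ℝ) →ₗ[ℝ] ℝ) H 0
  have hT : constCoeffOp B T = C (B * H).trace := MvPolynomial.funext fun z => by
    rw [eval_constCoeffOp, hessianMatrix_quadPoly _ _ hH, eval_C]
  have hh : constCoeffOp B (T - μ • (sqDistPoly 0 - C (r ^ 2))) = 0 := by
    rw [map_sub, hT, constCoeffOp_smul_sqDistPoly_sub_C, sub_eq_zero, hμ]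
    congr 1
    field_simp
  have hT_eval : ∀ z, eval z (T - μ • (sqDistPoly 0 - C (r ^ 2))) =
      W x + fderiv ℝ W x z + (1 / 2) * (z ⬝ᵥ H *ᵥ z) - μ * (sqDist 0 z - r ^ 2) := fun z => by
    simp [T, eval_quadPoly, smul_eval, eval_sqDistPoly]
  have happrox := hΛ.abs_sub_eval_zero_le hh (ε := s * r ^ 2) (by positivity)
    (f := sphereSlice r W x) fun ⟨ξ, (hξ : sqDist 0 ξ = r ^ 2)⟩ => by
      have hξ_norm := euclideanBall_subset_closedBall hr.le (hξ.le : ξ ∈ euclideanBall 0 r)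
      rw [mem_closedBall_zero_iff] at hξ_norm
      have hξ_taylor := htaylor (y := x + ξ) (by simpa using hξ_norm.trans_lt hre)
      have hξ_dot : ξ ⬝ᵥ ξ = r ^ 2 := by simpa [sqDist] using hξ
      rw [add_sub_cancel_left, hξ_dot] at hξ_taylor
      rwa [hT_eval, hξ, sub_self, mul_zero, sub_zero]
  rw [hT_eval, sqDist_self] at happrox
  simp only [map_zero, mulVec_zero, dotProduct_zero, mul_zero, add_zero] at happrox
  linarith [(abs_le.1 happrox).2]

lemma hessianMatrix_mem_Fc_of_eventually_le {c : ℝ} (hc : ((n : ℝ) - 1) * (π / 2) ≤ c)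
    (hcn : c < n * (π / 2)) {W : C(Fin n → ℝ, ℝ)} (hW : ContDiff ℝ 2 W) {x : Fin n → ℝ}
    (hmean : ∀ (B : Matrix (Fin n) (Fin n) ℝ) (γ : ℝ), B.PosSemidef → 0 < B.trace →
      (∀ A ∈ Fc n c, 2 * γ * B.trace < (B * A).trace) →
      ∀ᶠ r in nhdsWithin (0 : ℝ) (Set.Ioi 0), ∀ Λ, IsHarmonicMeasure B r Λ →
        W x + γ * r ^ 2 ≤ Λ (sphereSlice r W x)) :
    hessianMatrix W x ∈ Fc n c := by
  by_contra hnot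
  obtain ⟨B, δ, hδ, hB, htr, hsep⟩ :=
    exists_separating_posSemidef hc hcn (isSymm_hessianMatrix hW.contDiffAt) hnot
  set β := (B * hessianMatrix W x).trace
  have hγ : ∀ A ∈ Fc n c, 2 * ((β + δ / 2) / (2 * B.trace)) * B.trace < (B * A).trace := by
    intro A hA
    have hA_sep := hsep A hA
    rw [mul_sub, Matrix.trace_sub] at hA_sep
    have hcancel : 2 * ((β + δ / 2) / (2 * B.trace)) * B.trace = β + δ / 2 := by field_simp
    linarith
  obtain ⟨r, hr, hlower, hupper⟩ := (eventually_mem_nhdsWithin.and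
    ((hmean B _ hB htr hγ).and (eventually_apply_sphereSlice_le htr hW x
      (s := δ / (8 * B.trace)) (by positivity)))).exists
  obtain ⟨Λ, hΛ⟩ := exists_isHarmonicMeasure hB htr (Set.mem_Ioi.1 hr).le
  have hle : (β + δ / 2) / (2 * B.trace) ≤ β / (2 * B.trace) + δ / (8 * B.trace) :=
    le_of_mul_le_mul_right (by linarith [hlower Λ hΛ, hupper Λ hΛ]) (pow_pos (Set.mem_Ioi.1 hr) 2)
  have hgap : (β + δ / 2) / (2 * B.trace) =
      β / (2 * B.trace) + δ / (8 * B.trace) + δ / (8 * B.trace) := by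
    field_simp
    ring
  have : 0 < δ / (8 * B.trace) := by positivity
  linarith

lemma exists_continuousMap_eqOn {K : Set (Fin n → ℝ)} (hK : IsClosed K) {w : (Fin n → ℝ) → ℝ}
    (hw : ContinuousOn w K) : ∃ v : C(Fin n → ℝ, ℝ), Set.EqOn v w K := by
  obtain ⟨v, hv⟩ := ContinuousMap.exists_restrict_eq hK
    ⟨fun x : K => w x.1, continuousOn_iff_continuous_domRestrict.1 hw⟩
  exact ⟨v, fun x hx => congrArg (fun f => f ⟨x, hx⟩) hv⟩

open Convolution in
/-- The mollification of `v` by a normalized bump function. -/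
noncomputable def mollification (φ : ContDiffBump (0 : Fin n → ℝ)) (v : C(Fin n → ℝ, ℝ)) :
    (Fin n → ℝ) → ℝ :=
  φ.normed volume ⋆[ContinuousLinearMap.lsmul ℝ ℝ, volume] v

lemma contDiff_mollification (φ : ContDiffBump (0 : Fin n → ℝ)) (v : C(Fin n → ℝ, ℝ)) :
    ContDiff ℝ 2 (mollification φ v) :=
  φ.hasCompactSupport_normed.contDiff_convolution_left _ (n := 2) φ.contDiff_normed
    v.continuous.locallyIntegrable

lemma hessianMatrix_mollification_mem_Fc {c : ℝ} (hc : ((n : ℝ) - 1) * (π / 2) ≤ c)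
    (hcn : c < n * (π / 2)) {D : Set (Fin n → ℝ)} {w : (Fin n → ℝ) → ℝ}
    (hw : IsTypeF (Fc n c) D fun x => (w x : EReal)) {v : C(Fin n → ℝ, ℝ)} {x : Fin n → ℝ}
    {η : ℝ} (hball : Metric.ball x η ⊆ D) (hvw : Set.EqOn v w (Metric.ball x η))
    (φ : ContDiffBump (0 : Fin n → ℝ)) (hφ : φ.rOut < η) :
    hessianMatrix (mollification φ v) x ∈ Fc n c := by
  have hW := contDiff_mollification φ v
  refine hessianMatrix_mem_Fc_of_eventually_le hc hcn (W := ⟨_, hW.continuous⟩) hW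
    fun B γ hB htr hF => ?_
  filter_upwards [Ioo_mem_nhdsGT (sub_pos.2 hφ)] with r ⟨hr, hrη⟩ Λ hΛ
  refine add_le_apply_sphereSlice_of_average Λ φ.continuous_normed φ.hasCompactSupport_normed
    φ.nonneg_normed φ.integral_normed (v := v) (fun _ => rfl) fun z hz => ?_
  have hz_norm : ‖z‖ < φ.rOut := by
    have hz_mem : z ∈ Function.support (φ.normed volume) := hz
    rwa [φ.support_normed_eq, mem_ball_zero_iff] at hz_mem
  have hsub : euclideanBall (x - z) r ⊆ Metric.ball x η := fun y hy => by
    have hy_dist := Metric.mem_closedBall.1 (euclideanBall_subset_closedBall hr.le hy)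
    have hz_dist : dist (x - z) x = ‖z‖ := by rw [dist_eq_norm, sub_sub_cancel_left, norm_neg]
    rw [Metric.mem_ball]
    linarith [dist_triangle y (x - z) x]
  exact hΛ.add_mul_sq_le hw hB htr hF hr (hsub.trans hball) (hvw.mono hsub)

lemma IsTypeF.exists_contDiff_approx {c : ℝ} (hc : ((n : ℝ) - 1) * (π / 2) ≤ c)
    (hcn : c < n * (π / 2)) {D K : Set (Fin n → ℝ)} (hD : IsOpen D) {w : (Fin n → ℝ) → ℝ}
    (hw : IsTypeF (Fc n c) D fun x => (w x : EReal)) (hw_cont : ContinuousOn w D)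
    (hK : IsCompact K) (hKD : K ⊆ D) {ε : ℝ} (hε : 0 < ε) :
    ∃ W : (Fin n → ℝ) → ℝ, ContDiff ℝ 2 W ∧ (∀ x ∈ K, |W x - w x| ≤ ε) ∧
      ∀ x ∈ K, hessianMatrix W x ∈ Fc n c := by
  obtain ⟨η, hη, hηD⟩ := hK.exists_cthickening_subset_open hD hKD
  obtain ⟨v, hvw⟩ :=
    exists_continuousMap_eqOn (Metric.isClosed_cthickening (E := K)) (hw_cont.mono hηD)
  have hK_sub : K ⊆ Metric.cthickening η K := Metric.self_subset_cthickening K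
  have hball : ∀ x ∈ K, Metric.ball x η ⊆ Metric.cthickening η K := fun x hx =>
    (Metric.ball_subset_thickening hx η).trans (Metric.thickening_subset_cthickening η K)
  obtain ⟨e, he, hv_unif⟩ := Metric.uniformContinuousOn_iff.1
    (hK.cthickening.uniformContinuousOn_of_continuous v.continuous.continuousOn) ε hε
  have hR : 0 < min (η / 2) e := lt_min (half_pos hη) he
  set φ : ContDiffBump (0 : Fin n → ℝ) :=
    ⟨min (η / 2) e / 2, min (η / 2) e, half_pos hR, half_lt_self hR⟩
  have hφη : φ.rOut < η := (min_le_left _ _).trans_lt (half_lt_self hη)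
  refine ⟨mollification φ v, contDiff_mollification φ v, fun x hx => ?_, fun x hx => ?_⟩
  · rw [← hvw (hK_sub hx)]
    refine φ.dist_normed_convolution_le v.continuous.aestronglyMeasurable fun y hy => ?_
    exact (hv_unif y (hball x hx (Metric.ball_subset_ball hφη.le hy)) x (hK_sub hx)
      ((Metric.mem_ball.1 hy).trans_le (min_le_right _ _))).le
  · exact hessianMatrix_mollification_mem_Fc hc hcn hw ((hball x hx).trans hηD)
      (hvw.mono (hball x hx)) φ hφη

end HarmonicMeasure

/-! ### Comparison with separated functions -/

section Viscosity

variable {m : ℕ}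

lemma IsTypeF.hessianMatrix_add_smul_one_mem {G : Set (Matrix (Fin m) (Fin m) ℝ)}
    {U : Set (Fin m → ℝ)} {V φ : (Fin m → ℝ) → ℝ} {x₁ : Fin m → ℝ}
    (hV : IsTypeF G U fun x => (V x : EReal)) (hU : U ∈ nhds x₁) (hφ : ContDiffAt ℝ 2 φ x₁)
    (hmax : IsLocalMax (fun x => V x - φ x) x₁) {κ : ℝ} (hκ : 0 < κ) :
    hessianMatrix φ x₁ + κ • 1 ∈ G := by
  by_contra hG
  obtain ⟨q, hq, hqV, r, hr, hball, hsphere⟩ := exists_touching_mvPolynomial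
    (K := {x | V x - φ x ≤ V x₁ - φ x₁} ∩ U) (mem_interior_iff_mem_nhds.2 (inter_mem hmax hU)) hφ
    (fun _ hx => hx.1) hκ
  have hle := hV.le_of_le_frontier (contDiff_eval_mvPolynomial q) (fun x _ => (hq x).symm ▸ hG)
    (isCompact_euclideanBall x₁ hr.le) (hball.trans Set.inter_subset_right)
    (fun x hx => EReal.coe_le_coe_iff.2 (hsphere x (frontier_euclideanBall_subset x₁ r hx)).le)
    x₁ (self_mem_euclideanBall x₁ r)
  exact hqV.not_ge (EReal.coe_le_coe_iff.1 hle)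

lemma IsSubaffine.congr {U : Set (Fin m → ℝ)} {v w : (Fin m → ℝ) → EReal} (hv : IsSubaffine U v)
    (h : Set.EqOn v w U) : IsSubaffine U w := fun a K hK hKU hfr x hx =>
  h (hKU hx) ▸ hv a K hK hKU
    (fun z hz => (h (hKU (hK.isClosed.frontier_subset hz))).symm ▸ hfr z hz) x hx

lemma IsTypeF.congr {F : Set (Matrix (Fin m) (Fin m) ℝ)} {U : Set (Fin m → ℝ)}
    {v w : (Fin m → ℝ) → EReal} (hv : IsTypeF F U v) (h : Set.EqOn v w U) : IsTypeF F U w :=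
  ⟨fun x hx => h hx ▸ hv.1 x hx,
    fun x hx => (hv.2.1 x hx).congr_of_eventuallyEq hx
      (eventually_mem_nhdsWithin.mono fun _ hz _ => by rw [h hz]),
    fun p hp hpF => (hv.2.2 p hp hpF).congr fun x hx => congrArg (· + (p x : EReal)) (h hx)⟩

end Viscosity

section ConvexCandidate

variable {n : ℕ} {c : ℝ} {D : Set (Fin n → ℝ)}

lemma IsTypeF.le_of_segment_Fc {w : (Fin n → ℝ) → EReal} (hw : IsTypeF (Fc n c) D w)
    (hc : ((n : ℝ) - 1) * (π / 2) ≤ c) (hD : IsOpen D) (hconv : Convex ℝ D) {y z : Fin n → ℝ}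
    (hy : y ∈ D) (hz : z ∈ D) (hyz : y ≠ z) {α β : ℝ} (hα : w y ≤ (α : EReal))
    (hβ : w z ≤ (β : EReal)) {s : ℝ} (hs : s ∈ Set.Icc (0 : ℝ) 1) :
    w (y + s • (z - y)) ≤ ((α + s * (β - α) : ℝ) : EReal) := by
  refine hw.le_of_segment hD hyz (hconv.segment_subset hy hz) (fun A _ hneg hA => ?_) hα hβ hs
  exact hneg.not_ge (by simpa using (posSemidef_of_mem_Fc hc hA).dotProduct_mulVec_nonneg (z - y))

lemma exists_mem_lineMap_eq (hD : IsOpen D) {x z : Fin n → ℝ} (hx : x ∈ D) (hzx : z ≠ x) :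
    ∃ p ∈ D, z ≠ p ∧ ∃ s ∈ Set.Ioo (0 : ℝ) 1, z + s • (p - z) = x := by
  have hcont : Continuous fun e : ℝ => z + e • (x - z) := by fun_prop
  have hnear : ∀ᶠ e in nhds (1 : ℝ), z + e • (x - z) ∈ D :=
    hcont.continuousAt.eventually_mem (hD.mem_nhds (by simpa using hx))
  obtain ⟨e, he, h1e⟩ := ((hnear.filter_mono nhdsWithin_le_nhds).and
    (self_mem_nhdsWithin (s := Set.Ioi (1 : ℝ)))).exists
  have he₀ : (0 : ℝ) < e := one_pos.trans h1e
  refine ⟨_, he, ?_, e⁻¹, ⟨inv_pos.2 he₀, inv_lt_one_of_one_lt₀ h1e⟩, ?_⟩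
  · simpa [eq_comm, sub_eq_zero, he₀.ne'] using hzx
  · rw [add_sub_cancel_left, inv_smul_smul₀ he₀.ne', add_sub_cancel]

lemma IsTypeF.eq_bot_of_eq_bot {w : (Fin n → ℝ) → EReal} (hw : IsTypeF (Fc n c) D w)
    (hc : ((n : ℝ) - 1) * (π / 2) ≤ c) (hD : IsOpen D) (hconv : Convex ℝ D) {x z : Fin n → ℝ}
    (hz : z ∈ D) (hwz : w z = ⊥) (hx : x ∈ D) : w x = ⊥ := by
  rcases eq_or_ne z x with rfl | hzx
  · exact hwz
  obtain ⟨p, hp, hzp, s, hs, rfl⟩ := exists_mem_lineMap_eq hD hx hzx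
  obtain ⟨β, hβ, -⟩ := EReal.lt_iff_exists_real_btwn.1 (lt_top_iff_ne_top.2 (hw.1 p hp))
  refine le_bot_iff.1 (EReal.le_of_forall_lt_iff_le.1 fun b _ => ?_)
  have hs' : 1 - s ≠ 0 := (sub_pos.2 hs.2).ne'
  convert hw.le_of_segment_Fc hc hD hconv hz hp hzp (α := (b - s * β) / (1 - s))
    (hwz ▸ bot_le) hβ.le (Set.Ioo_subset_Icc_self hs) using 2
  field_simp
  ring

lemma IsTypeF.convexOn_Fc {w : (Fin n → ℝ) → ℝ} (hw : IsTypeF (Fc n c) D fun x => (w x : EReal))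
    (hc : ((n : ℝ) - 1) * (π / 2) ≤ c) (hD : IsOpen D) (hconv : Convex ℝ D) : ConvexOn ℝ D w := by
  refine ⟨hconv, fun y hy z hz a b ha hb hab => ?_⟩
  obtain rfl : a = 1 - b := eq_sub_of_add_eq hab
  rcases eq_or_ne y z with rfl | hyz
  · rw [← add_smul, ← add_smul, hab, one_smul, one_smul]
  have hle := EReal.coe_le_coe_iff.1
    (hw.le_of_segment_Fc hc hD hconv hy hz hyz le_rfl le_rfl ⟨hb, sub_nonneg.1 ha⟩)
  rw [show (1 - b) • y + b • z = y + b • (z - y) by module]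
  exact hle.trans_eq (by rw [smul_eq_mul, smul_eq_mul]; ring)

end ConvexCandidate

section Comparison

open MvPolynomial

variable {n : ℕ} {c τ : ℝ} {D : Set (Fin n → ℝ)} {u : (Fin (n + 1) → ℝ) → ℝ} {w : (Fin n → ℝ) → ℝ}

lemma hessianMatrix_comp_tail {W : (Fin n → ℝ) → ℝ} (hW : ContDiff ℝ 2 W) (y : Fin (n + 1) → ℝ) :
    hessianMatrix (fun y => W (Fin.tail y)) y = bordered 0 0 (hessianMatrix W (Fin.tail y)) := by
  let tailL : (Fin (n + 1) → ℝ) →L[ℝ] (Fin n → ℝ) :=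
    (LinearMap.funLeft ℝ ℝ Fin.succ).toContinuousLinearMap
  have htail : ∀ d, tailL d = Fin.tail d := fun _ => rfl
  have hsingle_zero : Fin.tail (Pi.single 0 1 : Fin (n + 1) → ℝ) = 0 := by
    ext k
    simp [Fin.tail]
  have hsingle_succ : ∀ i : Fin n,
      Fin.tail (Pi.single i.succ 1 : Fin (n + 1) → ℝ) = Pi.single i 1 := fun i => by
    ext k
    simp [Fin.tail, Pi.single_apply]
  ext i j
  rw [hessianMatrix, of_apply, show (fun y => W (Fin.tail y)) = W ∘ tailL from rfl,
    tailL.iteratedFDeriv_comp_right hW _ le_rfl,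
    ContinuousMultilinearMap.compContinuousLinearMap_apply, iteratedFDeriv_two_apply]
  cases i using Fin.cases <;> cases j using Fin.cases <;>
    simp [htail, hsingle_zero, hsingle_succ, bordered, hessianMatrix_apply]

lemma bordered_zero_add_smul_one (κ : ℝ) (S : Matrix (Fin n) (Fin n) ℝ) :
    bordered κ 0 (S + κ • 1) = bordered 0 0 S + κ • 1 := by
  ext i j
  cases i using Fin.cases <;> cases j using Fin.cases <;>
    simp [bordered, one_apply, (Fin.succ_ne_zero _).symm]

lemma not_isLocalMax_separated_sub (hc : n * (π / 2) ≤ c) (hcn : c - π / 2 < n * (π / 2))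
    {U : Set (Fin (n + 1) → ℝ)} (hu : IsTypeF (calF n (-c)) U fun y => ((-u y : ℝ) : EReal))
    {W : (Fin n → ℝ) → ℝ} (hW : ContDiff ℝ 2 W) {y : Fin (n + 1) → ℝ} (hU : U ∈ nhds y)
    (hWF : hessianMatrix W (Fin.tail y) ∈ Fc n (c - π / 2)) {κ : ℝ} (hκ : 0 < κ) :
    ¬ IsLocalMax (fun y => W (Fin.tail y) + τ * y 0 + κ * sqDist 0 y - u y) y := fun hmax => by
  set p : MvPolynomial (Fin (n + 1)) ℝ :=
    quadPoly 0 (-τ • LinearMap.proj 0) (-(2 * κ) • 1) 0 with hp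
  have hp_eval : ∀ y, eval y p = -(τ * y 0 + κ * sqDist 0 y) := fun y => by
    rw [hp, eval_quadPoly, smul_mulVec, one_mulVec, dotProduct_smul, sqDist]
    simp only [sub_zero, LinearMap.smul_apply, LinearMap.proj_apply, smul_eq_mul]
    ring
  have hp_contDiff := (contDiff_eval_mvPolynomial p (k := 2)).contDiffAt (x := y)
  have hW_contDiff : ContDiffAt ℝ 2 (fun y : Fin (n + 1) → ℝ => W (Fin.tail y)) y :=
    (hW.comp (LinearMap.funLeft ℝ ℝ Fin.succ).toContinuousLinearMap.contDiff).contDiffAt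
  refine neg_bordered_zero_notMem_calF hκ (hWF.1.add (isSymm_one.smul κ))
    (lt_liftedAngle_add_smul_one (by linarith) hcn hκ hWF) ?_
  convert hu.hessianMatrix_add_smul_one_mem hU (hp_contDiff.sub hW_contDiff) (κ := κ) ?_ hκ using 1
  · rw [hessianMatrix_sub hp_contDiff hW_contDiff, hessianMatrix_comp_tail hW,
      hessianMatrix_quadPoly _ _ (isSymm_one.smul _), bordered_zero_add_smul_one]
    module
  · convert hmax using 2 with y
    rw [hp_eval]
    ring

/- At a maximum of `w + τ t - u` the smoothed `w`, tilted by `κ |y|²`, would touch `u` strictly from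
below. -/
lemma add_mul_le_of_isCompact_superlevel (hc : n * (π / 2) ≤ c) (hcn : c - π / 2 < n * (π / 2))
    (hD : IsOpen D) (hu : IsTypeF (calF n (-c)) (openCylinder D) fun y => ((-u y : ℝ) : EReal))
    (hcont : ContinuousOn u (openCylinder D))
    (hw : IsTypeF (Fc n (c - π / 2)) D fun x => (w x : EReal)) (hw_cont : ContinuousOn w D)
    (hlevel : ∀ η > 0, ∃ K, IsCompact K ∧ K ⊆ openCylinder D ∧
      ∀ y ∈ openCylinder D, η ≤ w (Fin.tail y) + τ * y 0 - u y → y ∈ K) :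
    ∀ y ∈ openCylinder D, w (Fin.tail y) + τ * y 0 ≤ u y := fun y hy => by
  by_contra! hlt
  obtain ⟨m, hm⟩ : ∃ m, m = w (Fin.tail y) + τ * y 0 - u y := ⟨_, rfl⟩
  have hm_pos : 0 < m := by linarith
  obtain ⟨K, hK, hKD, hlevel_K⟩ := hlevel (m / 2) (half_pos hm_pos)
  obtain ⟨r, hr, hrD⟩ := hK.exists_cthickening_subset_open (isOpen_openCylinder hD) hKD
  have hyr : y ∈ Metric.cthickening r K :=
    Metric.self_subset_cthickening K (hlevel_K y hy (by linarith))
  obtain ⟨W, hW, hWw, hWF⟩ := hw.exists_contDiff_approx (by linarith) hcn hD hw_cont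
    (hK.cthickening.image continuous_finTail) (Set.image_subset_iff.2 fun _ hz => (hrD hz).2)
    (show 0 < m / 8 by positivity)
  obtain ⟨κ, hκ, hκ_le⟩ := exists_pos_forall_mul_le (hK.cthickening (r := r))
    (continuous_sqDist 0).continuousOn (show 0 < m / 8 by positivity)
  have hΦ_cont : ContinuousOn (fun y => W (Fin.tail y) + τ * y 0 + κ * sqDist 0 y - u y)
      (Metric.cthickening r K) := by
    refine ContinuousOn.sub (Continuous.continuousOn ?_) (hcont.mono hrD)
    exact ((hW.continuous.comp continuous_finTail).add (by fun_prop)).add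
      ((continuous_sqDist 0).const_mul κ)
  obtain ⟨y₁, hy₁, hmax⟩ := hK.cthickening.exists_isMaxOn ⟨y, hyr⟩ hΦ_cont
  have hy₁K : y₁ ∈ K := hlevel_K y₁ (hrD hy₁) <| by
    have hmax_y : W (Fin.tail y) + τ * y 0 + κ * sqDist 0 y - u y ≤
      W (Fin.tail y₁) + τ * y₁ 0 + κ * sqDist 0 y₁ - u y₁ := hmax hyr
    have hlower := (abs_le.1 (hWw _ ⟨y, hyr, rfl⟩)).1
    have hupper := (abs_le.1 (hWw _ ⟨y₁, hy₁, rfl⟩)).2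
    linarith [hκ_le y₁ hy₁, mul_nonneg hκ.le (sqDist_nonneg 0 y)]
  exact not_isLocalMax_separated_sub hc hcn hu hW ((isOpen_openCylinder hD).mem_nhds (hrD hy₁))
    (hWF _ ⟨y₁, hy₁, rfl⟩) hκ (hmax.isLocalMax (mem_of_superset
      (Metric.isOpen_thickening.mem_nhds (Metric.self_subset_thickening hr K hy₁K))
      (Metric.thickening_subset_cthickening r K)))

lemma isCompact_closedCylinder (hD : Bornology.IsBounded D) : IsCompact (closedCylinder D) := by
  convert (isCompact_Icc (a := (0 : ℝ)) (b := 1)).prod hD.isCompact_closure |>.image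
    continuous_finCons
  ext y
  refine ⟨fun hy => ⟨(y 0, Fin.tail y), hy, Fin.cons_self_tail y⟩, ?_⟩
  rintro ⟨p, hp, rfl⟩
  exact cons_mem_closedCylinder.2 hp

lemma eventually_separated_sub_lt (hcont : ContinuousOn u (closedCylinder D))
    {y : Fin (n + 1) → ℝ} (hy : y ∈ closedCylinder D)
    (hbd : ∀ b, u y - τ * y 0 < b → ∀ᶠ x in nhdsWithin (Fin.tail y) D, w x < b) {η : ℝ}
    (hη : 0 < η) :
    ∀ᶠ z in nhdsWithin y (openCylinder D), w (Fin.tail z) + τ * z 0 - u z < η := by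
  have htail : Tendsto (fun z : Fin (n + 1) → ℝ => (Fin.tail z : Fin n → ℝ))
      (nhdsWithin y (openCylinder D)) (nhdsWithin (Fin.tail y) D) :=
    continuous_finTail.continuousWithinAt.tendsto_nhdsWithin fun _ hz => hz.2
  have hu_sub : ContinuousWithinAt (fun z => u z - τ * z 0) (openCylinder D) y :=
    ((hcont y hy).mono (openCylinder_subset_closedCylinder D)).sub
      (continuous_const.mul (continuous_apply 0)).continuousWithinAt
  filter_upwards [htail.eventually (hbd (u y - τ * y 0 + η / 2) (by linarith)),
    hu_sub.eventually (lt_mem_nhds (show u y - τ * y 0 - η / 2 < _ by linarith))] with z hwz huz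
  linarith

lemma add_mul_le_of_eventually_lt (hc : n * (π / 2) ≤ c) (hcn : c - π / 2 < n * (π / 2))
    (hD : IsOpen D) (hbdd : Bornology.IsBounded D)
    (hu : IsTypeF (calF n (-c)) (openCylinder D) fun y => ((-u y : ℝ) : EReal))
    (hcont : ContinuousOn u (closedCylinder D))
    (hw : IsTypeF (Fc n (c - π / 2)) D fun x => (w x : EReal)) (hw_cont : ContinuousOn w D)
    (hbd : ∀ y ∈ closedCylinder D, y ∉ openCylinder D → ∀ b, u y - τ * y 0 < b →
      ∀ᶠ x in nhdsWithin (Fin.tail y) D, w x < b) :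
    ∀ y ∈ openCylinder D, w (Fin.tail y) + τ * y 0 ≤ u y := by
  refine add_mul_le_of_isCompact_superlevel hc hcn hD hu
    (hcont.mono (openCylinder_subset_closedCylinder D)) hw hw_cont fun η hη => ?_
  have hQ := isCompact_closedCylinder hbdd
  have hsub : closure {y ∈ openCylinder D | η ≤ w (Fin.tail y) + τ * y 0 - u y} ⊆
      closedCylinder D :=
    closure_minimal (fun y hy => openCylinder_subset_closedCylinder D hy.1) hQ.isClosed
  refine ⟨_, hQ.of_isClosed_subset isClosed_closure hsub, fun y hy => ?_,
    fun y hy hle => subset_closure ⟨hy, hle⟩⟩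
  by_contra hyD
  have hlt := eventually_nhdsWithin_iff.1
    (eventually_separated_sub_lt hcont (hsub hy) (hbd y (hsub hy) hyD) hη)
  obtain ⟨z, ⟨hz, hle⟩, hz_lt⟩ := (mem_closure_iff_frequently.1 hy |>.and_eventually hlt).exists
  exact hle.not_gt (hz_lt hz)

end Comparison

/-! ### The obstacle problem -/

section Obstacle

variable {m : ℕ} {F : Set (Matrix (Fin m) (Fin m) ℝ)} {D : Set (Fin m → ℝ)}
  {v v' f f' : (Fin m → ℝ) → ℝ}

/-- The competitors in the obstacle problem on `D` with obstacle `v` and boundary values `f`: the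
functions of type `F` below `v` whose upper boundary limits are below `f`. -/
def obstacleCandidates (F : Set (Matrix (Fin m) (Fin m) ℝ)) (D : Set (Fin m → ℝ))
    (v f : (Fin m → ℝ) → ℝ) : Set ((Fin m → ℝ) → EReal) :=
  {w | IsTypeF F D w ∧ (∀ z ∈ D, w z ≤ (v z : EReal)) ∧
    ∀ y ∈ frontier D, limsup w (nhdsWithin y D) ≤ (f y : EReal)}

/-- The envelope `P(v; f)` of the obstacle problem for `F` on `D`: the supremum of the
competitors. -/
noncomputable def obstacleEnvelope (F : Set (Matrix (Fin m) (Fin m) ℝ)) (D : Set (Fin m → ℝ))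
    (v f : (Fin m → ℝ) → ℝ) (x : Fin m → ℝ) : EReal :=
  ⨆ w ∈ obstacleCandidates F D v f, w x

lemma obstacleEnvelope_congr (hv : Set.EqOn v v' D) (hf : Set.EqOn f f' (frontier D)) :
    obstacleEnvelope F D v f = obstacleEnvelope F D v' f' := by
  have hcand : obstacleCandidates F D v f = obstacleCandidates F D v' f' := by
    ext w
    exact and_congr Iff.rfl (and_congr (forall₂_congr fun z hz => by rw [hv hz])
      (forall₂_congr fun y hy => by rw [hf hy]))
  unfold obstacleEnvelope
  rw [hcand]

end Obstacle

section SliceEnvelope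

variable {n : ℕ} {c τ : ℝ} {D : Set (Fin n → ℝ)} {u : (Fin (n + 1) → ℝ) → ℝ}

/-- The obstacle `min {u(0, ·), u(1, ·) - τ}` read off the end slices of `u`. -/
def sliceObstacle (u : (Fin (n + 1) → ℝ) → ℝ) (τ : ℝ) (z : Fin n → ℝ) : ℝ :=
  min (u (Fin.cons 0 z)) (u (Fin.cons 1 z) - τ)

lemma sliceObstacle_le (u : (Fin (n + 1) → ℝ) → ℝ) (τ : ℝ) {s : ℝ} (hs : s = 0 ∨ s = 1)
    (z : Fin n → ℝ) : sliceObstacle u τ z ≤ u (Fin.cons s z) - τ * s := by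
  rcases hs with rfl | rfl
  · rw [mul_zero, sub_zero]
    exact min_le_left _ _
  · rw [mul_one]
    exact min_le_right _ _

lemma partialLegendre_mem_obstacleCandidates (hc : n * (π / 2) ≤ c)
    (hcn : c - π / 2 < n * (π / 2)) (hD : IsOpen D) (hcont : ContinuousOn u (closedCylinder D))
    (hu : IsTypeF (calF n c) (openCylinder D) fun y => (u y : EReal)) (τ : ℝ) :
    (fun x => (partialLegendre u τ x : EReal)) ∈
      obstacleCandidates (Fc n (c - π / 2)) D (sliceObstacle u τ) (partialLegendre u τ) := by
  refine ⟨isTypeF_partialLegendre hc hcn hD hcont hu τ, fun z hz => ?_,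
    fun y hy => limsup_partialLegendre_le hcont τ hy.1⟩
  refine EReal.coe_le_coe_iff.2 (le_min ?_ ?_)
  · simpa using partialLegendre_le (τ := τ) hcont (subset_closure hz)
      (Set.left_mem_Icc.2 zero_le_one)
  · simpa using partialLegendre_le (τ := τ) hcont (subset_closure hz)
      (Set.right_mem_Icc.2 zero_le_one)

lemma eventually_lt_of_mem_obstacleCandidates {F : Set (Matrix (Fin n) (Fin n) ℝ)} (hD : IsOpen D)
    (hcont : ContinuousOn u (closedCylinder D)) {w : (Fin n → ℝ) → ℝ} (hw_cont : ContinuousOn w D)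
    (hw : (fun x => (w x : EReal)) ∈
      obstacleCandidates F D (sliceObstacle u τ) (partialLegendre u τ))
    {y : Fin (n + 1) → ℝ} (hy : y ∈ closedCylinder D) (hy' : y ∉ openCylinder D) {b : ℝ}
    (hb : u y - τ * y 0 < b) : ∀ᶠ x in nhdsWithin (Fin.tail y) D, w x < b := by
  obtain ⟨s, x, rfl⟩ : ∃ s x, y = Fin.cons s x := ⟨y 0, Fin.tail y, (Fin.cons_self_tail y).symm⟩
  rw [Fin.cons_zero] at hb
  obtain ⟨hs, hx⟩ := cons_mem_closedCylinder.1 hy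
  rw [Fin.tail_cons]
  by_cases hxD : x ∈ D
  · have hs_end : s = 0 ∨ s = 1 := by
      by_contra! hne
      exact hy' (cons_mem_openCylinder.2
        ⟨⟨hs.1.lt_of_ne' hne.1, hs.2.lt_of_ne hne.2⟩, hxD⟩)
    have hle := (EReal.coe_le_coe_iff.1 (hw.2.1 x hxD)).trans (sliceObstacle_le u τ hs_end x)
    exact (hw_cont x hxD).eventually (gt_mem_nhds (hle.trans_lt hb))
  · have hlim := hw.2.2 x (hD.frontier_eq.symm ▸ ⟨hx, hxD⟩)
    have hlt := (EReal.coe_le_coe_iff.2 (partialLegendre_le (τ := τ) hcont hx hs)).trans_lt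
      (EReal.coe_lt_coe_iff.2 hb)
    exact (eventually_lt_of_limsup_lt (hlim.trans_lt hlt)).mono fun _ h => EReal.coe_lt_coe_iff.1 h

lemma add_mul_le_of_coe_mem_obstacleCandidates (hc : n * (π / 2) ≤ c)
    (hcn : c - π / 2 < n * (π / 2)) (hD : IsOpen D) (hconv : Convex ℝ D)
    (hbdd : Bornology.IsBounded D) (hcont : ContinuousOn u (closedCylinder D))
    (hu : IsTypeF (calF n (-c)) (openCylinder D) fun y => ((-u y : ℝ) : EReal))
    {w : (Fin n → ℝ) → ℝ} (hw : (fun x => (w x : EReal)) ∈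
      obstacleCandidates (Fc n (c - π / 2)) D (sliceObstacle u τ) (partialLegendre u τ))
    {x : Fin n → ℝ} (hx : x ∈ D) {t : ℝ} (ht : t ∈ Set.Icc (0 : ℝ) 1) :
    w x + τ * t ≤ u (Fin.cons t x) := by
  by_cases ht_end : t = 0 ∨ t = 1
  · linarith [(EReal.coe_le_coe_iff.1 (hw.2.1 x hx)).trans (sliceObstacle_le u τ ht_end x)]
  have hw_cont := (hw.1.convexOn_Fc (by linarith) hD hconv).continuousOn hD
  push Not at ht_end
  simpa using add_mul_le_of_eventually_lt hc hcn hD hbdd hu hcont hw.1 hw_cont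
    (fun y hy hy' b hb => eventually_lt_of_mem_obstacleCandidates hD hcont hw_cont hw hy hy' hb)
    (Fin.cons t x)
    (cons_mem_openCylinder.2 ⟨⟨ht.1.lt_of_ne' ht_end.1, ht.2.lt_of_ne ht_end.2⟩, hx⟩)

lemma add_mul_le_of_mem_obstacleCandidates (hc : n * (π / 2) ≤ c)
    (hcn : c - π / 2 < n * (π / 2)) (hD : IsOpen D) (hconv : Convex ℝ D)
    (hbdd : Bornology.IsBounded D) (hcont : ContinuousOn u (closedCylinder D))
    (hu : IsTypeF (calF n (-c)) (openCylinder D) fun y => ((-u y : ℝ) : EReal))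
    {w : (Fin n → ℝ) → EReal}
    (hw : w ∈ obstacleCandidates (Fc n (c - π / 2)) D (sliceObstacle u τ) (partialLegendre u τ))
    {x : Fin n → ℝ} (hx : x ∈ D) {t : ℝ} (ht : t ∈ Set.Icc (0 : ℝ) 1) :
    w x + ((τ * t : ℝ) : EReal) ≤ (u (Fin.cons t x) : EReal) := by
  by_cases hbot : ∃ z ∈ D, w z = ⊥
  · obtain ⟨z, hz, hwz⟩ := hbot
    rw [hw.1.eq_bot_of_eq_bot (by linarith) hD hconv hz hwz hx, EReal.bot_add]
    exact bot_le
  push Not at hbot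
  have hcoe : Set.EqOn w (fun x => ((w x).toReal : EReal)) D := fun z hz =>
    (EReal.coe_toReal (hw.1.1 z hz) (hbot z hz)).symm
  have hmem : (fun x => ((w x).toReal : EReal)) ∈
      obstacleCandidates (Fc n (c - π / 2)) D (sliceObstacle u τ) (partialLegendre u τ) :=
    ⟨hw.1.congr hcoe, fun z hz => hcoe hz ▸ hw.2.1 z hz, fun y hy =>
      (limsup_congr (hcoe.eventuallyEq_of_mem self_mem_nhdsWithin)).symm.trans_le (hw.2.2 y hy)⟩
  rw [hcoe hx, ← EReal.coe_add, EReal.coe_le_coe_iff]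
  exact add_mul_le_of_coe_mem_obstacleCandidates hc hcn hD hconv hbdd hcont hu hmem hx ht

lemma coe_le_iSup_obstacleEnvelope_add_mul (hc : n * (π / 2) ≤ c)
    (hcn : c - π / 2 < n * (π / 2)) (hD : IsOpen D) (hcont : ContinuousOn u (closedCylinder D))
    (hu : IsTypeF (calF n c) (openCylinder D) fun y => (u y : EReal)) {x : Fin n → ℝ} (hx : x ∈ D)
    {t : ℝ} (ht : t ∈ Set.Icc (0 : ℝ) 1) :
    (u (Fin.cons t x) : EReal) ≤ ⨆ τ : ℝ, (obstacleEnvelope (Fc n (c - π / 2)) D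
      (sliceObstacle u τ) (partialLegendre u τ) x + ((τ * t : ℝ) : EReal)) := by
  refine EReal.ge_of_forall_gt_iff_ge.1 fun b hb => ?_
  obtain ⟨τ, hτ⟩ := exists_le_partialLegendre_add_mul hc hD hcont hu hx ht
    (EReal.coe_lt_coe_iff.1 hb)
  refine le_iSup_of_le τ ((EReal.coe_le_coe_iff.2 hτ).trans ?_)
  rw [EReal.coe_add]
  gcongr
  exact le_iSup₂_of_le _ (partialLegendre_mem_obstacleCandidates hc hcn hD hcont hu τ) le_rfl

lemma iSup_obstacleEnvelope_add_mul_le (hc : n * (π / 2) ≤ c) (hcn : c - π / 2 < n * (π / 2))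
    (hD : IsOpen D) (hconv : Convex ℝ D) (hbdd : Bornology.IsBounded D)
    (hcont : ContinuousOn u (closedCylinder D))
    (hu : IsTypeF (calF n (-c)) (openCylinder D) fun y => ((-u y : ℝ) : EReal))
    {x : Fin n → ℝ} (hx : x ∈ D) {t : ℝ} (ht : t ∈ Set.Icc (0 : ℝ) 1) :
    ⨆ τ : ℝ, (obstacleEnvelope (Fc n (c - π / 2)) D (sliceObstacle u τ) (partialLegendre u τ) x +
      ((τ * t : ℝ) : EReal)) ≤ (u (Fin.cons t x) : EReal) := by
  have hsub : ∀ (a : EReal) (r b : ℝ), a ≤ (b : EReal) - (r : EReal) ↔ a + r ≤ b := fun a r b =>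
    EReal.le_sub_iff_add_le (.inl (EReal.coe_ne_bot r)) (.inl (EReal.coe_ne_top r))
  refine iSup_le fun τ => (hsub _ _ _).1 (iSup₂_le fun w hw => (hsub _ _ _).2 ?_)
  exact add_mul_le_of_mem_obstacleCandidates hc hcn hD hconv hbdd hcont hu hw hx ht

lemma iInf_sub_mul_eq_partialLegendre {g : (Fin (n + 1) → ℝ) → ℝ} (τ : ℝ) {y : Fin n → ℝ}
    (hg : ∀ s ∈ Set.Icc (0 : ℝ) 1, u (Fin.cons s y) = g (Fin.cons s y)) :
    ⨅ r : Set.Icc (0 : ℝ) 1, (g (Fin.cons (r : ℝ) y) - (r : ℝ) * τ) = partialLegendre u τ y := by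
  rw [partialLegendre, sInf_image']
  exact iInf_congr fun r => by rw [hg r r.2, mul_comm]

end SliceEnvelope

theorem dsl_legendre_formula_general {n : ℕ} {c : ℝ} (hc : (n : ℝ) * π / 2 ≤ c)
    (hc' : c < ((n : ℝ) + 1) * π / 2) {D : Set (Fin n → ℝ)} (hD : IsOpen D)
    (hbdd : Bornology.IsBounded D) (hconv : Convex ℝ D) {g u : (Fin (n + 1) → ℝ) → ℝ}
    (hcont : ContinuousOn u (closedCylinder D))
    (hsub : IsTypeF (calF n c) (openCylinder D) fun y => (u y : EReal))
    (hsup : IsTypeF (calF n (-c)) (openCylinder D) fun y => ((-u y : ℝ) : EReal))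
    (hbdry : ∀ y ∈ frontier (closedCylinder D), u y = g y) {t : ℝ} (ht : t ∈ Set.Icc (0 : ℝ) 1)
    {x : Fin n → ℝ} (hx : x ∈ D) :
    (u (Fin.cons t x) : EReal) = ⨆ τ : ℝ, (obstacleEnvelope (Fc n (c - π / 2)) D
      (fun z => min (g (Fin.cons 0 z)) (g (Fin.cons 1 z) - τ))
      (fun y => ⨅ r : Set.Icc (0 : ℝ) 1, (g (Fin.cons (r : ℝ) y) - (r : ℝ) * τ)) x +
      ((τ * t : ℝ) : EReal)) := by
  have hcn : c - π / 2 < n * (π / 2) := by linarith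
  rw [← mul_div_assoc'] at hc
  have hend : ∀ s : ℝ, s = 0 ∨ s = 1 → ∀ z ∈ D, u (Fin.cons s z) = g (Fin.cons s z) :=
    fun s hs z hz => hbdry _ (cons_mem_frontier_closedCylinder_of_eq hs (subset_closure hz))
  have henv : ∀ τ, obstacleEnvelope (Fc n (c - π / 2)) D
      (fun z => min (g (Fin.cons 0 z)) (g (Fin.cons 1 z) - τ))
      (fun y => ⨅ r : Set.Icc (0 : ℝ) 1, (g (Fin.cons (r : ℝ) y) - (r : ℝ) * τ)) =
      obstacleEnvelope (Fc n (c - π / 2)) D (sliceObstacle u τ) (partialLegendre u τ) := fun τ =>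
    obstacleEnvelope_congr
      (fun z hz => by rw [sliceObstacle, hend 0 (.inl rfl) z hz, hend 1 (.inr rfl) z hz])
      fun y hy => iInf_sub_mul_eq_partialLegendre τ fun s hs =>
        hbdry _ (cons_mem_frontier_closedCylinder_of_mem_frontier hD hconv hs hy)
  simp only [henv]
  exact le_antisymm (coe_le_iSup_obstacleEnvelope_add_mul hc hcn hD hcont hsub hx ht)
    (iSup_obstacleEnvelope_add_mul_le hc hcn hD hconv hbdd hcont hsup hx ht)

/-- **Legendre transform formula for solutions of the degenerate special Lagrangian
equation.**  Let `D ⊂ ℝⁿ` be a bounded strictly convex domain and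
`c ∈ [nπ/2, (n+1)π/2)`.  Let `g` be continuous, and `C²`, on `∂([0,1] × D)` with
`g(0,·), g(1,·) ∈ F_{c−π/2}(D)`.  If `u ∈ C⁰([0,1] × D̄)` satisfies
`u ∈ ℱ_c((0,1) × D)`, `−u ∈ ℱ_{−c}((0,1) × D)` and `u = g` on `∂([0,1] × D)`, then for
all `(t,x) ∈ [0,1] × D`, `u(t,x) = sup_{τ ∈ ℝ} (h_τ(x) + τt)`, where
`h_τ = P_{c−π/2}(min{g(0,·), g(1,·) − τ}; inf_{r∈[0,1]}(g(r,·) − rτ))` is the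
obstacle-problem envelope. -/
theorem dsl_legendre_formula (n : ℕ) (c : ℝ)
    (hc : (n : ℝ) * π / 2 ≤ c) (hc' : c < ((n : ℝ) + 1) * π / 2)
    (D : Set (Fin n → ℝ)) (hDopen : IsOpen D) (hDconn : IsConnected D)
    (hDbdd : Bornology.IsBounded D) (hDconv : Convex ℝ D)
    (hDstrict : ∀ x ∈ frontier D, ∀ y ∈ frontier D, x ≠ y →
      ¬ segment ℝ x y ⊆ frontier D)
    -- `Q = [0,1] × D̄` and `U = (0,1) × D`
    (Q : Set (Fin (n+1) → ℝ))
    (hQ : Q = {y : Fin (n+1) → ℝ | y 0 ∈ Set.Icc (0:ℝ) 1 ∧ Fin.tail y ∈ closure D})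
    (U : Set (Fin (n+1) → ℝ))
    (hU : U = {y : Fin (n+1) → ℝ | y 0 ∈ Set.Ioo (0:ℝ) 1 ∧ Fin.tail y ∈ D})
    -- boundary data
    (g : (Fin (n+1) → ℝ) → ℝ)
    (hgC2 : ContDiffOn ℝ 2 g (frontier Q))
    (hg0 : IsTypeF (Fc n (c - π / 2)) D (fun x => ((g (Fin.cons 0 x) : ℝ) : EReal)))
    (hg1 : IsTypeF (Fc n (c - π / 2)) D (fun x => ((g (Fin.cons 1 x) : ℝ) : EReal)))
    -- the weak solution
    (u : (Fin (n+1) → ℝ) → ℝ)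
    (hucont : ContinuousOn u Q)
    (husub : IsTypeF (calF n c) U (fun y => ((u y : ℝ) : EReal)))
    (husup : IsTypeF (calF n (-c)) U (fun y => ((-(u y) : ℝ) : EReal)))
    (hbdry : ∀ y ∈ frontier Q, u y = g y)
    -- the family of envelopes `h_τ`
    (h : ℝ → (Fin n → ℝ) → EReal)
    (hh : h = fun τ x => ⨆ w ∈ {w : (Fin n → ℝ) → EReal |
        IsTypeF (Fc n (c - π / 2)) D w ∧
        (∀ z ∈ D, w z ≤
          ((min (g (Fin.cons 0 z)) (g (Fin.cons 1 z) - τ) : ℝ) : EReal)) ∧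
        (∀ y ∈ frontier D, Filter.limsup w (nhdsWithin y D) ≤
          (((⨅ r : Set.Icc (0:ℝ) 1, (g (Fin.cons (r : ℝ) y) - (r : ℝ) * τ)) : ℝ) :
            EReal))}, w x) :
    ∀ t ∈ Set.Icc (0:ℝ) 1, ∀ x ∈ D,
      ((u (Fin.cons t x) : ℝ) : EReal) =
        ⨆ τ : ℝ, (h τ x + ((τ * t : ℝ) : EReal)) := by
  subst hQ hU hh
  exact fun t ht x hx =>
    dsl_legendre_formula_general hc hc' hDopen hDbdd hDconv hucont husub husup hbdry ht hx
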